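/- arXiv:1812.07629 — 4 statements merged into one kernel-verified Lean document; each statement's English description precedes it below -/
import Mathlib

section
/- Let Ω ⊆ ℝ^d be open and let μ be a nonzero Radon measure on Ω with values in the k×d real matrices such that Div μ is representable by an ℝ^k-valued Radon measure on Ω. Then |μ| ≪ H^κ for every 0 ≤ κ < 1; in particular the Hausdorff dimension of |μ| is at least 1. -/
open MeasureTheory Metric Filter
open scoped ENNReal RealInnerProductSpace Topology

/-!
The theorem holds because a vector measure `F = g ν` whose divergence is a measure has no mass in
slices `{x | xᵢ ∈ N}` with `N ⊆ ℝ` Lebesgue-null, in the sense that its `i`-th component vanishes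
there (`ae_eq_zero_on_slices`). Indeed, for a cutoff `χ` and a smooth `f` with primitive `Φ`, testing
the equation with `χ(x) Φ(xᵢ)` gives
`∫ χ(x) f(xᵢ) dFᵢ = -∫ Φ(xᵢ) ∇χ · dF - ∫ χ(x) Φ(xᵢ) d(div F)`,
and both terms on the right are at most a constant times `sup |Φ| ≤ ‖f‖_{L¹(ℝ)}`. Approximating the
indicator of `N` by smooth functions, simultaneously in Lebesgue measure and in the pushforward of
`ν` under `x ↦ xᵢ`, gives `∫ χ(x) 1_N(xᵢ) dFᵢ = 0` for every `χ`.

A set `s` that is `ℋ^κ`-null for some `κ < 1` is `ℋ¹`-null, so all its coordinate projections are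
Lebesgue-null. Applied to each row of `G`, the above makes every entry of `G` vanish `ν`-almost
everywhere on `s`, which contradicts `‖G‖ = 1` unless `ν s = 0`.

The density `h` is not assumed to be locally integrable. Where a component of `h` fails to be
integrable, the integrals on the right-hand side of the equation take the junk value `0` for many
test functions, and linearity of the left-hand side forces the corresponding row of the divergence
to vanish (`exists_local_bound`). Hence each row of the divergence is of order zero near every point
of `Ω`, which is all that the argument needs.
-/

lemma exists_bounded_primitive {f : ℝ → ℝ} (hf : ContDiff ℝ (⊤ : ℕ∞) f)
    (hfc : HasCompactSupport f) :
    ∃ Φ : ℝ → ℝ, ContDiff ℝ (⊤ : ℕ∞) Φ ∧ (∀ t, HasDerivAt Φ (f t) t) ∧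
      ∀ t, |Φ t| ≤ ∫ s, |f s| := by
  have hd : ∀ t, HasDerivAt (fun t => ∫ s in (0 : ℝ)..t, f s) (f t) t := fun t =>
    intervalIntegral.integral_hasDerivAt_right (hf.continuous.intervalIntegrable _ _)
      hf.continuous.aestronglyMeasurable.stronglyMeasurableAtFilter hf.continuous.continuousAt
  refine ⟨fun t => ∫ s in (0 : ℝ)..t, f s, ?_, hd, fun t => ?_⟩
  · rw [contDiff_infty_iff_deriv]
    refine ⟨fun t => (hd t).differentiableAt, ?_⟩
    rwa [funext fun t => (hd t).deriv]
  · rw [← Real.norm_eq_abs]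
    refine intervalIntegral.norm_integral_le_integral_norm_uIoc.trans ?_
    exact setIntegral_le_integral (hf.continuous.integrable_of_hasCompactSupport hfc).norm
      (ae_of_all _ fun s => norm_nonneg _)

lemma integrable_mul_of_tsupport_subset {E : Type*} [TopologicalSpace E] [MeasurableSpace E]
    [BorelSpace E] {ν : Measure E} {U : Set E} {b g : E → ℝ} (hb : Continuous b)
    (hbc : HasCompactSupport b) (hbU : tsupport b ⊆ U) (hg : IntegrableOn g U ν) :
    Integrable (fun x => b x * g x) ν := by
  obtain ⟨C, hC⟩ := hb.bounded_above_of_compact_support hbc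
  have h1 : IntegrableOn (fun x => b x * g x) U ν :=
    Integrable.bdd_mul hg hb.aestronglyMeasurable (ae_of_all _ hC)
  refine (integrableOn_iff_integrable_of_support_subset fun x hx => ?_).1 h1
  exact hbU (subset_tsupport b fun h0 => hx (by simp [h0]))

lemma continuous_partial {d : ℕ} {φ : EuclideanSpace ℝ (Fin d) → ℝ}
    (hφ : ContDiff ℝ (⊤ : ℕ∞) φ) (v : EuclideanSpace ℝ (Fin d)) :
    Continuous fun x => fderiv ℝ φ x v :=
  (hφ.continuous_fderiv (by simp)).clm_apply continuous_const

lemma tsupport_partial {d : ℕ} (φ : EuclideanSpace ℝ (Fin d) → ℝ)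
    (v : EuclideanSpace ℝ (Fin d)) :
    tsupport (fun x => fderiv ℝ φ x v) ⊆ tsupport φ :=
  tsupport_fderiv_apply_subset ℝ v

/-- If the divergence of `F = g ν` is a distribution of order zero on `U`, with constant `C`, then
the component `Fᵢ` does not charge the part of `U` lying over a Lebesgue-null set `N` of values of
the coordinate `xᵢ`. -/
lemma ae_eq_zero_on_slices {d : ℕ} {U : Set (EuclideanSpace ℝ (Fin d))} (hU : IsOpen U)
    {ν : Measure (EuclideanSpace ℝ (Fin d))} (hνU : ν U < ⊤)
    {g : Fin d → EuclideanSpace ℝ (Fin d) → ℝ} (hg : ∀ i, IntegrableOn (g i) U ν)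
    (hg1 : ∀ i, ∀ᵐ x ∂ν, |g i x| ≤ 1) {C : ℝ}
    (hC : ∀ φ : EuclideanSpace ℝ (Fin d) → ℝ, ContDiff ℝ (⊤ : ℕ∞) φ → HasCompactSupport φ →
      tsupport φ ⊆ U → ∀ M : ℝ, (∀ x, |φ x| ≤ M) →
        |∑ i, ∫ x, fderiv ℝ φ x (EuclideanSpace.single i 1) * g i x ∂ν| ≤ C * M)
    (i : Fin d) {N : Set ℝ} (hN : MeasurableSet N) (hN0 : volume N = 0) :
    ∀ᵐ x ∂ν, x ∈ U → x i ∈ N → g i x = 0 := by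
  have hpm : Measurable fun x : EuclideanSpace ℝ (Fin d) => x i := by fun_prop
  have hps : ContDiff ℝ (⊤ : ℕ∞) fun x : EuclideanSpace ℝ (Fin d) => x i := by fun_prop
  set w : ℝ → ℝ := N.indicator 1 with hw
  have hwm : Measurable w := measurable_one.indicator hN
  have hw1 : ∀ t, |w t| ≤ 1 := fun t => by
    by_cases ht : t ∈ N <;> simp [hw, ht]
  have hwg : IntegrableOn (fun x => w (x i) * g i x) U ν :=
    Integrable.bdd_mul (hg i) (hwm.comp hpm).aestronglyMeasurable (ae_of_all _ fun x => hw1 _)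
  suffices H : ∀ᵐ x ∂ν, x ∈ U → w (x i) * g i x = 0 by
    filter_upwards [H] with x hx hxU hxN
    simpa [hw, hxN] using hx hxU
  refine hU.ae_eq_zero_of_integral_contDiff_smul_eq_zero hwg.locallyIntegrableOn
    fun χ hχ hχc hχU => ?_
  obtain ⟨M, hM⟩ := hχ.continuous.bounded_above_of_compact_support hχc
  have hM0 : 0 ≤ M := (norm_nonneg _).trans (hM 0)
  -- the test function `χ(x) Φ(xᵢ)` with `Φ' = f`
  have key : ∃ C' : ℝ, ∀ f : ℝ → ℝ, ContDiff ℝ (⊤ : ℕ∞) f → HasCompactSupport f →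
      |∫ x, χ x * (f (x i) * g i x) ∂ν| ≤ C' * ∫ s, |f s| := by
    refine ⟨C * M + ∑ l, ∫ x in U, |fderiv ℝ χ x (EuclideanSpace.single l 1)| ∂ν,
      fun f hf hfc => ?_⟩
    obtain ⟨Φ, hΦ, hΦd, hΦb⟩ := exists_bounded_primitive hf hfc
    set L := ∫ s, |f s| with hL
    have hL0 : 0 ≤ L := integral_nonneg fun s => abs_nonneg _
    have hΦs : ContDiff ℝ (⊤ : ℕ∞) fun x : EuclideanSpace ℝ (Fin d) => Φ (x i) := hΦ.comp hps
    have hB := hC (fun x => χ x * Φ (x i)) (hχ.mul hΦs) hχc.mul_right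
      ((tsupport_mul_subset_left).trans hχU) (M * L) (fun x => by
        rw [abs_mul]; exact mul_le_mul (hM x) (hΦb _) (abs_nonneg _) hM0)
    have hder : ∀ l x, fderiv ℝ (fun x : EuclideanSpace ℝ (Fin d) => χ x * Φ (x i)) x
        (EuclideanSpace.single l 1) = (if l = i then χ x * f (x i) else 0)
          + Φ (x i) * fderiv ℝ χ x (EuclideanSpace.single l 1) := by
      intro l x
      have hp : HasFDerivAt (fun x : EuclideanSpace ℝ (Fin d) => x i)
          (EuclideanSpace.proj i : EuclideanSpace ℝ (Fin d) →L[ℝ] ℝ) x :=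
        (EuclideanSpace.proj i : EuclideanSpace ℝ (Fin d) →L[ℝ] ℝ).hasFDerivAt
      have h1 := ((hχ.differentiable (by simp)) x).hasFDerivAt.mul
        ((hΦd (x i)).comp_hasFDerivAt x hp)
      have h2 : fderiv ℝ (fun x : EuclideanSpace ℝ (Fin d) => χ x * Φ (x i)) x = _ := h1.fderiv
      rw [h2]
      rcases eq_or_ne l i with rfl | hli
      · simp
      · simp [hli, hli.symm]
    have hI1 : Integrable (fun x => (χ x * f (x i)) * g i x) ν :=
      integrable_mul_of_tsupport_subset (hχ.continuous.mul (hf.continuous.comp hps.continuous))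
        hχc.mul_right ((tsupport_mul_subset_left).trans hχU) (hg i)
    have hDc : ∀ l, HasCompactSupport fun x => fderiv ℝ χ x (EuclideanSpace.single l 1) :=
      fun l => hχc.mono' ((subset_tsupport _).trans (tsupport_partial χ _))
    have hI2 : ∀ l, Integrable
        (fun x => (fderiv ℝ χ x (EuclideanSpace.single l 1) * Φ (x i)) * g l x) ν := fun l =>
      integrable_mul_of_tsupport_subset ((continuous_partial hχ _).mul hΦs.continuous)
        (hDc l).mul_right
        ((tsupport_mul_subset_left).trans ((tsupport_partial χ _).trans hχU)) (hg l)
    have hsum : ∑ l, ∫ x, fderiv ℝ (fun x : EuclideanSpace ℝ (Fin d) => χ x * Φ (x i)) x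
          (EuclideanSpace.single l 1) * g l x ∂ν
        = ∫ x, χ x * (f (x i) * g i x) ∂ν
          + ∑ l, ∫ x, (fderiv ℝ χ x (EuclideanSpace.single l 1) * Φ (x i)) * g l x ∂ν := by
      have : ∀ l, ∫ x, fderiv ℝ (fun x : EuclideanSpace ℝ (Fin d) => χ x * Φ (x i)) x
          (EuclideanSpace.single l 1) * g l x ∂ν
          = (if l = i then ∫ x, χ x * (f (x i) * g i x) ∂ν else 0)
            + ∫ x, (fderiv ℝ χ x (EuclideanSpace.single l 1) * Φ (x i)) * g l x ∂ν := by
        intro l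
        rcases eq_or_ne l i with rfl | hli
        · rw [if_pos rfl]
          simp_rw [← mul_assoc (χ _)]
          rw [← integral_add hI1 (hI2 l)]
          refine integral_congr_ae (ae_of_all _ fun x => ?_)
          simp only [hder, if_pos]; ring
        · rw [if_neg hli, zero_add]
          refine integral_congr_ae (ae_of_all _ fun x => ?_)
          simp only [hder, if_neg hli]; ring
      rw [Finset.sum_congr rfl fun l _ => this l, Finset.sum_add_distrib]
      simp
    have hrest : ∀ l, |∫ x, (fderiv ℝ χ x (EuclideanSpace.single l 1) * Φ (x i)) * g l x ∂ν|
        ≤ (∫ x in U, |fderiv ℝ χ x (EuclideanSpace.single l 1)| ∂ν) * L := by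
      intro l
      have hz : ∀ x, x ∉ U →
          (fderiv ℝ χ x (EuclideanSpace.single l 1) * Φ (x i)) * g l x = 0 := by
        intro x hx
        have : fderiv ℝ χ x (EuclideanSpace.single l 1) = 0 :=
          image_eq_zero_of_notMem_tsupport (f := fun x => fderiv ℝ χ x (EuclideanSpace.single l 1))
            fun h => hx (hχU (tsupport_partial χ _ h))
        simp [this]
      rw [← setIntegral_eq_integral_of_forall_compl_eq_zero hz, ← integral_mul_const]
      have : IsFiniteMeasure (ν.restrict U) := ⟨by simpa using hνU⟩
      have hDi : IntegrableOn (fun x => fderiv ℝ χ x (EuclideanSpace.single l 1)) U ν :=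
        (continuous_partial hχ _).integrable_of_hasCompactSupport (hDc l)
      rw [← Real.norm_eq_abs]
      refine norm_integral_le_of_norm_le (hDi.abs.mul_const _) ?_
      filter_upwards [ae_restrict_of_ae (hg1 l)] with x hx
      rw [norm_mul, norm_mul, Real.norm_eq_abs, Real.norm_eq_abs, Real.norm_eq_abs]
      calc _ ≤ |fderiv ℝ χ x (EuclideanSpace.single l 1)| * L * 1 := by
            gcongr; exact hΦb _
        _ = _ := mul_one _
    rw [hsum] at hB
    have h3 : |∑ l, ∫ x, (fderiv ℝ χ x (EuclideanSpace.single l 1) * Φ (x i)) * g l x ∂ν|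
        ≤ (∑ l, ∫ x in U, |fderiv ℝ χ x (EuclideanSpace.single l 1)| ∂ν) * L := by
      rw [Finset.sum_mul]
      exact (Finset.abs_sum_le_sum_abs _ _).trans (Finset.sum_le_sum fun l _ => hrest l)
    rw [abs_le] at hB h3 ⊢
    constructor <;> nlinarith [hB.1, hB.2, h3.1, h3.2]
  obtain ⟨C', hC'⟩ := key
  have : IsFiniteMeasure (ν.restrict U) := ⟨by simpa using hνU⟩
  set m : Measure ℝ := (ν.restrict U).map (fun x => x i) with hm
  have : IsFiniteMeasure m := by rw [hm]; infer_instance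
  have hfin : IsFiniteMeasureOnCompacts (m + volume) :=
    ⟨fun K hK => by simp [hK.measure_lt_top]⟩
  -- `m + volume` controls both the error in `∫ χ g` and the Lebesgue norm of `f`
  have hw0 : w =ᵐ[volume] 0 := by
    rw [hw]; exact indicator_meas_zero hN0
  have hwL : MemLp w 1 (m + volume) := by
    rw [memLp_one_iff_integrable, integrable_add_measure]
    refine ⟨Integrable.of_bound hwm.aestronglyMeasurable 1 (ae_of_all _ hw1), ?_⟩
    exact (integrable_zero ℝ ℝ volume).congr hw0.symm
  have main : ∀ ε : ℝ, 0 < ε → |∫ x, χ x * (w (x i) * g i x) ∂ν| ≤ (|C'| + M) * ε := by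
    intro ε hε
    obtain ⟨f, hfc, hf, hfε⟩ := hwL.exist_eLpNorm_sub_le (by simp) le_rfl hε
    have hfL : Integrable f (m + volume) := hf.continuous.integrable_of_hasCompactSupport hfc
    have hdI : Integrable (w - f) (m + volume) := (memLp_one_iff_integrable.1 hwL).sub hfL
    have hdε : ∫ t, |(w - f) t| ∂(m + volume) ≤ ε := by
      have : ∫ t, ‖(w - f) t‖ ∂(m + volume) ≤ ε := by
        rw [integral_norm_eq_lintegral_enorm hdI.1, ← eLpNorm_one_eq_lintegral_enorm]
        exact ENNReal.toReal_le_of_le_ofReal hε.le hfε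
      exact this
    obtain ⟨hd1, hd2⟩ := integrable_add_measure.1 hdI
    rw [integral_add_measure hd1.abs hd2.abs] at hdε
    have hv : ∫ t, |(w - f) t| = ∫ t, |f t| := by
      refine integral_congr_ae ?_
      filter_upwards [hw0] with t ht
      simp [ht]
    have hmm : ∫ t, |(w - f) t| ∂m = ∫ x in U, |(w - f) (x i)| ∂ν :=
      integral_map hpm.aemeasurable (hd1.abs.1)
    have hd1' : IntegrableOn (fun x => |(w - f) (x i)|) U ν :=
      Integrable.comp_measurable (f := fun x : EuclideanSpace ℝ (Fin d) => x i) hd1.abs hpm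
    have ha : 0 ≤ ∫ t, |f t| := integral_nonneg fun s => abs_nonneg _
    have hb : 0 ≤ ∫ x in U, |(w - f) (x i)| ∂ν := integral_nonneg fun s => abs_nonneg _
    rw [hv, hmm] at hdε
    have hI1 : Integrable (fun x => χ x * (f (x i) * g i x)) ν := by
      simp_rw [← mul_assoc]
      exact integrable_mul_of_tsupport_subset
        (hχ.continuous.mul (hf.continuous.comp hps.continuous))
        hχc.mul_right ((tsupport_mul_subset_left).trans hχU) (hg i)
    have hI2 : Integrable (fun x => χ x * (w (x i) * g i x)) ν :=
      integrable_mul_of_tsupport_subset hχ.continuous hχc hχU hwg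
    have hsplit : ∫ x, χ x * (w (x i) * g i x) ∂ν = ∫ x, χ x * (f (x i) * g i x) ∂ν
        + ∫ x, χ x * ((w - f) (x i) * g i x) ∂ν := by
      rw [← sub_eq_iff_eq_add', ← integral_sub hI2 hI1]
      refine integral_congr_ae (ae_of_all _ fun x => ?_)
      simp only [Pi.sub_apply]; ring
    have herr : |∫ x, χ x * ((w - f) (x i) * g i x) ∂ν|
        ≤ M * ∫ x in U, |(w - f) (x i)| ∂ν := by
      have hz : ∀ x, x ∉ U → χ x * ((w - f) (x i) * g i x) = 0 := by
        intro x hx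
        rw [image_eq_zero_of_notMem_tsupport fun h => hx (hχU h), zero_mul]
      rw [← setIntegral_eq_integral_of_forall_compl_eq_zero hz, ← integral_const_mul]
      rw [← Real.norm_eq_abs]
      refine norm_integral_le_of_norm_le (hd1'.const_mul _) ?_
      filter_upwards [ae_restrict_of_ae (hg1 i)] with x hx
      rw [norm_mul, norm_mul, Real.norm_eq_abs ((w - f) (x i)), Real.norm_eq_abs (g i x)]
      calc _ ≤ M * (|(w - f) (x i)| * 1) := by gcongr; exact hM x
        _ = _ := by rw [mul_one]
    rw [hsplit]
    calc _ ≤ C' * (∫ s, |f s|) + M * ∫ x in U, |(w - f) (x i)| ∂ν :=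
          (abs_add_le _ _).trans (add_le_add (hC' f hf hfc) herr)
      _ ≤ |C'| * ε + M * ε := by
          gcongr
          · exact le_abs_self _
          · linarith
          · linarith
      _ = _ := by ring
  have hpos : 0 < |C'| + M + 1 := by positivity
  by_contra hne
  have hne' : 0 < |∫ x, χ x * (w (x i) * g i x) ∂ν| := abs_pos.2 hne
  set a := |∫ x, χ x * (w (x i) * g i x) ∂ν|
  have := main (a / (|C'| + M + 1)) (by positivity)
  rw [← mul_div_assoc, le_div_iff₀ hpos] at this
  nlinarith

/-- If the pairing of `div (g ν)` with test functions on `V` is given by the Bochner integral against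
`h ρ`, then `div (g ν)` is of order zero on `U`, whether or not `h` is integrable there. In the
non-integrable case it even vanishes on `U`. The cutoff `η` equals `1` on `U`. -/
lemma exists_local_bound {d : ℕ} {U V : Set (EuclideanSpace ℝ (Fin d))}
    {ν : Measure (EuclideanSpace ℝ (Fin d))}
    {g : Fin d → EuclideanSpace ℝ (Fin d) → ℝ} (hg : ∀ i, IntegrableOn (g i) V ν)
    {ρ : Measure (EuclideanSpace ℝ (Fin d))} {h : EuclideanSpace ℝ (Fin d) → ℝ}
    (hdiv : ∀ φ : EuclideanSpace ℝ (Fin d) → ℝ, ContDiff ℝ (⊤ : ℕ∞) φ → HasCompactSupport φ →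
      tsupport φ ⊆ V →
        ∑ i, ∫ x, fderiv ℝ φ x (EuclideanSpace.single i 1) * g i x ∂ν = -∫ x, φ x * h x ∂ρ)
    (hhm : AEStronglyMeasurable h ρ) (hU : MeasurableSet U) (hUV : U ⊆ V)
    {η : EuclideanSpace ℝ (Fin d) → ℝ} (hη : ContDiff ℝ (⊤ : ℕ∞) η) (hηc : HasCompactSupport η)
    (hηV : tsupport η ⊆ V) (hη1 : ∀ x ∈ U, η x = 1) :
    ∃ C : ℝ, ∀ φ : EuclideanSpace ℝ (Fin d) → ℝ, ContDiff ℝ (⊤ : ℕ∞) φ → HasCompactSupport φ →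
      tsupport φ ⊆ U → ∀ M : ℝ, (∀ x, |φ x| ≤ M) →
        |∑ i, ∫ x, fderiv ℝ φ x (EuclideanSpace.single i 1) * g i x ∂ν| ≤ C * M := by
  by_cases hI : IntegrableOn h U ρ
  · refine ⟨∫ x in U, |h x| ∂ρ, fun φ hφ hφc hφU M hM => ?_⟩
    rw [hdiv φ hφ hφc (hφU.trans hUV), abs_neg]
    have hz : ∀ x, x ∉ U → φ x * h x = 0 := by
      intro x hx
      rw [image_eq_zero_of_notMem_tsupport fun h => hx (hφU h), zero_mul]
    rw [← setIntegral_eq_integral_of_forall_compl_eq_zero hz, ← integral_mul_const]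
    rw [← Real.norm_eq_abs]
    refine norm_integral_le_of_norm_le (hI.abs.mul_const _) (ae_of_all _ fun x => ?_)
    rw [norm_mul, mul_comm, Real.norm_eq_abs, Real.norm_eq_abs]
    gcongr
    exact hM x
  · refine ⟨0, fun φ hφ hφc hφU M hM => ?_⟩
    have hM0 : 0 ≤ M := (abs_nonneg _).trans (hM 0)
    -- a test function that is at least `1` on `U` has a non-integrable pairing with `h`,
    -- for which the Bochner integral is `0`
    have hzero : ∀ ψ : EuclideanSpace ℝ (Fin d) → ℝ, Continuous ψ → (∀ x ∈ U, 1 ≤ ψ x) →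
        ∫ x, ψ x * h x ∂ρ = 0 := by
      intro ψ hψ hψ1
      refine integral_undef fun hint => hI ?_
      refine Integrable.mono (hint.integrableOn (s := U)) hhm.restrict ?_
      refine (ae_restrict_iff' hU).2 (ae_of_all _ fun x hx => ?_)
      rw [norm_mul]
      refine le_mul_of_one_le_left (norm_nonneg _) ?_
      exact (hψ1 x hx).trans (le_abs_self _)
    have hmη : ContDiff ℝ (⊤ : ℕ∞) fun x => (M + 1) * η x := contDiff_const.mul hη
    have hmηc : HasCompactSupport fun x => (M + 1) * η x := hηc.mul_left
    have hmηV : tsupport (fun x => (M + 1) * η x) ⊆ V := (tsupport_mul_subset_right).trans hηV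
    have e1 := hdiv (fun x => (M + 1) * η x) hmη hmηc hmηV
    have e2 := hdiv (fun x => φ x + (M + 1) * η x) (hφ.add hmη) (hφc.add hmηc)
      ((tsupport_add _ _).trans (Set.union_subset (hφU.trans hUV) hmηV))
    rw [hzero _ hmη.continuous fun x hx => by rw [hη1 x hx]; linarith] at e1
    rw [hzero _ (hφ.add hmη).continuous fun x hx => by
      rw [hη1 x hx]; linarith [(abs_le.1 (hM x)).1]] at e2
    have hint : ∀ ψ : EuclideanSpace ℝ (Fin d) → ℝ, ContDiff ℝ (⊤ : ℕ∞) ψ →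
        HasCompactSupport ψ → tsupport ψ ⊆ V → ∀ i,
        Integrable (fun x => fderiv ℝ ψ x (EuclideanSpace.single i 1) * g i x) ν := by
      intro ψ hψ hψc hψV i
      exact integrable_mul_of_tsupport_subset (continuous_partial hψ _)
        (hψc.mono' ((subset_tsupport _).trans (tsupport_partial ψ _)))
        ((tsupport_partial ψ _).trans hψV) (hg i)
    have e3 : ∀ i, ∫ x, fderiv ℝ (fun x => φ x + (M + 1) * η x) x
          (EuclideanSpace.single i 1) * g i x ∂ν
        = ∫ x, fderiv ℝ φ x (EuclideanSpace.single i 1) * g i x ∂ν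
          + ∫ x, fderiv ℝ (fun x => (M + 1) * η x) x (EuclideanSpace.single i 1) * g i x ∂ν := by
      intro i
      rw [← integral_add (hint φ hφ hφc (hφU.trans hUV) i) (hint _ hmη hmηc hmηV i)]
      refine integral_congr_ae (ae_of_all _ fun x => ?_)
      have : fderiv ℝ (fun x => φ x + (M + 1) * η x) x = _ :=
        fderiv_add (hφ.differentiable (by simp) x) (hmη.differentiable (by simp) x)
      simp only [this, add_apply, add_mul (fderiv ℝ φ x _)]
    rw [Finset.sum_congr rfl fun i _ => e3 i, Finset.sum_add_distrib, e1] at e2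
    have : ∑ i, ∫ x, fderiv ℝ φ x (EuclideanSpace.single i 1) * g i x ∂ν = 0 := by linarith
    simp [this]


/-- **Fields whose divergence is a measure have Hausdorff dimension at least 1.**
Let `μ = G ν` (polar decomposition, `ν = |μ|`) be a nonzero `k×d`-matrix-valued Radon measure on
the open set `Ω ⊆ ℝ^d` (the matrix space is identified with `EuclideanSpace ℝ (Fin k × Fin d)`
with the Frobenius norm), and suppose `Div μ` is representable by an `ℝ^k`-valued Radon measure
`τ = h ρ` on `Ω`. Then `|μ| ≪ ℋ^κ` for every `0 ≤ κ < 1`; in particular `dim_ℋ |μ| ≥ 1`. -/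
theorem divergence_measure_dimension_at_least_one
    {d k : ℕ} (Ω : Set (EuclideanSpace ℝ (Fin d))) (hΩ : IsOpen Ω)
    -- `ν = |μ|` is a nonzero Radon measure on `Ω`, `G` the polar of `μ`:
    (ν : Measure (EuclideanSpace ℝ (Fin d)))
    (hνloc : ∀ K : Set (EuclideanSpace ℝ (Fin d)), K ⊆ Ω → IsCompact K → ν K < ⊤)
    (hνsupp : ν Ωᶜ = 0) (hν0 : ν ≠ 0)
    (G : EuclideanSpace ℝ (Fin d) → EuclideanSpace ℝ (Fin k × Fin d))
    (hGm : AEStronglyMeasurable G ν) (hGnorm : ∀ᵐ x ∂ν, ‖G x‖ = 1)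
    -- `τ = h ρ` is an `ℝ^k`-valued Radon measure on `Ω`:
    (ρ : Measure (EuclideanSpace ℝ (Fin d)))
    (hρloc : ∀ K : Set (EuclideanSpace ℝ (Fin d)), K ⊆ Ω → IsCompact K → ρ K < ⊤)
    (h : EuclideanSpace ℝ (Fin d) → EuclideanSpace ℝ (Fin k)) (hh : AEStronglyMeasurable h ρ)
    -- `Div μ = τ` distributionally: for every smooth compactly supported `ψ : Ω → ℝ^k`,
    -- `∑_{i,j} ∫ ∂ᵢψⱼ dμ_{ji} = −∫ ⟪ψ, h⟫ dρ`:
    (hdiv : ∀ ψ : EuclideanSpace ℝ (Fin d) → EuclideanSpace ℝ (Fin k),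
      ContDiff ℝ (⊤ : ℕ∞) ψ → HasCompactSupport ψ → tsupport ψ ⊆ Ω →
      (∑ i : Fin d, ∑ j : Fin k,
          ∫ x, fderiv ℝ ψ x (EuclideanSpace.single i 1) j * G x (j, i) ∂ν)
        = -∫ x, ⟪ψ x, h x⟫ ∂ρ) :
    ∀ κ : ℝ, 0 ≤ κ → κ < 1 → ν ≪ μH[κ] := by
  intro κ _ hκ s hs
  have hs1 : μH[1] s = 0 :=
    le_antisymm ((Measure.hausdorffMeasure_mono hκ.le s).trans hs.le) zero_le
  -- the coordinate projections of `s` are Lebesgue-null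
  have hproj : ∀ i : Fin d, volume ((fun x : EuclideanSpace ℝ (Fin d) => x i) '' s) = 0 := by
    intro i
    have hlip : LipschitzWith 1 fun x : EuclideanSpace ℝ (Fin d) => x i :=
      LipschitzWith.of_dist_le_mul fun x y => by
        simpa [dist_eq_norm] using PiLp.norm_apply_le (x - y) i
    have := hlip.hausdorffMeasure_image_le zero_le_one s
    rw [hs1, mul_zero, hausdorffMeasure_real] at this
    exact le_antisymm this zero_le
  have hloc : ν (s ∩ Ω) = 0 := by
    refine measure_null_of_locally_null _ fun x₀ hx₀ => ?_
    obtain ⟨R, hR, hRΩ⟩ := Metric.nhds_basis_closedBall.mem_iff.1 (hΩ.mem_nhds hx₀.2)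
    have hVΩ : ball x₀ R ⊆ Ω := ball_subset_closedBall.trans hRΩ
    have hUV : ball x₀ (R / 2) ⊆ ball x₀ R := ball_subset_ball (by linarith)
    have hνV : ν (ball x₀ R) < ⊤ :=
      (measure_mono ball_subset_closedBall).trans_lt (hνloc _ hRΩ (isCompact_closedBall _ _))
    have hG1 : ∀ p, ∀ᵐ x ∂ν, |G x p| ≤ 1 := fun p => by
      filter_upwards [hGnorm] with x hx
      rw [← hx]
      exact PiLp.norm_apply_le (G x) p
    have hGi : ∀ p, IntegrableOn (fun x => G x p) (ball x₀ R) ν := fun p =>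
      IntegrableOn.of_bound hνV
        (((EuclideanSpace.proj p : EuclideanSpace ℝ (Fin k × Fin d) →L[ℝ] ℝ).continuous
          |>.comp_aestronglyMeasurable hGm).restrict) 1 (ae_restrict_of_ae (hG1 p))
    let η : ContDiffBump x₀ := ⟨R / 2, 3 * R / 4, by linarith, by linarith⟩
    have hzero : ∀ j i, ∀ᵐ x ∂ν, x ∈ ball x₀ (R / 2) → x i ∈
        toMeasurable volume ((fun x : EuclideanSpace ℝ (Fin d) => x i) '' s) → G x (j, i) = 0 := by
      intro j
      -- the `j`-th row of the equation, from test fields `φ e_j`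
      have hrow : ∀ φ : EuclideanSpace ℝ (Fin d) → ℝ, ContDiff ℝ (⊤ : ℕ∞) φ →
          HasCompactSupport φ → tsupport φ ⊆ ball x₀ R →
          ∑ i, ∫ x, fderiv ℝ φ x (EuclideanSpace.single i 1) * G x (j, i) ∂ν
            = -∫ x, φ x * h x j ∂ρ := by
        intro φ hφ hφc hφV
        have hsub : tsupport (fun x => φ x • EuclideanSpace.single j (1 : ℝ)) ⊆ tsupport φ :=
          tsupport_smul_subset_left _ _
        have := hdiv (fun x => φ x • EuclideanSpace.single j (1 : ℝ)) (hφ.smul contDiff_const)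
          hφc.smul_right (hsub.trans (hφV.trans hVΩ))
        have hder : ∀ x v, fderiv ℝ (fun x => φ x • EuclideanSpace.single j (1 : ℝ)) x v
            = fderiv ℝ φ x v • EuclideanSpace.single j (1 : ℝ) := by
          intro x v
          rw [fderiv_smul_const (hφ.differentiable (by simp) x)]
          simp
        simp only [hder] at this
        convert this using 1
        · refine Finset.sum_congr rfl fun i _ => ?_
          rw [Finset.sum_eq_single j]
          · simp
          · intro j' _ hj'
            simp [hj']
          · simp
        · simp [inner_smul_left, EuclideanSpace.inner_single_left]
      obtain ⟨C, hC⟩ := exists_local_bound (U := ball x₀ (R / 2)) (fun i => hGi (j, i)) hrow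
        ((EuclideanSpace.proj j : EuclideanSpace ℝ (Fin k) →L[ℝ] ℝ).continuous
          |>.comp_aestronglyMeasurable hh)
        measurableSet_ball hUV η.contDiff η.hasCompactSupport
        (by rw [η.tsupport_eq]; exact closedBall_subset_ball (by simp only [η]; linarith))
        (fun x hx => η.one_of_mem_closedBall (ball_subset_closedBall hx))
      exact fun i => ae_eq_zero_on_slices isOpen_ball ((measure_mono hUV).trans_lt hνV)
        (fun i => (hGi (j, i)).mono_set hUV) (fun i => hG1 (j, i)) hC i
        (measurableSet_toMeasurable _ _) (by rw [measure_toMeasurable, hproj])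
    refine ⟨s ∩ Ω ∩ ball x₀ (R / 2), inter_mem self_mem_nhdsWithin
      (mem_nhdsWithin_of_mem_nhds (ball_mem_nhds _ (by linarith))), ?_⟩
    have hall : ∀ᵐ x ∂ν, x ∉ s ∩ Ω ∩ ball x₀ (R / 2) := by
      filter_upwards [hGnorm, ae_all_iff.2 fun j => ae_all_iff.2 (hzero j)] with x hx1 hx2 hx3
      have : G x = 0 := by
        ext ⟨j, i⟩
        exact hx2 j i hx3.2 (subset_toMeasurable _ _ ⟨x, hx3.1.1, rfl⟩)
      simp [this] at hx1
    exact measure_eq_zero_iff_ae_notMem.2 hall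
  refine measure_mono_null (fun x hx => ?_) (measure_union_null hloc hνsupp)
  by_cases hxΩ : x ∈ Ω
  · exact Or.inl ⟨hx, hxΩ⟩
  · exact Or.inr hxΩ
end

section
/- Let Ω ⊆ ℝ^d be open and let u ∈ L¹_loc(Ω; ℝ^m) be a function of locally bounded variation, i.e., there is a Radon measure Du on Ω with values in the m×d real matrices such that ∫_Ω u_k(x) ∂_i φ(x) dx = −∫_Ω φ d(Du)_{ki} for every smooth compactly supported φ : Ω → ℝ and all 1 ≤ k ≤ m, 1 ≤ i ≤ d. Then |Du| ≪ H^κ for every 0 ≤ κ < d−1; in particular the Hausdorff dimension of |Du| is at least d−1. -/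
open MeasureTheory Metric Filter
open scoped ENNReal RealInnerProductSpace Topology

/-!
The measure `|Du|` even vanishes on sets of zero `(d - 1)`-dimensional Hausdorff measure, and it is
enough to treat one component `v = uₖ` and one partial derivative `∂ᵢv = g ν` at a time. By inner
regularity, a null set of positive `ν`-measure contains a compact set `K` of positive `ν`-measure;
once `∫_Q g dν = 0` is known for all compact `Q ⊆ K`, every entry of `G` vanishes `ν`-a.e. on `K`,
contradicting `‖G‖ = 1`.

To see that `∫_K g dν = 0` for compact `K` with `ℋ^{d-1}(K) = 0`, cover `K` by finitely many balls
with `∑ rₙ^{d-1}` small. This gives smooth cutoffs `φⱼ`, equal to `1` on `K` and supported in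
shrinking neighbourhoods of `K`, with `‖∂ᵢφⱼ‖_{L¹} → 0` (`exists_cutoff`). Since
`∫ φⱼ g dν = -∫ v ∂ᵢφⱼ dx` and the left side tends to `∫_K g dν`, the claim is that the right side
tends to zero. For bounded `v` this is immediate.

For unbounded `v`, split `v = ∑ₖ layer k v` into bounded layers between successive smooth
truncations. The variations of the layers sum to at most the variation of `v`
(`exists_layer_variation`): for a mollification of `v` this is the chain rule, because the
derivatives of the layer functions are nonnegative and sum to at most `1`, and Fatou's lemma lets
the mollification parameter tend to zero. So the pairings of the layers with `∂ᵢφⱼ` are dominated,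
uniformly in `j`, by a summable sequence, while each of them tends to zero as `j → ∞`
(`tendsto_integral_cutoff`). Multiplication by a smooth cutoff `χ` reduces the case of an open set
`Ω` to that of the whole space (`derivDominated_cutoff_mul`).
-/

namespace BVDim

/-! ### Smooth truncations of the real line -/

/-- The smooth truncation of `s` at height of order `n`: bounded by `n * (π / 2)`, with derivative
`n² / (n² + s²)`. For `n = 0` the convention `s / 0 = 0` makes it vanish identically. -/
noncomputable def trunc (n : ℕ) (s : ℝ) : ℝ := n * Real.arctan (s / n)

/-- The derivative of `trunc n`; it increases with `n`. -/
noncomputable def truncDeriv (n : ℕ) (s : ℝ) : ℝ := (n : ℝ) ^ 2 / ((n : ℝ) ^ 2 + s ^ 2)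

lemma trunc_zero (s : ℝ) : trunc 0 s = 0 := by simp [trunc]

lemma truncDeriv_zero (s : ℝ) : truncDeriv 0 s = 0 := by simp [truncDeriv]

lemma hasDerivAt_trunc (n : ℕ) (s : ℝ) : HasDerivAt (trunc n) (truncDeriv n s) s := by
  rcases Nat.eq_zero_or_pos n with rfl | hn
  · rw [truncDeriv_zero]
    exact (hasDerivAt_const s (0 : ℝ)).congr_of_eventuallyEq (.of_forall trunc_zero)
  · have hn' : (n : ℝ) ≠ 0 := by positivity
    have h := (((hasDerivAt_id s).div_const (n : ℝ)).arctan).const_mul (n : ℝ)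
    refine h.congr_deriv ?_
    simp only [truncDeriv, id]
    have : (n : ℝ) ^ 2 + s ^ 2 ≠ 0 := by positivity
    field_simp

lemma truncDeriv_le_one (n : ℕ) (s : ℝ) : truncDeriv n s ≤ 1 :=
  div_le_one_of_le₀ (by nlinarith [sq_nonneg s]) (by positivity)

lemma truncDeriv_nonneg (n : ℕ) (s : ℝ) : 0 ≤ truncDeriv n s := by
  unfold truncDeriv; positivity

lemma truncDeriv_le_succ (n : ℕ) (s : ℝ) : truncDeriv n s ≤ truncDeriv (n + 1) s := by
  rcases Nat.eq_zero_or_pos n with rfl | hn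
  · rw [truncDeriv_zero]; exact truncDeriv_nonneg _ _
  · unfold truncDeriv
    have : (0 : ℝ) < n := by exact_mod_cast hn
    rw [div_le_div_iff₀ (by positivity) (by positivity)]
    push_cast
    nlinarith [mul_nonneg this.le (sq_nonneg s), sq_nonneg s]

lemma continuous_truncDeriv_succ (n : ℕ) : Continuous (truncDeriv (n + 1)) := by
  unfold truncDeriv
  refine continuous_const.div (by fun_prop) fun s => ?_
  positivity

lemma continuous_truncDeriv (n : ℕ) : Continuous (truncDeriv n) := by
  cases n with
  | zero => simpa only [funext truncDeriv_zero] using continuous_const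
  | succ n => exact continuous_truncDeriv_succ n

lemma continuous_trunc (n : ℕ) : Continuous (trunc n) :=
  continuous_iff_continuousAt.2 fun s => (hasDerivAt_trunc n s).continuousAt

lemma abs_trunc_le (n : ℕ) (s : ℝ) : |trunc n s| ≤ n * (Real.pi / 2) := by
  rw [trunc, abs_mul, Nat.abs_cast]
  gcongr
  exact abs_le.2 ⟨(Real.neg_pi_div_two_lt_arctan _).le, (Real.arctan_lt_pi_div_two _).le⟩

lemma abs_trunc_le_abs (n : ℕ) (s : ℝ) : |trunc n s| ≤ |s| := by
  have h := Convex.norm_image_sub_le_of_norm_hasDerivWithin_le (s := Set.univ) (C := 1)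
    (f := trunc n) (f' := truncDeriv n) (x := 0) (y := s)
    (fun x _ => (hasDerivAt_trunc n x).hasDerivWithinAt)
    (fun x _ => by
      rw [Real.norm_of_nonneg (truncDeriv_nonneg n x)]; exact truncDeriv_le_one n x)
    convex_univ trivial trivial
  simpa [trunc] using h

lemma tendsto_trunc (s : ℝ) : Tendsto (fun n => trunc n s) atTop (𝓝 s) := by
  have h : HasDerivAt (fun t : ℝ => Real.arctan (s * t)) s 0 := by
    have := ((hasDerivAt_id (0 : ℝ)).const_mul s).arctan
    simpa using this
  have h2 := h.tendsto_slope_zero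
  have h3 : Tendsto (fun n : ℕ => ((n : ℝ))⁻¹) atTop (𝓝[≠] 0) :=
    tendsto_nhdsWithin_iff.2 ⟨tendsto_inv_atTop_nhds_zero_nat, by
      filter_upwards [eventually_gt_atTop 0] with n hn
      simp [hn.ne']⟩
  refine (h2.comp h3).congr fun n => ?_
  simp [trunc, div_eq_mul_inv]

/-- The layer of values between the truncations at heights `k` and `k + 1`. -/
noncomputable def layer (k : ℕ) (s : ℝ) : ℝ := trunc (k + 1) s - trunc k s

/-- The derivative of `layer k`. These are nonnegative and sum to at most `1`. -/
noncomputable def layerDeriv (k : ℕ) (s : ℝ) : ℝ := truncDeriv (k + 1) s - truncDeriv k s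

lemma hasDerivAt_layer (k : ℕ) (s : ℝ) : HasDerivAt (layer k) (layerDeriv k s) s :=
  (hasDerivAt_trunc (k + 1) s).sub (hasDerivAt_trunc k s)

lemma continuous_layer (k : ℕ) : Continuous (layer k) :=
  (continuous_trunc _).sub (continuous_trunc _)

lemma continuous_layerDeriv (k : ℕ) : Continuous (layerDeriv k) :=
  (continuous_truncDeriv _).sub (continuous_truncDeriv _)

lemma layerDeriv_nonneg (k : ℕ) (s : ℝ) : 0 ≤ layerDeriv k s :=
  sub_nonneg.2 (truncDeriv_le_succ k s)

lemma tsum_enorm_layerDeriv_le (s : ℝ) : ∑' k, ‖layerDeriv k s‖ₑ ≤ 1 := by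
  refine ENNReal.tsum_le_of_sum_range_le fun n => ?_
  have : ∀ k, ‖layerDeriv k s‖ₑ = ENNReal.ofReal (layerDeriv k s) := fun k =>
    Real.enorm_of_nonneg (layerDeriv_nonneg k s)
  simp_rw [this]
  rw [← ENNReal.ofReal_sum_of_nonneg fun k _ => layerDeriv_nonneg k s]
  simp only [layerDeriv]
  rw [Finset.sum_range_sub (fun k => truncDeriv k s), truncDeriv_zero, sub_zero]
  exact ENNReal.ofReal_le_one.2 (truncDeriv_le_one n s)

lemma sum_range_layer (n : ℕ) (s : ℝ) : ∑ k ∈ Finset.range n, layer k s = trunc n s := by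
  simp only [layer]
  rw [Finset.sum_range_sub (fun k => trunc k s), trunc_zero, sub_zero]

/-- A bound for `|layer k|`. -/
noncomputable def layerBound (k : ℕ) : ℝ := ((k + 1 : ℕ) : ℝ) * (Real.pi / 2) + k * (Real.pi / 2)

lemma abs_layer_le (k : ℕ) (s : ℝ) : |layer k s| ≤ layerBound k :=
  (abs_sub _ _).trans (add_le_add (abs_trunc_le _ s) (abs_trunc_le _ s))

/-! ### Mollification and summability of the layers -/

section Mollify

open scoped Convolution

variable {E : Type*} [NormedAddCommGroup E] [InnerProductSpace ℝ E] [FiniteDimensional ℝ E]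
  [MeasurableSpace E] [BorelSpace E]

/-- The distributional derivative of `w` in the direction `e` is dominated by the measure `lam`,
tested against smooth compactly supported functions. -/
def DerivDominated (μ : Measure E) (w : E → ℝ) (e : E) (lam : Measure E) : Prop :=
  ∀ φ : E → ℝ, ContDiff ℝ (⊤ : ℕ∞) φ → HasCompactSupport φ →
    ‖∫ x, w x * fderiv ℝ φ x e ∂μ‖ₑ ≤ ∫⁻ x, ‖φ x‖ₑ ∂lam

variable {μ : Measure E} [μ.IsAddHaarMeasure] {w : E → ℝ} {e : E} {lam : Measure E}

lemma contDiff_mollify (ρ : ContDiffBump (0 : E)) (hw : LocallyIntegrable w μ) :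
    ContDiff ℝ 1 (ρ.normed μ ⋆[ContinuousLinearMap.lsmul ℝ ℝ, μ] w) :=
  ρ.hasCompactSupport_normed.contDiff_convolution_left _ (ρ.contDiff_normed (n := 1)) hw

lemma fderiv_mollify (ρ : ContDiffBump (0 : E)) (hw : LocallyIntegrable w μ) (x : E) :
    fderiv ℝ (ρ.normed μ ⋆[ContinuousLinearMap.lsmul ℝ ℝ, μ] w) x e =
      - ∫ y, w y * fderiv ℝ (fun y => ρ.normed μ (x - y)) y e ∂μ := by
  have hρ : ContDiff ℝ 1 (ρ.normed μ) := ρ.contDiff_normed (n := 1)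
  have hd : ∀ y, fderiv ℝ (fun y => ρ.normed μ (x - y)) y e
      = - fderiv ℝ (ρ.normed μ) (x - y) e := by
    intro y
    have h1 : HasFDerivAt (fun y : E => x - y) (-ContinuousLinearMap.id ℝ E) y :=
      (hasFDerivAt_id y).const_sub x
    have h2 := ((hρ.differentiable one_ne_zero) (x - y)).hasFDerivAt.comp y h1
    have h3 : fderiv ℝ (fun y => ρ.normed μ (x - y)) y = _ := h2.fderiv
    rw [h3]
    simp
  have hex := (ρ.hasCompactSupport_normed (μ := μ)).hasFDerivAt_convolution_left
    (ContinuousLinearMap.lsmul ℝ ℝ) hρ hw x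
  have hce : ConvolutionExistsAt (fderiv ℝ (ρ.normed μ)) w x
      ((ContinuousLinearMap.lsmul ℝ ℝ).precompL E) μ :=
    ((ρ.hasCompactSupport_normed (μ := μ)).fderiv ℝ).convolutionExists_left _
      (hρ.continuous_fderiv one_ne_zero) hw x
  rw [hex.fderiv, convolution, ContinuousLinearMap.integral_apply hce]
  simp only [hd, mul_neg, integral_neg, neg_neg]
  rw [← integral_sub_left_eq_self _ μ x]
  refine integral_congr_ae (.of_forall fun y => ?_)
  simp [ContinuousLinearMap.precompL_apply, mul_comm]

lemma lintegral_enorm_fderiv_mollify_le [IsFiniteMeasure lam] (ρ : ContDiffBump (0 : E))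
    (hw : LocallyIntegrable w μ) (H : DerivDominated μ w e lam) :
    ∫⁻ x, ‖fderiv ℝ (ρ.normed μ ⋆[ContinuousLinearMap.lsmul ℝ ℝ, μ] w) x e‖ₑ ∂μ
      ≤ lam Set.univ := by
  have hρc : Continuous (ρ.normed μ) := ρ.continuous_normed
  calc _ ≤ ∫⁻ x, ∫⁻ y, ‖ρ.normed μ (x - y)‖ₑ ∂lam ∂μ := by
        refine lintegral_mono fun x => ?_
        rw [fderiv_mollify ρ hw x, enorm_neg]
        refine H _ ?_ ?_
        · exact (ρ.contDiff_normed (n := ⊤)).comp (contDiff_const.sub contDiff_id)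
        · exact (ρ.hasCompactSupport_normed (μ := μ)).comp_homeomorph (Homeomorph.subLeft x)
    _ = ∫⁻ y, ∫⁻ x, ‖ρ.normed μ (x - y)‖ₑ ∂μ ∂lam := by
        refine lintegral_lintegral_swap (Continuous.aemeasurable ?_)
        exact (hρc.comp (continuous_fst.sub continuous_snd)).enorm
    _ = ∫⁻ y, 1 ∂lam := by
        refine lintegral_congr fun y => ?_
        rw [lintegral_sub_right_eq_self (fun x => ‖ρ.normed μ x‖ₑ) y]
        have h : ∀ x, ‖ρ.normed μ x‖ₑ = ENNReal.ofReal (ρ.normed μ x) := fun x =>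
          Real.enorm_of_nonneg (ρ.nonneg_normed x)
        simp_rw [h]
        rw [← ofReal_integral_eq_lintegral_ofReal ρ.integrable_normed
          (.of_forall fun x => ρ.nonneg_normed x), ρ.integral_normed, ENNReal.ofReal_one]
    _ = lam Set.univ := by simp

/-- Integration by parts for one layer of a mollification. -/
lemma enorm_integral_layer_le {W : E → ℝ} (hW : ContDiff ℝ 1 W) (k : ℕ) {η : E → ℝ}
    (hη : ContDiff ℝ (⊤ : ℕ∞) η) (hηc : HasCompactSupport η) (hη1 : ∀ x, ‖η x‖ ≤ 1) :
    ‖∫ x, layer k (W x) * fderiv ℝ η x e ∂μ‖ₑ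
      ≤ ∫⁻ x, ‖layerDeriv k (W x)‖ₑ * ‖fderiv ℝ W x e‖ₑ ∂μ := by
  have hηc1 : Continuous (fun x => fderiv ℝ η x e) :=
    (hη.continuous_fderiv (by simp)).clm_apply continuous_const
  have hWc1 : Continuous (fun x => fderiv ℝ W x e) :=
    (hW.continuous_fderiv one_ne_zero).clm_apply continuous_const
  have hd : ∀ x, HasFDerivAt (fun x => layer k (W x)) (layerDeriv k (W x) • fderiv ℝ W x) x :=
    fun x => (hasDerivAt_layer k (W x)).comp_hasFDerivAt x
      ((hW.differentiable one_ne_zero) x).hasFDerivAt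
  have hd' : ∀ x, fderiv ℝ (fun x => layer k (W x)) x e = layerDeriv k (W x) * fderiv ℝ W x e :=
    fun x => by rw [(hd x).fderiv]; simp
  have hl : Continuous (fun x => layer k (W x)) := (continuous_layer k).comp hW.continuous
  have hl' : Continuous (fun x => layerDeriv k (W x)) :=
    (continuous_layerDeriv k).comp hW.continuous
  have hsupp : HasCompactSupport (fun x => fderiv ℝ η x e) := hηc.fderiv_apply ℝ e
  rw [integral_mul_fderiv_eq_neg_fderiv_mul_of_integrable
    (f := fun x => layer k (W x)) (g := η) (v := e) (μ := μ) ?_ ?_ ?_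
    (fun x _ => (hd x).differentiableAt) (fun x _ => (hη.differentiable (by simp)) x)]
  · rw [enorm_neg]
    refine (enorm_integral_le_lintegral_enorm _).trans (lintegral_mono fun x => ?_)
    rw [hd', enorm_mul, enorm_mul]
    refine mul_le_of_le_one_right' ?_
    rw [← ofReal_norm]
    exact ENNReal.ofReal_le_one.2 (hη1 x)
  · simp_rw [hd']
    exact ((hl'.mul hWc1).mul hη.continuous).integrable_of_hasCompactSupport hηc.mul_left
  · exact (hl.mul hηc1).integrable_of_hasCompactSupport hsupp.mul_left
  · exact (hl.mul hη.continuous).integrable_of_hasCompactSupport hηc.mul_left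

/-- A discrete substitute for the coarea formula: the layers of `w` have derivatives whose total
variations `V k` are summable. The number `V k` is the lower limit of the variations of the layers
of mollifications, so that Fatou's lemma bounds the sum by the total mass of `lam`. -/
lemma exists_layer_variation [IsFiniteMeasure lam] (hw : LocallyIntegrable w μ)
    (H : DerivDominated μ w e lam) :
    ∃ V : ℕ → ℝ≥0∞, ∑' k, V k ≠ ⊤ ∧ ∀ k, ∀ η : E → ℝ, ContDiff ℝ (⊤ : ℕ∞) η →
      HasCompactSupport η → (∀ x, ‖η x‖ ≤ 1) →
      ‖∫ x, layer k (w x) * fderiv ℝ η x e ∂μ‖ₑ ≤ V k := by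
  let ρ : ℕ → ContDiffBump (0 : E) := fun n =>
    { rIn := 1 / ((n : ℝ) + 1)
      rOut := 2 * (1 / ((n : ℝ) + 1))
      rIn_pos := by positivity
      rIn_lt_rOut := by
        have : 0 < 1 / ((n : ℝ) + 1) := by positivity
        linarith }
  let W : ℕ → E → ℝ := fun n => (ρ n).normed μ ⋆[ContinuousLinearMap.lsmul ℝ ℝ, μ] w
  have hW : ∀ n, ContDiff ℝ 1 (W n) := fun n => contDiff_mollify (ρ n) hw
  have hWlim : ∀ᵐ x ∂μ, Tendsto (fun n => W n x) atTop (𝓝 (w x)) := by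
    refine ContDiffBump.ae_convolution_tendsto_right_of_locallyIntegrable (φ := ρ) (K := 2) ?_ ?_ hw
    · have := (tendsto_one_div_add_atTop_nhds_zero_nat (𝕜 := ℝ)).const_mul 2
      simpa [ρ] using this
    · exact .of_forall fun n => le_rfl
  let A : ℕ → ℕ → ℝ≥0∞ := fun n k =>
    ∫⁻ x, ‖layerDeriv k (W n x)‖ₑ * ‖fderiv ℝ (W n) x e‖ₑ ∂μ
  refine ⟨fun k => liminf (fun n => A n k) atTop, ?_, fun k η hη hηc hη1 => ?_⟩
  · have hA : ∀ n, ∑' k, A n k ≤ lam Set.univ := by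
      intro n
      have hWc1 : Continuous (fun x => fderiv ℝ (W n) x e) :=
        ((hW n).continuous_fderiv one_ne_zero).clm_apply continuous_const
      have hmeas : ∀ k, AEMeasurable
          (fun x => ‖layerDeriv k (W n x)‖ₑ * ‖fderiv ℝ (W n) x e‖ₑ) μ := fun k =>
        ((((continuous_layerDeriv k).comp
          (hW n).continuous).enorm).measurable.mul hWc1.enorm.measurable).aemeasurable
      rw [← lintegral_tsum hmeas]
      refine le_trans (lintegral_mono fun x => ?_) (lintegral_enorm_fderiv_mollify_le (ρ n) hw H)
      rw [ENNReal.tsum_mul_right]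
      exact mul_le_of_le_one_left' (tsum_enorm_layerDeriv_le _)
    refine ne_top_of_le_ne_top (measure_ne_top lam Set.univ) ?_
    rw [← lintegral_count]
    refine (lintegral_liminf_le fun n => measurable_from_top).trans ?_
    simp_rw [lintegral_count]
    exact liminf_le_of_frequently_le' (Frequently.of_forall hA)
  · have hηc1 : Continuous (fun x => fderiv ℝ η x e) :=
      (hη.continuous_fderiv (by simp)).clm_apply continuous_const
    have hint : Integrable (fun x => fderiv ℝ η x e) μ :=
      hηc1.integrable_of_hasCompactSupport (hηc.fderiv_apply ℝ e)
    have hlim : Tendsto (fun n => ∫ x, layer k (W n x) * fderiv ℝ η x e ∂μ) atTop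
        (𝓝 (∫ x, layer k (w x) * fderiv ℝ η x e ∂μ)) := by
      refine tendsto_integral_of_dominated_convergence
        (fun x => layerBound k * ‖fderiv ℝ η x e‖) (fun n => ?_) (hint.norm.const_mul _)
        (fun n => .of_forall fun x => ?_) ?_
      · exact (((continuous_layer k).comp (hW n).continuous).mul hηc1).aestronglyMeasurable
      · rw [norm_mul]
        exact mul_le_mul_of_nonneg_right (abs_layer_le k _) (norm_nonneg _)
      · filter_upwards [hWlim] with x hx
        exact (((continuous_layer k).tendsto _).comp hx).mul_const _
    rw [← hlim.enorm.liminf_eq]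
    exact liminf_le_liminf (.of_forall fun n => enorm_integral_layer_le (hW n) k hη hηc hη1)

/-- If the derivative of `w` is dominated by a finite measure, then cutoff functions whose gradients
tend to zero in `L¹` are not seen by it: each layer of `w` is bounded, so its pairing with the
gradients tends to zero, and the pairings of all layers are dominated by a summable sequence. -/
lemma tendsto_integral_cutoff [IsFiniteMeasure lam] (hw : LocallyIntegrable w μ)
    (H : DerivDominated μ w e lam) {φ : ℕ → E → ℝ} (hφ : ∀ j, ContDiff ℝ (⊤ : ℕ∞) (φ j))
    (hφc : ∀ j, HasCompactSupport (φ j)) (hφ1 : ∀ j x, ‖φ j x‖ ≤ 1)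
    (hφ0 : Tendsto (fun j => ∫⁻ x, ‖fderiv ℝ (φ j) x e‖ₑ ∂μ) atTop (𝓝 0)) :
    Tendsto (fun j => ∫ x, w x * fderiv ℝ (φ j) x e ∂μ) atTop (𝓝 0) := by
  obtain ⟨V, hV, hVb⟩ := exists_layer_variation hw H
  have hc1 : ∀ j, Continuous (fun x => fderiv ℝ (φ j) x e) := fun j =>
    ((hφ j).continuous_fderiv (by simp)).clm_apply continuous_const
  have hs1 : ∀ j, HasCompactSupport (fun x => fderiv ℝ (φ j) x e) := fun j =>
    (hφc j).fderiv_apply ℝ e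
  have hint : ∀ j, Integrable (fun x => w x * fderiv ℝ (φ j) x e) μ := fun j =>
    hw.integrable_smul_right_of_hasCompactSupport (hc1 j) (hs1 j)
  have hlay : ∀ k j, Integrable (fun x => layer k (w x) * fderiv ℝ (φ j) x e) μ := fun k j =>
    ((hc1 j).integrable_of_hasCompactSupport (hs1 j)).bdd_mul
      ((continuous_layer k).comp_aestronglyMeasurable hw.aestronglyMeasurable)
      (.of_forall fun x => abs_layer_le k _)
  have hsum : ∀ j, ‖∫ x, w x * fderiv ℝ (φ j) x e ∂μ‖ₑ
      ≤ ∑' k, ‖∫ x, layer k (w x) * fderiv ℝ (φ j) x e ∂μ‖ₑ := by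
    intro j
    have hlim : Tendsto (fun n => ∫ x, trunc n (w x) * fderiv ℝ (φ j) x e ∂μ) atTop
        (𝓝 (∫ x, w x * fderiv ℝ (φ j) x e ∂μ)) := by
      refine tendsto_integral_of_dominated_convergence
        (fun x => ‖w x * fderiv ℝ (φ j) x e‖) (fun n => ?_) (hint j).norm
        (fun n => .of_forall fun x => ?_) (.of_forall fun x => (tendsto_trunc _).mul_const _)
      · exact ((continuous_trunc n).comp_aestronglyMeasurable hw.aestronglyMeasurable).mul
          (hc1 j).aestronglyMeasurable
      · rw [norm_mul, norm_mul]
        exact mul_le_mul_of_nonneg_right (abs_trunc_le_abs n _) (norm_nonneg _)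
    refine le_of_tendsto hlim.enorm (.of_forall fun n => ?_)
    simp_rw [← sum_range_layer n, Finset.sum_mul]
    rw [integral_finsetSum _ fun k _ => hlay k j]
    exact (enorm_sum_le _ _).trans (ENNReal.sum_le_tsum _)
  have hterm : ∀ k, Tendsto (fun j => ‖∫ x, layer k (w x) * fderiv ℝ (φ j) x e ∂μ‖ₑ) atTop
      (𝓝 0) := by
    intro k
    have hb : Tendsto (fun j => ENNReal.ofReal (layerBound k) *
        ∫⁻ x, ‖fderiv ℝ (φ j) x e‖ₑ ∂μ) atTop (𝓝 0) := by
      simpa using ENNReal.Tendsto.const_mul hφ0 (.inr ENNReal.ofReal_ne_top)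
    refine tendsto_of_tendsto_of_tendsto_of_le_of_le tendsto_const_nhds hb
      (fun j => zero_le) fun j => ?_
    dsimp only
    rw [← lintegral_const_mul _ (hc1 j).enorm.measurable]
    refine (enorm_integral_le_lintegral_enorm _).trans (lintegral_mono fun x => ?_)
    rw [enorm_mul]
    gcongr
    rw [← ofReal_norm]
    exact ENNReal.ofReal_le_ofReal (abs_layer_le k _)
  have htot : Tendsto (fun j => ∑' k, ‖∫ x, layer k (w x) * fderiv ℝ (φ j) x e ∂μ‖ₑ) atTop
      (𝓝 0) := by
    have := tendsto_lintegral_of_dominated_convergence (μ := Measure.count)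
      (F := fun j k => ‖∫ x, layer k (w x) * fderiv ℝ (φ j) x e ∂μ‖ₑ) (f := fun _ : ℕ => 0) V
      (fun j => measurable_from_top)
      (fun j => .of_forall fun k => hVb k _ (hφ j) (hφc j) (hφ1 j))
      (by rwa [lintegral_count]) (.of_forall hterm)
    simpa only [lintegral_count, lintegral_zero] using this
  rw [tendsto_zero_iff_enorm_tendsto_zero]
  exact tendsto_of_tendsto_of_tendsto_of_le_of_le tendsto_const_nhds htot (fun j => zero_le) hsum

end Mollify

/-! ### Cutoff functions of Hausdorff-null compact sets -/

section Cutoff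

variable {E : Type*} [NormedAddCommGroup E] [InnerProductSpace ℝ E]
  [MeasurableSpace E] [BorelSpace E] (μ : Measure E)

/-- Cutoffs of finitely many balls combine by `1 - (1 - φ) (1 - ψ)`; the `L¹` norms of the
gradients add up. -/
lemma exists_finset_cutoff {N : ℕ} (e : E) {I : ℝ}
    (hI : ∀ (x₀ : E) (r : ℝ), 0 < r → ∃ φ : E → ℝ, ContDiff ℝ (⊤ : ℕ∞) φ ∧
      (∀ x, 0 ≤ φ x ∧ φ x ≤ 1) ∧ (∀ x ∈ closedBall x₀ r, φ x = 1) ∧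
      tsupport φ ⊆ closedBall x₀ (2 * r) ∧
      ∫⁻ x, ‖fderiv ℝ φ x e‖ₑ ∂μ ≤ ENNReal.ofReal I * ENNReal.ofReal r ^ N)
    {ι : Type*} (c : ι → E) (r : ι → ℝ) (hr : ∀ i, 0 < r i) (s : Finset ι) :
    ∃ φ : E → ℝ, ContDiff ℝ (⊤ : ℕ∞) φ ∧ (∀ x, 0 ≤ φ x ∧ φ x ≤ 1) ∧
      (∀ i ∈ s, ∀ x ∈ closedBall (c i) (r i), φ x = 1) ∧
      tsupport φ ⊆ ⋃ i ∈ s, closedBall (c i) (2 * r i) ∧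
      ∫⁻ x, ‖fderiv ℝ φ x e‖ₑ ∂μ ≤ ENNReal.ofReal I * ∑ i ∈ s, ENNReal.ofReal (r i) ^ N := by
  classical
  induction s using Finset.induction_on with
  | empty =>
    refine ⟨fun _ => 0, contDiff_const, by simp, by simp, ?_, by simp⟩
    have : (fun _ : E => (0 : ℝ)) = 0 := rfl
    simp [this]
  | insert a s ha ih =>
    obtain ⟨φ, hφ, hφ01, hφ1, hφs, hφi⟩ := ih
    obtain ⟨ψ, hψ, hψ01, hψ1, hψs, hψi⟩ := hI (c a) (r a) (hr a)
    have hd : ∀ x, fderiv ℝ (fun x => 1 - (1 - φ x) * (1 - ψ x)) x e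
        = (1 - φ x) * fderiv ℝ ψ x e + (1 - ψ x) * fderiv ℝ φ x e := by
      intro x
      have h1 := ((hφ.differentiable (by simp)) x).hasFDerivAt.const_sub 1
      have h2 := ((hψ.differentiable (by simp)) x).hasFDerivAt.const_sub 1
      have h3 : fderiv ℝ (fun x => 1 - (1 - φ x) * (1 - ψ x)) x = _ :=
        ((h1.mul h2).const_sub 1).fderiv
      rw [h3]
      simp
      ring
    refine ⟨fun x => 1 - (1 - φ x) * (1 - ψ x), by fun_prop, fun x => ?_, ?_, ?_, ?_⟩
    · obtain ⟨h1, h2⟩ := hφ01 x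
      obtain ⟨h3, h4⟩ := hψ01 x
      constructor <;> nlinarith
    · intro i hi x hx
      rcases Finset.mem_insert.1 hi with rfl | hi
      · simp [hψ1 x hx]
      · simp [hφ1 i hi x hx]
    · rw [Finset.set_biUnion_insert]
      refine (closure_minimal (t := tsupport ψ ∪ tsupport φ) (fun x hx => ?_)
        ((isClosed_tsupport ψ).union (isClosed_tsupport φ))).trans (Set.union_subset_union hψs hφs)
      by_contra hx'
      rw [Set.mem_union, not_or] at hx'
      refine hx ?_
      simp [image_eq_zero_of_notMem_tsupport hx'.1, image_eq_zero_of_notMem_tsupport hx'.2]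
    · have hψm : Measurable (fun x => ‖fderiv ℝ ψ x e‖ₑ) :=
        ((hψ.continuous_fderiv (by simp)).clm_apply continuous_const).enorm.measurable
      rw [Finset.sum_insert ha, mul_add]
      refine le_trans ?_ (add_le_add hψi hφi)
      rw [← lintegral_add_left hψm]
      refine lintegral_mono fun x => ?_
      rw [hd]
      refine (enorm_add_le _ _).trans ?_
      have key : ∀ t : ℝ, 0 ≤ t ∧ t ≤ 1 → ‖1 - t‖ₑ ≤ 1 := fun t ht => by
        rw [Real.enorm_of_nonneg (by linarith [ht.2])]
        exact ENNReal.ofReal_le_one.2 (by linarith [ht.1])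
      rw [enorm_mul, enorm_mul]
      exact add_le_add (mul_le_of_le_one_left' (key _ (hφ01 x)))
        (mul_le_of_le_one_left' (key _ (hψ01 x)))

variable [FiniteDimensional ℝ E] [μ.IsAddHaarMeasure]

/-- A rescaled bump function: the `L¹` norm of its gradient is of order `r ^ (n - 1)` in
dimension `n`. -/
lemma exists_ball_cutoff {N : ℕ} (hN : Module.finrank ℝ E = N + 1) (e : E) :
    ∃ I : ℝ, 0 ≤ I ∧ ∀ (x₀ : E) (r : ℝ), 0 < r → ∃ φ : E → ℝ, ContDiff ℝ (⊤ : ℕ∞) φ ∧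
      (∀ x, 0 ≤ φ x ∧ φ x ≤ 1) ∧ (∀ x ∈ closedBall x₀ r, φ x = 1) ∧
      tsupport φ ⊆ closedBall x₀ (2 * r) ∧
      ∫⁻ x, ‖fderiv ℝ φ x e‖ₑ ∂μ ≤ ENNReal.ofReal I * ENNReal.ofReal r ^ N := by
  let β : ContDiffBump (0 : E) :=
    { rIn := 1, rOut := 2, rIn_pos := one_pos, rIn_lt_rOut := one_lt_two }
  have hβ : ContDiff ℝ (⊤ : ℕ∞) β := β.contDiff
  have hβc1 : Continuous (fun x => fderiv ℝ β x e) :=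
    (hβ.continuous_fderiv (by simp)).clm_apply continuous_const
  have hβint : Integrable (fun x => fderiv ℝ β x e) μ :=
    hβc1.integrable_of_hasCompactSupport (β.hasCompactSupport.fderiv_apply ℝ e)
  refine ⟨∫ x, ‖fderiv ℝ β x e‖ ∂μ, integral_nonneg fun x => norm_nonneg _, fun x₀ r hr => ?_⟩
  have hnorm : ∀ x, ‖r⁻¹ • (x - x₀)‖ = dist x x₀ / r := fun x => by
    rw [norm_smul, dist_eq_norm, norm_inv, Real.norm_of_nonneg hr.le]; ring
  have hsm : ContDiff ℝ (⊤ : ℕ∞) (fun x => β (r⁻¹ • (x - x₀))) :=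
    hβ.comp ((contDiff_id.sub contDiff_const).const_smul _)
  have hd : ∀ x, fderiv ℝ (fun x => β (r⁻¹ • (x - x₀))) x e
      = r⁻¹ * fderiv ℝ β (r⁻¹ • (x - x₀)) e := by
    intro x
    have h1 : HasFDerivAt (fun x : E => r⁻¹ • (x - x₀)) (r⁻¹ • ContinuousLinearMap.id ℝ E) x :=
      ((hasFDerivAt_id x).sub_const x₀).const_smul r⁻¹
    have h2 := ((hβ.differentiable (by simp)) (r⁻¹ • (x - x₀))).hasFDerivAt.comp x h1
    have h3 : fderiv ℝ (fun x => β (r⁻¹ • (x - x₀))) x = _ := h2.fderiv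
    rw [h3]
    simp
  refine ⟨fun x => β (r⁻¹ • (x - x₀)), hsm, fun x => ⟨β.nonneg, β.le_one⟩, fun x hx => ?_, ?_, ?_⟩
  · refine β.one_of_mem_closedBall ?_
    rw [mem_closedBall_zero_iff, hnorm]
    exact div_le_one_of_le₀ hx hr.le
  · refine closure_minimal (fun x hx => ?_) isClosed_closedBall
    by_contra hx'
    refine hx (β.zero_of_le_dist ?_)
    rw [dist_zero_right, hnorm, le_div_iff₀ hr]
    exact (not_le.1 hx').le
  · have hcont : Continuous (fun x => r⁻¹ * fderiv ℝ β (r⁻¹ • (x - x₀)) e) :=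
      continuous_const.mul (hβc1.comp (by fun_prop))
    have hint : Integrable (fun x => r⁻¹ * fderiv ℝ β (r⁻¹ • (x - x₀)) e) μ :=
      ((hβint.comp_smul (inv_ne_zero hr.ne')).comp_sub_right x₀).const_mul r⁻¹
    simp_rw [hd]
    rw [← ofReal_integral_norm_eq_lintegral_enorm hint, ← ENNReal.ofReal_pow hr.le,
      ← ENNReal.ofReal_mul (integral_nonneg fun x => norm_nonneg _)]
    refine ENNReal.ofReal_le_ofReal (le_of_eq ?_)
    simp_rw [norm_mul]
    rw [integral_const_mul,
      integral_sub_right_eq_self (fun x => ‖fderiv ℝ β (r⁻¹ • x) e‖) x₀,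
      Measure.integral_comp_inv_smul_of_nonneg μ (fun x => ‖fderiv ℝ β x e‖) hr.le, hN,
      smul_eq_mul, norm_inv, Real.norm_of_nonneg hr.le, pow_succ]
    field_simp

/-- In dimension `n`, a compact set of vanishing `(n - 1)`-dimensional Hausdorff measure has cutoff
functions supported near it whose gradients are small in `L¹`. -/
lemma exists_cutoff {N : ℕ} (hN : Module.finrank ℝ E = N + 1) (e : E) {K : Set E}
    (hK : IsCompact K) (hK0 : μH[(N : ℝ)] K = 0) {δ : ℝ} (hδ : 0 < δ) :
    ∃ φ : E → ℝ, ContDiff ℝ (⊤ : ℕ∞) φ ∧ (∀ x, 0 ≤ φ x ∧ φ x ≤ 1) ∧ (∀ x ∈ K, φ x = 1) ∧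
      tsupport φ ⊆ cthickening δ K ∧ ∫⁻ x, ‖fderiv ℝ φ x e‖ₑ ∂μ ≤ ENNReal.ofReal δ := by
  obtain ⟨I, hI0, hI⟩ := exists_ball_cutoff μ hN e
  -- The two error terms below are each at most `ε`, and `I * (ε + ε) ≤ δ`.
  set ε : ℝ≥0∞ := ENNReal.ofReal (δ / (2 * (I + 1))) with hε
  have hε0 : 0 < ε := ENNReal.ofReal_pos.2 (by positivity)
  have hρ : (0 : ℝ) < δ / 4 := by positivity
  obtain ⟨t, htK, htd, htsum⟩ : ∃ t : ℕ → Set E, K ⊆ ⋃ n, t n ∧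
      (∀ n, ediam (t n) ≤ ENNReal.ofReal (δ / 4)) ∧
      ∑' n, ⨆ _ : (t n).Nonempty, ediam (t n) ^ (N : ℝ) < ε := by
    rw [Measure.hausdorffMeasure_apply] at hK0
    have h1 := hK0.le
    simp only [iSup_le_iff] at h1
    have h2 := (h1 (ENNReal.ofReal (δ / 4)) (ENNReal.ofReal_pos.2 hρ)).trans_lt hε0
    simpa only [iInf_lt_iff, exists_prop] using h2
  obtain ⟨ε', hε'pos, hε'⟩ := ENNReal.exists_pos_sum_of_countable' hε0.ne' ℕ
  let J := {n : ℕ // (t n ∩ K).Nonempty}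
  choose c hc using fun n : J => n.2
  have hfin : ∀ n, ediam (t n) ≠ ⊤ := fun n => ne_top_of_le_ne_top ENNReal.ofReal_ne_top (htd n)
  -- Radii slightly larger than the diameters, so that open balls cover.
  have hrad : ∀ n : ℕ, ∃ r : ℝ, (ediam (t n)).toReal < r ∧ r < (ediam (t n)).toReal + δ / 4 ∧
      ENNReal.ofReal r ^ N < ediam (t n) ^ N + ε' n := by
    intro n
    set a := (ediam (t n)).toReal
    have hcont : Continuous fun r : ℝ => ENNReal.ofReal r ^ N :=
      (ENNReal.continuous_pow N).comp ENNReal.continuous_ofReal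
    have hlt : ENNReal.ofReal a ^ N < ediam (t n) ^ N + ε' n := by
      rw [ENNReal.ofReal_toReal (hfin n)]
      exact ENNReal.lt_add_right (ENNReal.pow_ne_top (hfin n)) (hε'pos n).ne'
    have h1 : ∀ᶠ r in 𝓝[>] a, ENNReal.ofReal r ^ N < ediam (t n) ^ N + ε' n :=
      (hcont.continuousAt.eventually_lt continuousAt_const hlt).filter_mono nhdsWithin_le_nhds
    have h2 : ∀ᶠ r in 𝓝[>] a, r < a + δ / 4 :=
      (eventually_lt_nhds (by linarith)).filter_mono nhdsWithin_le_nhds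
    have h3 : ∀ᶠ r in 𝓝[>] a, a < r := eventually_mem_nhdsWithin
    obtain ⟨r, h1, h2, h3⟩ := (h1.and (h2.and h3)).exists
    exact ⟨r, h3, h2, h1⟩
  choose r hr1 hr2 hr3 using hrad
  have hr0 : ∀ n, 0 < r n := fun n => ENNReal.toReal_nonneg.trans_lt (hr1 n)
  have hcover : K ⊆ ⋃ n : J, ball (c n) (r n.1) := by
    intro x hx
    obtain ⟨n, hn⟩ := Set.mem_iUnion.1 (htK hx)
    let j : J := ⟨n, x, hn, hx⟩
    refine Set.mem_iUnion.2 ⟨j, ?_⟩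
    have h1 : edist x (c j) ≤ ediam (t n) := edist_le_ediam_of_mem hn (hc j).1
    rw [mem_ball, dist_edist]
    exact (ENNReal.toReal_mono (hfin n) h1).trans_lt (hr1 n)
  obtain ⟨s, hs⟩ := hK.elim_finite_subcover _ (fun _ => isOpen_ball) hcover
  obtain ⟨φ, hφ, hφ01, hφ1, hφs, hφi⟩ :=
    exists_finset_cutoff μ e hI c (fun n : J => r n.1) (fun n => hr0 n.1) s
  refine ⟨φ, hφ, hφ01, fun x hx => ?_, hφs.trans ?_, hφi.trans ?_⟩
  · obtain ⟨i, hi, hxi⟩ := Set.mem_iUnion₂.1 (hs hx)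
    exact hφ1 i hi x (ball_subset_closedBall hxi)
  · refine Set.iUnion₂_subset fun i _ => ?_
    refine (closedBall_subset_closedBall ?_).trans (closedBall_subset_cthickening (hc i).2 δ)
    have h1 := ENNReal.toReal_le_of_le_ofReal hρ.le (htd i.1)
    linarith [hr2 i.1]
  · have hsum : ∑ i ∈ s, ENNReal.ofReal (r i.1) ^ N ≤ ε + ε := by
      calc ∑ i ∈ s, ENNReal.ofReal (r i.1) ^ N
          ≤ ∑ i ∈ s, ((⨆ _ : (t i.1).Nonempty, ediam (t i.1) ^ (N : ℝ)) + ε' i.1) := by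
            refine Finset.sum_le_sum fun i _ => (hr3 i.1).le.trans ?_
            rw [iSup_pos (i.2.mono Set.inter_subset_left), ENNReal.rpow_natCast]
        _ ≤ ∑' i : J, ((⨆ _ : (t i.1).Nonempty, ediam (t i.1) ^ (N : ℝ)) + ε' i.1) :=
            ENNReal.sum_le_tsum _
        _ ≤ ∑' n : ℕ, ((⨆ _ : (t n).Nonempty, ediam (t n) ^ (N : ℝ)) + ε' n) :=
            ENNReal.tsum_comp_le_tsum_of_injective Subtype.val_injective
              (fun n => (⨆ _ : (t n).Nonempty, ediam (t n) ^ (N : ℝ)) + ε' n)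
        _ ≤ ε + ε := by
            rw [ENNReal.tsum_add]
            exact add_le_add htsum.le hε'.le
    refine (mul_le_mul_right hsum _).trans ?_
    rw [hε, ← ENNReal.ofReal_add (by positivity) (by positivity), ← ENNReal.ofReal_mul hI0]
    refine ENNReal.ofReal_le_ofReal ?_
    have : I * (δ / (2 * (I + 1)) + δ / (2 * (I + 1))) = δ * (I / (I + 1)) := by
      field_simp
      ring
    rw [this]
    exact mul_le_of_le_one_right hδ.le (div_le_one_of_le₀ (by linarith) (by linarith))

end Cutoff

/-! ### Localization and null compact sets -/

section Localization

variable {E : Type*} [NormedAddCommGroup E] [InnerProductSpace ℝ E]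
  [MeasurableSpace E] [BorelSpace E]

/-- Localization: multiplying by a smooth cutoff `χ` makes the product rule produce the extra term
`v ∂ₑχ`, so the derivative of `χ v` is dominated by `ν` on the support of `χ` plus the finite
measure with density `|v ∂ₑχ|`. -/
lemma derivDominated_cutoff_mul {μ ν : Measure E} {Ω B : Set E} {v g χ : E → ℝ} {e : E}
    (hB : IsCompact B) (hBΩ : B ⊆ Ω) (hv : IntegrableOn v B μ)
    (hg1 : ∀ᵐ x ∂ν, ‖g x‖ ≤ 1)
    (h : ∀ φ : E → ℝ, ContDiff ℝ (⊤ : ℕ∞) φ → HasCompactSupport φ → tsupport φ ⊆ Ω →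
      ∫ x in Ω, v x * fderiv ℝ φ x e ∂μ = -∫ x, φ x * g x ∂ν)
    (hχ : ContDiff ℝ (⊤ : ℕ∞) χ) (hχ01 : ∀ x, 0 ≤ χ x ∧ χ x ≤ 1) (hχB : tsupport χ ⊆ B) :
    DerivDominated μ (fun x => χ x * v x) e
      (ν.restrict B + μ.withDensity fun x => ‖v x * fderiv ℝ χ x e‖ₑ) := by
  intro φ hφ _
  have hint : ∀ f : E → ℝ, Continuous f → Function.support f ⊆ B →
      Integrable (fun x => v x * f x) μ := fun f hf hfB =>
    (integrableOn_iff_integrable_of_support_subset fun x hx => hfB (right_ne_zero_of_mul hx)).1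
      (hv.mul_continuousOn hf.continuousOn hB)
  have hχ0 : ∀ x ∉ B, χ x = 0 := fun x hx => image_eq_zero_of_notMem_tsupport fun h => hx (hχB h)
  have hχd : ∀ x ∉ B, fderiv ℝ χ x e = 0 := fun x hx => by
    rw [fderiv_of_notMem_tsupport (𝕜 := ℝ) fun h => hx (hχB h)]; rfl
  have hχc1 : Continuous (fun x => fderiv ℝ χ x e) :=
    (hχ.continuous_fderiv (by simp)).clm_apply continuous_const
  have hφc1 : Continuous (fun x => fderiv ℝ φ x e) :=
    (hφ.continuous_fderiv (by simp)).clm_apply continuous_const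
  have hd : ∀ x, fderiv ℝ (fun x => χ x * φ x) x e
      = χ x * fderiv ℝ φ x e + φ x * fderiv ℝ χ x e := by
    intro x
    rw [fderiv_fun_mul ((hχ.differentiable (by simp)) x) ((hφ.differentiable (by simp)) x)]
    simp
  have hψB : tsupport (fun x => χ x * φ x) ⊆ B := (tsupport_mul_subset_left).trans hχB
  have hψ := h (fun x => χ x * φ x) (hχ.mul hφ)
    (HasCompactSupport.of_support_subset_isCompact hB ((subset_tsupport _).trans hψB))
    (hψB.trans hBΩ)
  have hi1 : Integrable (fun x => v x * (χ x * fderiv ℝ φ x e)) μ :=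
    hint _ (hχ.continuous.mul hφc1) fun x hx => by
      by_contra hxB; exact hx (by simp [hχ0 x hxB])
  have hi2 : Integrable (fun x => v x * (φ x * fderiv ℝ χ x e)) μ :=
    hint _ (hφ.continuous.mul hχc1) fun x hx => by
      by_contra hxB; exact hx (by simp [hχd x hxB])
  have hb : Integrable (fun x => v x * fderiv ℝ χ x e) μ :=
    hint _ hχc1 fun x hx => by
      by_contra hxB; exact hx (hχd x hxB)
  rw [setIntegral_eq_integral_of_forall_compl_eq_zero fun x hx => by
    rw [hd, hχ0 x fun h => hx (hBΩ h), hχd x fun h => hx (hBΩ h)]; simp] at hψ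
  have heq : ∫ x, χ x * v x * fderiv ℝ φ x e ∂μ
      = -∫ x, χ x * φ x * g x ∂ν - ∫ x, v x * (φ x * fderiv ℝ χ x e) ∂μ := by
    rw [← hψ]
    simp_rw [hd, mul_add]
    rw [integral_add hi1 hi2, add_sub_cancel_right]
    exact integral_congr_ae (.of_forall fun x => by ring)
  rw [heq, lintegral_add_measure]
  refine (enorm_sub_le).trans (add_le_add ?_ ?_)
  · rw [enorm_neg, ← lintegral_indicator hB.measurableSet]
    refine (enorm_integral_le_lintegral_enorm _).trans (lintegral_mono_ae ?_)
    filter_upwards [hg1] with x hx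
    by_cases hxB : x ∈ B
    · rw [Set.indicator_of_mem hxB, enorm_mul, enorm_mul]
      have h1 : ‖χ x‖ₑ ≤ 1 := by
        rw [Real.enorm_of_nonneg (hχ01 x).1]
        exact ENNReal.ofReal_le_one.2 (hχ01 x).2
      have h2 : ‖g x‖ₑ ≤ 1 := by
        rw [← ofReal_norm]
        exact ENNReal.ofReal_le_one.2 hx
      exact (mul_le_of_le_one_right' h2).trans (mul_le_of_le_one_left' h1)
    · simp [hχ0 x hxB]
  · rw [lintegral_withDensity_eq_lintegral_mul₀ hb.aestronglyMeasurable.enorm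
      hφ.continuous.enorm.aemeasurable]
    refine (enorm_integral_le_lintegral_enorm _).trans (lintegral_mono fun x => ?_)
    simp only [Pi.mul_apply, enorm_mul]
    exact le_of_eq (by ring)

variable [FiniteDimensional ℝ E]

/-- A partial derivative `g ν` of a `BV` function gives no mass to compact sets of vanishing
`(n - 1)`-dimensional Hausdorff measure. -/
lemma setIntegral_eq_zero_of_hausdorffMeasure_eq_zero {μ ν : Measure E} [μ.IsAddHaarMeasure]
    {N : ℕ} (hN : Module.finrank ℝ E = N + 1) {Ω : Set E} (hΩ : IsOpen Ω) {v g : E → ℝ} {e : E}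
    (hv : LocallyIntegrableOn v Ω μ)
    (hνloc : ∀ K : Set E, K ⊆ Ω → IsCompact K → ν K < ⊤)
    (hg : AEStronglyMeasurable g ν) (hg1 : ∀ᵐ x ∂ν, ‖g x‖ ≤ 1)
    (h : ∀ φ : E → ℝ, ContDiff ℝ (⊤ : ℕ∞) φ → HasCompactSupport φ → tsupport φ ⊆ Ω →
      ∫ x in Ω, v x * fderiv ℝ φ x e ∂μ = -∫ x, φ x * g x ∂ν)
    {K : Set E} (hK : IsCompact K) (hKΩ : K ⊆ Ω) (hK0 : μH[(N : ℝ)] K = 0) :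
    ∫ x in K, g x ∂ν = 0 := by
  obtain ⟨δ, hδ, hδΩ⟩ := hK.exists_cthickening_subset_open hΩ hKΩ
  set B := cthickening δ K
  set A := cthickening (δ / 2) K
  have hB : IsCompact B := hK.cthickening
  have hAB : A ⊆ interior B :=
    (cthickening_subset_thickening' hδ (half_lt_self hδ) K).trans
      (interior_maximal (thickening_subset_cthickening δ K) isOpen_thickening)
  have hvB : IntegrableOn v B μ := hv.integrableOn_compact_subset hδΩ hB
  obtain ⟨χ, hχA, hχB, hχ01⟩ := exists_contMDiffMap_one_nhds_of_subset_interior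
    (n := (⊤ : ℕ∞)) (modelWithCornersSelf ℝ E) (isClosed_cthickening (E := K)) hAB
  have hχ : ContDiff ℝ (⊤ : ℕ∞) χ := χ.contMDiff.contDiff
  have hχ1 : ∀ x ∈ A, χ x = 1 := fun x hx => hχA.self_of_nhdsSet x hx
  have hχs : tsupport χ ⊆ B := closure_minimal
    (fun x hx => by by_contra hxB; exact hx (hχB x hxB)) isClosed_cthickening
  have hχc1 : Continuous (fun x => fderiv ℝ χ x e) :=
    (hχ.continuous_fderiv (by simp)).clm_apply continuous_const
  have hb : Integrable (fun x => v x * fderiv ℝ χ x e) μ := by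
    refine (integrableOn_iff_integrable_of_support_subset fun x hx => ?_).1
      (hvB.mul_continuousOn hχc1.continuousOn hB)
    by_contra hxB
    refine right_ne_zero_of_mul hx ?_
    rw [fderiv_of_notMem_tsupport (𝕜 := ℝ) fun h => hxB (hχs h)]; rfl
  have hw : Integrable (fun x => χ x * v x) μ :=
    (integrableOn_iff_integrable_of_support_subset fun x hx => by
      by_contra hxB; exact left_ne_zero_of_mul hx (hχB x hxB)).1
      (hvB.continuousOn_mul hχ.continuous.continuousOn hB)
  have : IsFiniteMeasure (ν.restrict B) := isFiniteMeasure_restrict.2 (hνloc B hδΩ hB).ne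
  have : IsFiniteMeasure (μ.withDensity fun x => ‖v x * fderiv ℝ χ x e‖ₑ) :=
    isFiniteMeasure_withDensity hb.2.ne
  have H := derivDominated_cutoff_mul hB hδΩ hvB hg1 h hχ hχ01 hχs
  -- Cutoffs supported in `A`, where `χ = 1`, shrinking to `K`.
  let ε : ℕ → ℝ := fun j => δ / 2 * (1 / ((j : ℝ) + 1))
  have hε0 : ∀ j, 0 < ε j := fun j => by positivity
  have hεlim : Tendsto ε atTop (𝓝 0) := by
    simpa [ε] using (tendsto_one_div_add_atTop_nhds_zero_nat (𝕜 := ℝ)).const_mul (δ / 2)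
  have hεlim' : Tendsto (fun j => ENNReal.ofReal (ε j)) atTop (𝓝 0) := by
    simpa using ENNReal.tendsto_ofReal hεlim
  have hεA : ∀ j, cthickening (ε j) K ⊆ A := fun j => by
    refine cthickening_mono (mul_le_of_le_one_right (by positivity) ?_) K
    exact div_le_one_of_le₀ (by linarith [(Nat.cast_nonneg j : (0 : ℝ) ≤ j)]) (by positivity)
  choose φ hφ hφ01 hφ1 hφs hφi using fun j => exists_cutoff μ hN e hK hK0 (hε0 j)
  have hAB' : A ⊆ B := hAB.trans interior_subset
  have hφB : ∀ j, tsupport (φ j) ⊆ B := fun j => (hφs j).trans ((hεA j).trans hAB')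
  have hφc : ∀ j, HasCompactSupport (φ j) := fun j =>
    HasCompactSupport.of_support_subset_isCompact hB ((subset_tsupport _).trans (hφB j))
  have hφn : ∀ j x, ‖φ j x‖ ≤ 1 := fun j x => by
    rw [Real.norm_of_nonneg (hφ01 j x).1]; exact (hφ01 j x).2
  have hφd : ∀ j, ∀ x ∉ A, fderiv ℝ (φ j) x e = 0 := fun j x hx => by
    rw [fderiv_of_notMem_tsupport (𝕜 := ℝ) fun h => hx (hεA j (hφs j h))]; rfl
  have hlim1 := tendsto_integral_cutoff hw.locallyIntegrable H hφ hφc hφn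
    (tendsto_of_tendsto_of_tendsto_of_le_of_le tendsto_const_nhds hεlim' (fun j => zero_le) hφi)
  have heq : ∀ j, ∫ x, χ x * v x * fderiv ℝ (φ j) x e ∂μ = -∫ x, φ j x * g x ∂ν := by
    intro j
    rw [← h (φ j) (hφ j) (hφc j) ((hφB j).trans hδΩ),
      setIntegral_eq_integral_of_forall_compl_eq_zero fun x hx => by
        rw [hφd j x fun h => hx (hδΩ (hAB' h)), mul_zero]]
    refine integral_congr_ae (.of_forall fun x => ?_)
    by_cases hx : x ∈ A
    · simp [hχ1 x hx]
    · simp [hφd j x hx]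
  have hlim2 : Tendsto (fun j => ∫ x, φ j x * g x ∂ν) atTop (𝓝 (∫ x, K.indicator g x ∂ν)) := by
    refine tendsto_integral_of_dominated_convergence (B.indicator fun _ => (1 : ℝ))
      (fun j => (hφ j).continuous.aestronglyMeasurable.mul hg)
      ((integrable_indicator_iff hB.measurableSet).2 (integrableOn_const (hνloc B hδΩ hB).ne))
      (fun j => ?_) (.of_forall fun x => ?_)
    · filter_upwards [hg1] with x hx
      by_cases hxB : x ∈ B
      · rw [Set.indicator_of_mem hxB, norm_mul]
        exact mul_le_one₀ (hφn j x) (norm_nonneg _) hx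
      · rw [image_eq_zero_of_notMem_tsupport fun h => hxB (hφB j h)]
        simp [hxB]
    · by_cases hx : x ∈ K
      · simp [hφ1 _ x hx, hx]
      · rw [Set.indicator_of_notMem hx]
        refine tendsto_const_nhds.congr' ?_
        have hpos : 0 < infEDist x K := pos_iff_ne_zero.2 fun h0 =>
          hx ((mem_iff_infEDist_zero_of_closed hK.isClosed).2 h0)
        filter_upwards [hεlim'.eventually_lt_const hpos] with j hj
        rw [image_eq_zero_of_notMem_tsupport fun h => not_le.2 hj (mem_cthickening_iff.1 (hφs j h)),
          zero_mul]
  rw [← integral_indicator hK.measurableSet]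
  refine tendsto_nhds_unique hlim2 ?_
  simpa [heq] using hlim1.neg

end Localization

end BVDim

/-! ### Absolute continuity of the total variation -/

/-- **Dimension bound for gradients of BV functions.** Let `u ∈ L¹_loc(Ω; ℝ^m)` have locally
bounded variation on the open set `Ω ⊆ ℝ^d`, i.e. its distributional derivative is represented
by the `m×d`-matrix-valued Radon measure `Du = G ν` (polar decomposition, `ν = |Du|`; the matrix
space is identified with `EuclideanSpace ℝ (Fin m × Fin d)` with the Frobenius norm):
`∫_Ω uₖ ∂ᵢφ dx = −∫ φ G·(k,i) dν` for all test functions `φ` and all `k, i`.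
Then `|Du| ≪ ℋ^κ` for every `0 ≤ κ < d − 1`; in particular `dim_ℋ |Du| ≥ d − 1`. -/
theorem bv_gradient_dimension_bound
    {d m : ℕ} (Ω : Set (EuclideanSpace ℝ (Fin d))) (hΩ : IsOpen Ω)
    (u : EuclideanSpace ℝ (Fin d) → EuclideanSpace ℝ (Fin m))
    (hu : LocallyIntegrableOn u Ω volume)
    -- `ν = |Du|` is a Radon measure on `Ω` and `G` the polar of `Du`:
    (ν : Measure (EuclideanSpace ℝ (Fin d)))
    (hνloc : ∀ K : Set (EuclideanSpace ℝ (Fin d)), K ⊆ Ω → IsCompact K → ν K < ⊤)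
    (hνsupp : ν Ωᶜ = 0)
    (G : EuclideanSpace ℝ (Fin d) → EuclideanSpace ℝ (Fin m × Fin d))
    (hGm : AEStronglyMeasurable G ν) (hGnorm : ∀ᵐ x ∂ν, ‖G x‖ = 1)
    -- `Du = G ν` is the distributional derivative of `u` on `Ω`:
    (hDu : ∀ φ : EuclideanSpace ℝ (Fin d) → ℝ,
      ContDiff ℝ (⊤ : ℕ∞) φ → HasCompactSupport φ → tsupport φ ⊆ Ω →
      ∀ (k : Fin m) (i : Fin d),
        (∫ x in Ω, u x k * fderiv ℝ φ x (EuclideanSpace.single i 1) ∂volume)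
          = -∫ x, φ x * G x (k, i) ∂ν) :
    ∀ κ : ℝ, 0 ≤ κ → κ < (d : ℝ) - 1 → ν ≪ μH[κ] := by
  intro κ _ hκd
  -- Here `d ≥ 1`, as `0 ≤ κ < d - 1`.
  obtain ⟨N, rfl⟩ : ∃ N, d = N + 1 := by
    refine Nat.exists_eq_succ_of_ne_zero ?_
    rintro rfl
    norm_num at hκd
    linarith
  refine Measure.AbsolutelyContinuous.mk fun S hS hS0 => ?_
  have hSN : μH[(N : ℝ)] S = 0 := by
    refine le_antisymm ((Measure.hausdorffMeasure_mono (le_of_lt ?_) S).trans hS0.le) zero_le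
    push_cast at hκd
    linarith
  have key : ∀ L : Set (EuclideanSpace ℝ (Fin (N + 1))), L ⊆ Ω → IsCompact L → ν (S ∩ L) = 0 := by
    intro L hLΩ hL
    by_contra hne
    have : IsFiniteMeasure (ν.restrict L) := isFiniteMeasure_restrict.2 (hνloc L hLΩ hL).ne
    have hpos : 0 < ν.restrict L (S ∩ L) := by
      rw [Measure.restrict_apply (hS.inter hL.measurableSet), Set.inter_assoc, Set.inter_self]
      exact pos_iff_ne_zero.2 hne
    obtain ⟨K, hKS, hK, hK0⟩ := (hS.inter hL.measurableSet).exists_lt_isCompact hpos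
    have hKpos : 0 < ν K := hK0.trans_le (Measure.restrict_apply_le _ _)
    have hKΩ : K ⊆ Ω := hKS.trans (Set.inter_subset_right.trans hLΩ)
    have : IsFiniteMeasure (ν.restrict K) := isFiniteMeasure_restrict.2 (hνloc K hKΩ hK).ne
    -- Every entry of `G` integrates to zero over every compact subset of `K`, so it vanishes there.
    have hG0 : ∀ p : Fin m × Fin (N + 1), ∀ᵐ x ∂ν.restrict K, G x p = 0 := by
      rintro ⟨k, i⟩
      have hle : ∀ x, ‖G x (k, i)‖ ≤ ‖G x‖ := fun x => PiLp.norm_apply_le (G x) (k, i)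
      have hgm : AEStronglyMeasurable (fun x => G x (k, i)) ν :=
        (EuclideanSpace.proj (𝕜 := ℝ) (k, i)).continuous.comp_aestronglyMeasurable hGm
      have hg1 : ∀ᵐ x ∂ν, ‖G x (k, i)‖ ≤ 1 := by
        filter_upwards [hGnorm] with x hx
        exact (hle x).trans hx.le
      have hv : LocallyIntegrableOn (fun x => u x k) Ω volume := fun x hx => by
        obtain ⟨t, ht, hut⟩ := hu x hx
        exact ⟨t, ht, (EuclideanSpace.proj (𝕜 := ℝ) k : _ →L[ℝ] ℝ).integrable_comp hut⟩
      have hint : Integrable (fun x => G x (k, i)) (ν.restrict K) :=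
        Integrable.of_bound hgm.restrict 1 (ae_restrict_of_ae hg1)
      refine ae_eq_zero_of_forall_setIntegral_isCompact_eq_zero hint fun Q hQ => ?_
      rw [Measure.restrict_restrict hQ.measurableSet]
      refine BVDim.setIntegral_eq_zero_of_hausdorffMeasure_eq_zero (μ := volume) (N := N)
        (by simp) hΩ hv hνloc hgm hg1 (fun φ h1 h2 h3 => hDu φ h1 h2 h3 k i)
        (hQ.inter hK) (Set.inter_subset_right.trans hKΩ) ?_
      exact measure_mono_null
        (Set.inter_subset_right.trans (hKS.trans Set.inter_subset_left)) hSN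
    have hfalse : ∀ᵐ x ∂ν.restrict K, False := by
      filter_upwards [ae_all_iff.2 hG0, ae_restrict_of_ae hGnorm] with x h0 h1
      have : G x = 0 := by ext p; exact h0 p
      rw [this, norm_zero] at h1
      exact zero_ne_one h1
    rw [ae_iff] at hfalse
    simp only [not_false_eq_true, Set.ofPred_true, Measure.restrict_apply_univ] at hfalse
    exact hKpos.ne' hfalse
  have hSΩ : ν (S ∩ Ω) = 0 := by
    refine measure_null_of_locally_null _ fun x hx => ?_
    obtain ⟨L, hL, hxL, hLΩ⟩ := exists_compact_subset hΩ hx.2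
    refine ⟨S ∩ L, ?_, key L hLΩ hL⟩
    refine mem_nhdsWithin.2 ⟨interior L, isOpen_interior, hxL, fun y hy => ?_⟩
    exact ⟨hy.2.1, interior_subset hy.1⟩
  rw [← Set.inter_union_compl S Ω]
  exact measure_union_null hSΩ (measure_mono_null Set.inter_subset_right hνsupp)
end

section
/- Let Ω ⊆ ℝ^d be open, 0 ≤ m ≤ d−1 an integer, and let ω be a Radon measure on Ω with values in the m-th exterior power ⋀^m ℝ^d, with scalar coefficient measures ω_{i_1⋯i_m} = ⟨ω, dx_{i_1}∧⋯∧dx_{i_m}⟩ for 1 ≤ i_1 < ⋯ < i_m ≤ d. Suppose the exterior derivative dω := ∑_{i=1,…,d; i_1<⋯<i_m} (∂_i ω_{i_1⋯i_m}) dx_i∧dx_{i_1}∧⋯∧dx_{i_m} is representable by a ⋀^{m+1}ℝ^d-valued Radon measure η on Ω. Then |ω| ≪ H^κ for every 0 ≤ κ < d − m; in particular dim_H(|ω|) ≥ d − m. -/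
/-!
The proof is a first-order argument at almost every point. Let `x₀` be a Lebesgue point of the polar
`G` of `ω = G ν`, with `|G x₀| = 1`, at which `η` has finite upper density with respect to `ν`;
`ν`-almost every point is of this kind (`ae_eventually_integral_le`,
`ae_eventually_measureReal_le`). Test `dω = η` with functions adapted to the ball `B_r` around `x₀`,
with `|φ| ≤ 1` and `|∇φ| ≤ L / r`. The right-hand side is `O(ν(B_r))`, and replacing `G` by the
constant `g = G x₀` costs `o(ν(B_r) / r)` (`abs_integral_wedgeDir_le`). Hence
`∫ ∂_w φ dν = o(ν(B_r) / r)` for each vector `w` with `⟪ξ, w⟫ = (ξ ∧ g)_t`, for any `(m+1)`-index `t`.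
If `g_s ≠ 0`, the choices `t = s ∪ {i}` with `i ∉ s` give `d - m` linearly independent such vectors.

So `ν` is almost invariant at `x₀`, at small scales, in `k = d - m` independent directions
(`AlmostInvariant`). Translating a bump function along these directions hardly changes its integral
(`integral_translate_ge`), and about `s^{-k}` disjoint translates of a bump of width `s r` fit into
`B_r`. Therefore `ν(B_{sr}) ≤ C s^k ν(B_r)`, which for `κ < k` and `s` small is at most `s^κ ν(B_r)`
(`exists_scale_decay`). Iterating, `ν(B_r) ≤ C r^κ` near `x₀` (`density_of_form`), and a measure with
finite upper `κ`-density almost everywhere is absolutely continuous with respect to `μH[κ]`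
(`absolutelyContinuous_hausdorff_of_density`).

The coefficients of `H` are not assumed integrable, and a Bochner integral of a non-integrable
function is `0`. The linearity of the left-hand side of `dω = η` in `φ` settles this: a component of
`H` is locally integrable on `Ω`, or the corresponding component of `dω` vanishes
(`integrable_or_eq_zero`).
-/

open MeasureTheory Metric Filter
open scoped ENNReal RealInnerProductSpace Topology

/-- The index set for coordinates of `m`-(co)vectors on `ℝ^d`: subsets of `{1,…,d}` of
cardinality `m`, indexing the basis `{dx_{i₁} ∧ ⋯ ∧ dx_{i_m} : i₁ < ⋯ < i_m}`.  The space
`⋀^m ℝ^d` with its standard inner product is then identified with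
`EuclideanSpace ℝ (FormIndex d m)`. -/
def FormIndex (d m : ℕ) : Type := {s : Finset (Fin d) // s.card = m}

noncomputable instance (d m : ℕ) : Fintype (FormIndex d m) := by
  unfold FormIndex; infer_instance

/-! ### Upper density bounds and Hausdorff measure -/

/-- If `ν` has finite upper `κ`-density at `ν`-almost every point, then `ν ≪ μH[κ]`. The space is
covered, up to a `ν`-null set, by the sets `A n` on which the density bound holds with constant
`n + 1` below the scale `1 / (n + 1)`; on `A n` the measure is at most `(n + 1)` times the
`κ`-dimensional Hausdorff outer measure. -/
lemma absolutelyContinuous_hausdorff_of_density {X : Type*} [MetricSpace X] [MeasurableSpace X]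
    [BorelSpace X] (ν : Measure X) {κ : ℝ}
    (h : ∀ᵐ x ∂ν, ∃ C r₀ : ℝ, 0 < r₀ ∧ ∀ r, 0 < r → r < r₀ →
      ν (closedBall x r) ≤ ENNReal.ofReal (C * r ^ κ)) :
    ν ≪ μH[κ] := by
  intro S hS
  let A : ℕ → Set X := fun n => {x | ∀ r : ℝ, 0 < r → r < 1 / ((n : ℝ) + 1) →
    ν (closedBall x r) ≤ ((n : ℝ≥0∞) + 1) * ENNReal.ofReal r ^ κ}
  have hA : ∀ᵐ x ∂ν, x ∈ ⋃ n, A n := by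
    filter_upwards [h] with x ⟨C, r₀, hr₀, hx⟩
    obtain ⟨n₁, hn₁⟩ := exists_nat_ge C
    obtain ⟨n₂, hn₂⟩ := exists_nat_one_div_lt hr₀
    refine Set.mem_iUnion.2 ⟨max n₁ n₂, fun r hr hr' => ?_⟩
    have h1 : ((n₂ : ℝ)) ≤ (max n₁ n₂ : ℕ) := by exact_mod_cast le_max_right _ _
    have h2 : ((n₁ : ℝ)) ≤ (max n₁ n₂ : ℕ) := by exact_mod_cast le_max_left _ _
    have h3 : r < r₀ := by
      refine hr'.trans_le (le_trans ?_ hn₂.le)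
      exact one_div_le_one_div_of_le (by positivity) (by linarith)
    refine (hx r hr h3).trans ?_
    rw [ENNReal.ofReal_rpow_of_pos hr]
    have h4 : (((max n₁ n₂ : ℕ) : ℝ≥0∞) + 1) = ENNReal.ofReal (((max n₁ n₂ : ℕ) : ℝ) + 1) := by
      rw [ENNReal.ofReal_add (by positivity) zero_le_one, ENNReal.ofReal_natCast, ENNReal.ofReal_one]
    rw [h4, ← ENNReal.ofReal_mul (by positivity)]
    apply ENNReal.ofReal_le_ofReal
    gcongr
    linarith
  have key : ∀ n, ν (S ∩ A n) = 0 := by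
    intro n
    let c : ℝ≥0∞ := (n : ℝ≥0∞) + 1
    have hc0 : c ≠ 0 := by simp [c]
    have hct : c ≠ ⊤ := by simp [c]
    let μ : OuterMeasure X := c⁻¹ • OuterMeasure.restrict (A n) ν.toOuterMeasure
    have hμ : μ ≤ OuterMeasure.mkMetric (fun r => r ^ κ) := by
      refine OuterMeasure.le_mkMetric _ _ (ENNReal.ofReal (1 / (2 * ((n : ℝ) + 1))))
        (by rw [ENNReal.ofReal_pos]; positivity) fun s hs => ?_
      have e1 : μ s = c⁻¹ * ν (s ∩ A n) := by simp [μ]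
      rw [e1, mul_comm, ← div_eq_mul_inv]
      refine ENNReal.div_le_of_le_mul' ?_
      rcases Set.eq_empty_or_nonempty (s ∩ A n) with h0 | ⟨x, hxs, hxA⟩
      · simp [h0]
      have hfin : ediam s ≠ ⊤ := ne_top_of_le_ne_top ENNReal.ofReal_ne_top hs
      have hlt : (ediam s).toReal < 1 / ((n : ℝ) + 1) := by
        have := ENNReal.toReal_mono ENNReal.ofReal_ne_top hs
        rw [ENNReal.toReal_ofReal (by positivity)] at this
        refine this.trans_lt ?_
        apply one_div_lt_one_div_of_lt <;> nlinarith [(Nat.cast_nonneg n : (0:ℝ) ≤ n)]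
      -- the bound is obtained for radii slightly above the diameter, which may be `0`
      have hev : ∀ᶠ r in 𝓝[>] (ediam s).toReal, ν (s ∩ A n) ≤ c * ENNReal.ofReal r ^ κ := by
        filter_upwards [Ioo_mem_nhdsGT hlt] with r hr
        have hr0 : 0 < r := ENNReal.toReal_nonneg.trans_lt hr.1
        refine le_trans (measure_mono ?_) (hxA r hr0 hr.2)
        rintro y ⟨hy, -⟩
        have : edist y x ≤ ediam s := Metric.edist_le_ediam_of_mem hy hxs
        rw [mem_closedBall, dist_edist]
        exact (ENNReal.toReal_mono hfin this).trans hr.1.le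
      have hlim : Tendsto (fun r : ℝ => c * ENNReal.ofReal r ^ κ) (𝓝[>] (ediam s).toReal)
          (𝓝 (c * ENNReal.ofReal (ediam s).toReal ^ κ)) := by
        refine ENNReal.Tendsto.const_mul ?_ (Or.inr hct)
        refine ((ENNReal.continuous_rpow_const.comp ENNReal.continuous_ofReal).tendsto _).mono_left
          nhdsWithin_le_nhds
      have := ge_of_tendsto hlim hev
      rwa [ENNReal.ofReal_toReal hfin] at this
    have h1 := hμ S
    rw [OuterMeasure.coe_mkMetric] at h1
    have h2 : (Measure.mkMetric (fun r => r ^ κ) : Measure X) S = 0 := hS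
    rw [h2] at h1
    have h3 : c⁻¹ * ν (S ∩ A n) = 0 := by
      have : μ S = c⁻¹ * ν (S ∩ A n) := by simp [μ]
      rw [← this]; exact le_antisymm h1 bot_le
    rcases mul_eq_zero.1 h3 with h | h
    · exact absurd h (ENNReal.inv_ne_zero.2 hct)
    · exact h
  have hsub : S ⊆ (⋃ n, S ∩ A n) ∪ (⋃ n, A n)ᶜ := by
    intro x hx
    by_cases hxA : x ∈ ⋃ n, A n
    · left; rw [← Set.inter_iUnion]; exact ⟨hx, hxA⟩
    · exact Or.inr hxA
  refine measure_mono_null hsub (measure_union_null (measure_iUnion_null key) hA)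

/-! ### Almost invariant measures -/

/-- Decay by the factor `s ^ κ` from each scale `r` to the scale `s * r` iterates to a power law. -/
lemma exists_rpow_bound_of_geometric {f : ℝ → ℝ} (hf : Monotone f) (hf0 : ∀ r, 0 ≤ f r)
    {s r₀ κ : ℝ} (hs0 : 0 < s) (hs1 : s < 1) (hr₀ : 0 < r₀) (hκ : 0 ≤ κ)
    (h : ∀ r, 0 < r → r < r₀ → f (s * r) ≤ s ^ κ * f r) :
    ∃ C r₁ : ℝ, 0 < r₁ ∧ ∀ r, 0 < r → r < r₁ → f r ≤ C * r ^ κ := by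
  set r₁ := r₀ / 2 with hr₁
  have hr₁0 : 0 < r₁ := by positivity
  have hiter : ∀ n : ℕ, f (s ^ n * r₁) ≤ (s ^ n) ^ κ * f r₁ := by
    intro n
    induction n with
    | zero => simp
    | succ n ih =>
      have h1 : s ^ n ≤ 1 := pow_le_one₀ hs0.le hs1.le
      have h2 : s ^ n * r₁ < r₀ := by nlinarith
      have h3 := h (s ^ n * r₁) (by positivity) h2
      calc f (s ^ (n + 1) * r₁) = f (s * (s ^ n * r₁)) := by ring_nf
        _ ≤ s ^ κ * f (s ^ n * r₁) := h3
        _ ≤ s ^ κ * ((s ^ n) ^ κ * f r₁) := by gcongr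
        _ = (s ^ (n + 1)) ^ κ * f r₁ := by
          rw [pow_succ', Real.mul_rpow hs0.le (by positivity)]; ring
  refine ⟨((s * r₁)⁻¹) ^ κ * f r₁, r₁, hr₁0, fun r hr hr' => ?_⟩
  obtain ⟨n, hn1, hn2⟩ := exists_nat_pow_near_of_lt_one (x := r / r₁) (y := s) (by positivity)
    ((div_le_one hr₁0).2 hr'.le) hs0 hs1
  have h1 : r ≤ s ^ n * r₁ := (div_le_iff₀ hr₁0).1 hn2
  have h2 : s ^ n ≤ (s * r₁)⁻¹ * r := by
    rw [pow_succ', lt_div_iff₀ hr₁0] at hn1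
    rw [inv_mul_eq_div, le_div_iff₀ (by positivity)]
    nlinarith
  calc f r ≤ f (s ^ n * r₁) := hf h1
    _ ≤ (s ^ n) ^ κ * f r₁ := hiter n
    _ ≤ ((s * r₁)⁻¹ * r) ^ κ * f r₁ := by
        gcongr; exact hf0 _
    _ = ((s * r₁)⁻¹) ^ κ * f r₁ * r ^ κ := by
        rw [Real.mul_rpow (by positivity) hr.le]; ring

section
variable {E : Type*} [NormedAddCommGroup E] [InnerProductSpace ℝ E]
  [MeasurableSpace E] [BorelSpace E]

/-- The measure `ν` is infinitesimally invariant at `x₀` in the directions `v i`: for test functions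
adapted to the ball `closedBall x₀ r`, that is with `|φ| ≤ 1` and `‖∇φ‖ ≤ L / r`, the distributional
derivative `∂_{v i} ν` tested against `φ` is `o(ν(closedBall x₀ r) / r)` as `r → 0`, for each fixed
`L`. -/
def AlmostInvariant {ι : Type*} (ν : Measure E) (x₀ : E) (v : ι → E) : Prop :=
  ∀ L : ℝ, 0 < L → ∀ ε : ℝ, 0 < ε → ∃ r₀ : ℝ, 0 < r₀ ∧ ∀ r, 0 < r → r < r₀ →
    ∀ φ : E → ℝ, ContDiff ℝ (⊤ : ℕ∞) φ → tsupport φ ⊆ closedBall x₀ r →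
      (∀ x, |φ x| ≤ 1) → (∀ x, ‖fderiv ℝ φ x‖ ≤ L / r) →
      ∀ i, |∫ x, fderiv ℝ φ x (v i) ∂ν| ≤ ε / r * ν.real (closedBall x₀ r)

/-- Translating a rescaled bump `y ↦ g ((y - x₀) / r)` by `r • ∑ b i • v i` with `|b i| ≤ 1` lowers
its `ν`-integral by at most `(card ι) ε ν(closedBall x₀ r)`, as long as the translates stay inside
the ball: the derivative of the integral along the segment of translates is a combination of the
integrals controlled by `P`. -/
lemma integral_translate_ge {ι : Type*} [Fintype ι] (ν : Measure E)
    [IsFiniteMeasure ν] (x₀ : E) (v : ι → E) {g : E → ℝ} (hg : ContDiff ℝ (⊤ : ℕ∞) g)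
    {L ε r σ : ℝ} (hr : 0 < r)
    (hsupp : tsupport g ⊆ closedBall 0 σ) (hg1 : ∀ x, |g x| ≤ 1) (hgL : ∀ x, ‖fderiv ℝ g x‖ ≤ L)
    (P : ∀ φ : E → ℝ, ContDiff ℝ (⊤ : ℕ∞) φ → tsupport φ ⊆ closedBall x₀ r →
      (∀ x, |φ x| ≤ 1) → (∀ x, ‖fderiv ℝ φ x‖ ≤ L / r) →
      ∀ i, |∫ x, fderiv ℝ φ x (v i) ∂ν| ≤ ε / r * ν.real (closedBall x₀ r))
    (b : ι → ℝ) (hb : ∀ i, |b i| ≤ 1) (hq : ‖∑ i, b i • v i‖ + σ ≤ 1) :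
    (∫ y, g (r⁻¹ • (y - x₀)) ∂ν) - Fintype.card ι * ε * ν.real (closedBall x₀ r) ≤
      ∫ y, g (r⁻¹ • (y - x₀) - ∑ i, b i • v i) ∂ν := by
  set q := ∑ i, b i • v i with hqdef
  have hL : 0 ≤ L := (norm_nonneg _).trans (hgL 0)
  have hgd : Differentiable ℝ g := hg.differentiable (by simp)
  have hgc : Continuous g := hg.continuous
  have hfc : Continuous (fderiv ℝ g) := hg.continuous_fderiv (by simp)
  have hder : ∀ θ : ℝ, HasDerivAt (fun θ : ℝ => ∫ y, g (r⁻¹ • (y - x₀) - θ • q) ∂ν)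
      (∫ y, fderiv ℝ g (r⁻¹ • (y - x₀) - θ • q) (-q) ∂ν) θ := by
    intro θ
    refine (hasDerivAt_integral_of_dominated_loc_of_deriv_le (s := Set.univ) (μ := ν)
      (F := fun θ y => g (r⁻¹ • (y - x₀) - θ • q))
      (F' := fun θ y => fderiv ℝ g (r⁻¹ • (y - x₀) - θ • q) (-q))
      (bound := fun _ => L * ‖q‖) Filter.univ_mem ?_ ?_ ?_ ?_ ?_ ?_).2
    · exact Eventually.of_forall fun θ => (by fun_prop : Continuous _).aestronglyMeasurable
    · refine Integrable.of_bound (by fun_prop : Continuous _).aestronglyMeasurable 1 ?_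
      exact Eventually.of_forall fun y => hg1 _
    · exact (by fun_prop : Continuous _).aestronglyMeasurable
    · refine Eventually.of_forall fun y θ _ => ?_
      refine (ContinuousLinearMap.le_opNorm _ _).trans ?_
      rw [norm_neg]
      gcongr
      exact hgL _
    · exact integrable_const _
    · refine Eventually.of_forall fun y θ _ => ?_
      have h1 : HasDerivAt (fun θ : ℝ => r⁻¹ • (y - x₀) - θ • q) (-q) θ := by
        simpa using ((hasDerivAt_id θ).smul_const q).const_sub (r⁻¹ • (y - x₀))
      exact (hgd _).hasFDerivAt.comp_hasDerivAt θ h1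
  have hbound : ∀ θ ∈ Set.Ico (0 : ℝ) 1,
      ‖∫ y, fderiv ℝ g (r⁻¹ • (y - x₀) - θ • q) (-q) ∂ν‖ ≤
        Fintype.card ι * ε * ν.real (closedBall x₀ r) := by
    intro θ hθ
    set φ : E → ℝ := fun y => g (r⁻¹ • (y - x₀) - θ • q) with hφ
    have hφs : ContDiff ℝ (⊤ : ℕ∞) φ := by fun_prop
    have hφd : ∀ y, fderiv ℝ φ y = r⁻¹ • fderiv ℝ g (r⁻¹ • (y - x₀) - θ • q) := by
      intro y
      have h1 : HasFDerivAt (fun y : E => r⁻¹ • (y - x₀) - θ • q)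
          (r⁻¹ • ContinuousLinearMap.id ℝ E) y :=
        (((hasFDerivAt_id y).sub_const x₀).const_smul r⁻¹).sub_const (θ • q)
      have h2 := ((hgd _).hasFDerivAt.comp y h1).fderiv
      refine h2.trans ?_
      ext w; simp
    have hφsupp : tsupport φ ⊆ closedBall x₀ r := by
      refine closure_minimal ?_ isClosed_closedBall
      intro y hy
      have h1 := hsupp (subset_tsupport _ hy : r⁻¹ • (y - x₀) - θ • q ∈ tsupport g)
      rw [mem_closedBall, dist_zero_right] at h1
      have h2 : ‖θ • q‖ ≤ ‖q‖ := by
        rw [norm_smul, Real.norm_of_nonneg hθ.1]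
        exact mul_le_of_le_one_left (norm_nonneg _) hθ.2.le
      have h3 : ‖r⁻¹ • (y - x₀)‖ ≤ 1 := by
        calc ‖r⁻¹ • (y - x₀)‖ = ‖(r⁻¹ • (y - x₀) - θ • q) + θ • q‖ := by simp
          _ ≤ _ := norm_add_le _ _
          _ ≤ 1 := by linarith
      rw [norm_smul, norm_inv, Real.norm_of_nonneg hr.le, inv_mul_eq_div, div_le_one hr] at h3
      rwa [mem_closedBall, dist_eq_norm]
    have hP := P φ hφs hφsupp (fun y => hg1 _) (fun y => by
      rw [hφd, norm_smul, norm_inv, Real.norm_of_nonneg hr.le, inv_mul_eq_div]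
      gcongr; exact hgL _)
    have hint : ∀ i, Integrable (fun y => fderiv ℝ φ y (v i)) ν := by
      intro i
      have hφc : Continuous (fderiv ℝ φ) := hφs.continuous_fderiv (by simp)
      refine Integrable.of_bound (by fun_prop : Continuous _).aestronglyMeasurable
        (r⁻¹ * L * ‖v i‖) (Eventually.of_forall fun y => ?_)
      refine (ContinuousLinearMap.le_opNorm _ _).trans ?_
      rw [hφd, norm_smul, norm_inv, Real.norm_of_nonneg hr.le]
      gcongr; exact hgL _
    have heq : (∫ y, fderiv ℝ g (r⁻¹ • (y - x₀) - θ • q) (-q) ∂ν) =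
        ∑ i, (-(r * b i)) * ∫ y, fderiv ℝ φ y (v i) ∂ν := by
      simp_rw [← integral_const_mul]
      rw [← integral_finsetSum _ fun i _ => (hint i).const_mul _]
      congr 1; ext y
      have hT : ∀ T : E →L[ℝ] ℝ, T (-q) = ∑ i, -T (b i • v i) := fun T => by
        rw [map_neg, hqdef, map_sum, Finset.sum_neg_distrib]
      rw [hT]
      refine Finset.sum_congr rfl fun i _ => ?_
      rw [hφd]
      simp only [map_smul, smul_eq_mul, _root_.smul_apply]
      field_simp
    rw [heq]
    refine (norm_sum_le _ _).trans ?_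
    have : ∀ i ∈ (Finset.univ : Finset ι), ‖(-(r * b i)) * ∫ y, fderiv ℝ φ y (v i) ∂ν‖ ≤
        ε * ν.real (closedBall x₀ r) := by
      intro i _
      rw [norm_mul, norm_neg, norm_mul, Real.norm_of_nonneg hr.le, Real.norm_eq_abs,
        Real.norm_eq_abs]
      calc r * |b i| * |∫ y, fderiv ℝ φ y (v i) ∂ν|
          ≤ r * 1 * (ε / r * ν.real (closedBall x₀ r)) := by
            gcongr
            · exact hb i
            · exact hP i
        _ = _ := by field_simp
    refine (Finset.sum_le_sum this).trans ?_
    simp [mul_assoc]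
  have := norm_image_sub_le_of_norm_deriv_le_segment_01'
    (fun θ _ => (hder θ).hasDerivWithinAt) hbound
  simp only [one_smul, zero_smul, sub_zero, Real.norm_eq_abs] at this
  linarith [(abs_le.1 this).1]

/-- If `ν` is almost invariant at `x₀` in `k = card ι` independent directions `v i`, then for every
`κ < k` some ratio `s < 1` gives `ν(B_{sr}) ≤ s^κ ν(B_r)` for all small `r`. Indeed `M ^ k` disjoint
translates of a bump equal to `1` on `B_{sr}` fit into `B_r` when `s` is comparable to `1 / M`, and
all of them have almost the same integral, so that `ν(B_{sr}) ≤ 2 M^{-k} ν(B_r)`. -/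
lemma exists_scale_decay [FiniteDimensional ℝ E] {ι : Type*} [Fintype ι] [DecidableEq ι]
    (ν : Measure E) [IsFiniteMeasure ν] (x₀ : E) (v : ι → E) (ℓ : ι → E →L[ℝ] ℝ)
    (hℓ : ∀ i x, |ℓ i x| ≤ ‖x‖) (hℓv : ∀ i j, ℓ i (v j) = if i = j then 1 else 0)
    (P : AlmostInvariant ν x₀ v) {κ : ℝ} (hκ' : κ < Fintype.card ι) :
    ∃ s r₀ : ℝ, 0 < s ∧ s < 1 ∧ 0 < r₀ ∧ ∀ r, 0 < r → r < r₀ →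
      ν.real (closedBall x₀ (s * r)) ≤ s ^ κ * ν.real (closedBall x₀ r) := by
  set k := Fintype.card ι with hk
  set A : ℝ := ∑ i, ‖v i‖ with hA
  have hA0 : 0 ≤ A := Finset.sum_nonneg fun i _ => norm_nonneg _
  -- `M` is so large that `2 M^{-k} ≤ s^κ` for the ratio `s = 1 / (4 (A + 1) M)` chosen below
  obtain ⟨M, hM1, hM⟩ : ∃ M : ℕ, 1 ≤ M ∧ 2 * (4 * (A + 1)) ^ κ ≤ (M : ℝ) ^ ((k : ℝ) - κ) := by
    have h1 : Tendsto (fun M : ℕ => (M : ℝ) ^ ((k : ℝ) - κ)) atTop atTop :=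
      (tendsto_rpow_atTop (by linarith)).comp tendsto_natCast_atTop_atTop
    obtain ⟨M, hM⟩ := ((eventually_ge_atTop 1).and
      (h1.eventually_ge_atTop (2 * (4 * (A + 1)) ^ κ))).exists
    exact ⟨M, hM⟩
  have hM0 : (1 : ℝ) ≤ M := by exact_mod_cast hM1
  set s : ℝ := 1 / (4 * (A + 1) * M) with hs
  have hs0 : 0 < s := by positivity
  have hsM : s * (4 * (A + 1) * M) = 1 := by rw [hs]; field_simp
  have hs4 : 4 * s * M ≤ 1 := by
    nlinarith [mul_nonneg (mul_nonneg hs0.le hA0) (by linarith : (0:ℝ) ≤ M)]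
  have hsA : 4 * s * M * A + 2 * s ≤ 1 := by
    have : 2 * s ≤ 4 * s * M := by nlinarith
    nlinarith
  have hs1 : s < 1 := by nlinarith
  -- the bump function at unit scale
  let g : ContDiffBump (0 : E) := ⟨s, 2 * s, hs0, by linarith⟩
  have hgs : ContDiff ℝ (⊤ : ℕ∞) g := g.contDiff
  have hg1 : ∀ x, |g x| ≤ 1 := fun x => by
    rw [abs_of_nonneg g.nonneg]; exact g.le_one
  obtain ⟨L, hL0, hL⟩ : ∃ L : ℝ, 0 < L ∧ ∀ x, ‖fderiv ℝ g x‖ ≤ L := by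
    obtain ⟨L, hL⟩ := (g.hasCompactSupport.fderiv ℝ).exists_bound_of_continuous
      (hgs.continuous_fderiv (by simp))
    exact ⟨max L 1, by positivity, fun x => (hL x).trans (le_max_left _ _)⟩
  set N : ℝ := (M : ℝ) ^ k with hN
  have hN0 : 0 < N := by positivity
  obtain ⟨r₀, hr₀, H⟩ := P L hL0 (1 / (N * (k + 1))) (by positivity)
  refine ⟨s, r₀, hs0, hs1, hr₀, fun r hr hrr => ?_⟩
  set V := ν.real (closedBall x₀ r) with hV
  have hV0 : 0 ≤ V := measureReal_nonneg
  -- the translation vectors form a grid of step `4 s`, twice the support radius of `g`; the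
  -- functionals `ℓ i` read off the coordinates and so separate the supports
  let b : (ι → Fin M) → ι → ℝ := fun j i => 4 * s * (j i : ℕ)
  have hb0 : ∀ j i, 0 ≤ b j i := fun j i => by positivity
  have hb : ∀ j i, b j i ≤ 4 * s * M := fun j i => by
    have : ((j i : ℕ) : ℝ) ≤ M := by exact_mod_cast (j i).2.le
    simp only [b]; gcongr
  have hbn : ∀ j, ‖∑ i, b j i • v i‖ + 2 * s ≤ 1 := by
    intro j
    have : ‖∑ i, b j i • v i‖ ≤ 4 * s * M * A := by
      rw [hA, Finset.mul_sum]
      refine (norm_sum_le _ _).trans (Finset.sum_le_sum fun i _ => ?_)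
      rw [norm_smul, Real.norm_of_nonneg (hb0 j i)]
      gcongr; exact hb j i
    linarith
  have hℓb : ∀ j i, ℓ i (∑ i', b j i' • v i') = b j i := by
    intro j i
    simp [map_sum, hℓv]
  set Φ : (ι → Fin M) → E → ℝ := fun j y => g (r⁻¹ • (y - x₀) - ∑ i, b j i • v i) with hΦ
  have hgc : Continuous g := g.continuous
  have hΦint : ∀ j, Integrable (Φ j) ν := fun j =>
    Integrable.of_bound (by fun_prop : Continuous _).aestronglyMeasurable 1
      (Eventually.of_forall fun y => hg1 _)
  -- lower bound for each translate
  have hlow : ∀ j, ν.real (closedBall x₀ (s * r)) - 1 / N * V ≤ ∫ y, Φ j y ∂ν := by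
    intro j
    have h1 := integral_translate_ge ν x₀ v hgs (L := L) (ε := 1 / (N * (k + 1))) (σ := 2 * s) hr
      (by rw [g.tsupport_eq]) hg1 hL (H r hr hrr) (b j)
      (fun i => by rw [abs_of_nonneg (hb0 j i)]; exact (hb j i).trans hs4) (hbn j)
    have h2 : ν.real (closedBall x₀ (s * r)) ≤ ∫ y, g (r⁻¹ • (y - x₀)) ∂ν := by
      rw [← integral_indicator_one isClosed_closedBall.measurableSet]
      refine integral_mono ?_ ?_ fun y => ?_
      · exact (integrable_const (1 : ℝ)).indicator isClosed_closedBall.measurableSet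
      · exact Integrable.of_bound (by fun_prop : Continuous _).aestronglyMeasurable 1
          (Eventually.of_forall fun y => hg1 _)
      · by_cases hy : y ∈ closedBall x₀ (s * r)
        swap
        · rw [Set.indicator_of_notMem hy]; exact g.nonneg
        rw [Set.indicator_of_mem hy]
        refine (g.one_of_mem_closedBall ?_).symm.le
        rw [mem_closedBall, dist_eq_norm] at hy
        rw [mem_closedBall, dist_zero_right, norm_smul, norm_inv, Real.norm_of_nonneg hr.le,
          inv_mul_eq_div, div_le_iff₀ hr]
        exact hy
    have h3 : (k : ℝ) * (1 / (N * (k + 1))) ≤ 1 / N := by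
      rw [mul_one_div, div_le_div_iff₀ (by positivity) hN0]
      nlinarith
    have h4 := mul_le_mul_of_nonneg_right h3 hV0
    linarith
  -- the translates have disjoint supports inside the ball
  have hpt : ∀ y, ∑ j, Φ j y ≤ (closedBall x₀ r).indicator 1 y := by
    intro y
    by_cases hex : ∃ j, Φ j y ≠ 0
    · obtain ⟨j, hj⟩ := hex
      have hmem : ∀ j, Φ j y ≠ 0 → ‖r⁻¹ • (y - x₀) - ∑ i, b j i • v i‖ < 2 * s := by
        intro j hj
        have : r⁻¹ • (y - x₀) - ∑ i, b j i • v i ∈ Function.support g := hj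
        rw [g.support_eq, mem_ball, dist_zero_right] at this
        exact this
      have huniq : ∀ j', j' ≠ j → Φ j' y = 0 := by
        intro j' hne
        by_contra hj'
        obtain ⟨i, hi⟩ := Function.ne_iff.1 hne
        have h1 := hmem j hj
        have h2 := hmem j' hj'
        have h3 : |b j i - b j' i| < 4 * s := by
          rw [← hℓb j i, ← hℓb j' i, ← map_sub]
          refine (hℓ _ _).trans_lt ?_
          calc ‖∑ i, b j i • v i - ∑ i, b j' i • v i‖
              = ‖(r⁻¹ • (y - x₀) - ∑ i, b j' i • v i) - (r⁻¹ • (y - x₀) - ∑ i, b j i • v i)‖ := by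
                congr 1; abel
            _ ≤ _ := norm_sub_le _ _
            _ < _ := by linarith
        have h4 : (1 : ℝ) ≤ |((j i : ℕ) : ℝ) - (j' i : ℕ)| := by
          have : ((j i : ℕ) : ℤ) - (j' i : ℕ) ≠ 0 := by
            intro h
            apply hi
            ext
            omega
          exact_mod_cast Int.one_le_abs this
        have h5 : b j i - b j' i = 4 * s * (((j i : ℕ) : ℝ) - (j' i : ℕ)) := by
          simp only [b]; ring
        rw [h5, abs_mul, abs_of_pos (by positivity : 0 < 4 * s)] at h3
        nlinarith
      rw [Finset.sum_eq_single j (fun j' _ h => huniq j' h) (by simp)]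
      have hy : y ∈ closedBall x₀ r := by
        have h1 := hmem j hj
        have h3 : ‖r⁻¹ • (y - x₀)‖ ≤ 1 := by
          calc ‖r⁻¹ • (y - x₀)‖
              = ‖(r⁻¹ • (y - x₀) - ∑ i, b j i • v i) + ∑ i, b j i • v i‖ := by simp
            _ ≤ _ := norm_add_le _ _
            _ ≤ 1 := by linarith [hbn j]
        rw [norm_smul, norm_inv, Real.norm_of_nonneg hr.le, inv_mul_eq_div, div_le_one hr] at h3
        rwa [mem_closedBall, dist_eq_norm]
      rw [Set.indicator_of_mem hy]
      exact g.le_one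
    · push Not at hex
      rw [Finset.sum_eq_zero fun j _ => hex j]
      exact Set.indicator_nonneg (fun _ _ => zero_le_one) _
  have hup : ∑ j, ∫ y, Φ j y ∂ν ≤ V := by
    rw [← integral_finsetSum _ fun j _ => hΦint j, hV,
      ← integral_indicator_one isClosed_closedBall.measurableSet]
    refine integral_mono (integrable_finsetSum _ fun j _ => hΦint j) ?_ hpt
    exact (integrable_const (1 : ℝ)).indicator isClosed_closedBall.measurableSet
  have hcount : N * (ν.real (closedBall x₀ (s * r)) - 1 / N * V) ≤ V := by
    refine le_trans ?_ hup
    refine le_trans ?_ (Finset.sum_le_sum fun j _ => hlow j)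
    rw [Finset.sum_const, Finset.card_univ, Fintype.card_fun, Fintype.card_fin, nsmul_eq_mul,
      Nat.cast_pow]
  have h2 : ν.real (closedBall x₀ (s * r)) ≤ 2 / N * V := by
    have e : N * (1 / N * V) = V := by field_simp
    rw [mul_sub, e] at hcount
    rw [div_mul_eq_mul_div (2 : ℝ) N V, le_div_iff₀ hN0]
    linarith
  refine h2.trans (mul_le_mul_of_nonneg_right ?_ hV0)
  have e1 : s ^ κ = ((4 * (A + 1)) ^ κ * (M : ℝ) ^ κ)⁻¹ := by
    rw [hs, one_div, Real.inv_rpow (by positivity), Real.mul_rpow (by positivity) (by positivity)]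
  have e2 : N = (M : ℝ) ^ ((k : ℝ) - κ) * (M : ℝ) ^ κ := by
    rw [← Real.rpow_add (by linarith), sub_add_cancel, Real.rpow_natCast]
  rw [e1, div_le_iff₀ hN0, inv_mul_eq_div, le_div_iff₀ (by positivity), e2]
  have := mul_le_mul_of_nonneg_right hM (by positivity : 0 ≤ (M : ℝ) ^ κ)
  linarith

lemma density_of_almostInvariant [FiniteDimensional ℝ E] {ι : Type*} [Fintype ι] [DecidableEq ι]
    (ν : Measure E) [IsFiniteMeasure ν] (x₀ : E) (v : ι → E) (ℓ : ι → E →L[ℝ] ℝ)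
    (hℓ : ∀ i x, |ℓ i x| ≤ ‖x‖) (hℓv : ∀ i j, ℓ i (v j) = if i = j then 1 else 0)
    (P : AlmostInvariant ν x₀ v) {κ : ℝ} (hκ : 0 ≤ κ) (hκ' : κ < Fintype.card ι) :
    ∃ C r₀ : ℝ, 0 < r₀ ∧ ∀ r, 0 < r → r < r₀ →
      ν (closedBall x₀ r) ≤ ENNReal.ofReal (C * r ^ κ) := by
  obtain ⟨s, r₀, hs0, hs1, hr₀, h⟩ := exists_scale_decay ν x₀ v ℓ hℓ hℓv P hκ'
  obtain ⟨C, r₁, hr₁, h1⟩ := exists_rpow_bound_of_geometric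
    (f := fun r => ν.real (closedBall x₀ r))
    (fun r r' hrr => measureReal_mono (closedBall_subset_closedBall hrr))
    (fun r => measureReal_nonneg) hs0 hs1 hr₀ hκ h
  refine ⟨C, r₁, hr₁, fun r hr hr' => ?_⟩
  rw [← ofReal_measureReal]
  exact ENNReal.ofReal_le_ofReal (h1 r hr hr')
end

/-! ### Measure forms at a Lebesgue point -/

/-- The index `t ∖ {i}` of the coefficients entering the `t`-component of an exterior derivative. -/
def FormIndex.erase {d m : ℕ} (t : FormIndex d (m + 1)) (i : {x // x ∈ t.1}) : FormIndex d m :=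
  ⟨t.1.erase i.1, by rw [Finset.card_erase_of_mem i.2, t.2]; rfl⟩

/-- `∑_{i ∈ t} (−1)^{#{j ∈ t : j < i}} ∫ ∂ᵢφ · G_{t∖{i}} dν`, which is minus the `t`-component of the
distribution `d(G ν)` evaluated at `φ`. -/
noncomputable def extPairing {d m : ℕ} (ν : Measure (EuclideanSpace ℝ (Fin d)))
    (G : EuclideanSpace ℝ (Fin d) → EuclideanSpace ℝ (FormIndex d m)) (t : FormIndex d (m + 1))
    (φ : EuclideanSpace ℝ (Fin d) → ℝ) : ℝ :=
  ∑ i ∈ t.1.attach, (-1 : ℝ) ^ (t.1.filter (fun j => j < i.1)).card *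
    ∫ x, fderiv ℝ φ x (EuclideanSpace.single i.1 1) * G x (t.erase i) ∂ν

/-- The vector `w` with `⟪ξ, w⟫ = (ξ ∧ g)_t` for all `ξ`: for a constant form `g`, the `t`-component
of `d(g ν)` is the directional derivative `∂_w ν`. -/
noncomputable def wedgeDir {d m : ℕ} (g : EuclideanSpace ℝ (FormIndex d m))
    (t : FormIndex d (m + 1)) : EuclideanSpace ℝ (Fin d) :=
  ∑ i ∈ t.1.attach, ((-1 : ℝ) ^ (t.1.filter (fun j => j < i.1)).card * g (t.erase i)) •
    EuclideanSpace.single i.1 (1 : ℝ)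

lemma wedgeDir_apply_of_notMem {d m : ℕ} (g : EuclideanSpace ℝ (FormIndex d m))
    (t : FormIndex d (m + 1)) {k : Fin d} (hk : k ∉ t.1) : wedgeDir g t k = 0 := by
  rw [wedgeDir, WithLp.ofLp_sum, Finset.sum_apply]
  refine Finset.sum_eq_zero fun i _ => ?_
  have : k ≠ i.1 := fun h => hk (h ▸ i.2)
  simp [this]

lemma wedgeDir_apply_of_mem {d m : ℕ} (g : EuclideanSpace ℝ (FormIndex d m))
    (t : FormIndex d (m + 1)) (k : {x // x ∈ t.1}) :
    wedgeDir g t k.1 = (-1 : ℝ) ^ (t.1.filter (fun j => j < k.1)).card * g (t.erase k) := by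
  rw [wedgeDir, WithLp.ofLp_sum, Finset.sum_apply, Finset.sum_eq_single k]
  · simp
  · intro i _ hi
    have : k.1 ≠ i.1 := fun h => hi (Subtype.ext h.symm)
    simp [this]
  · intro h; exact absurd (Finset.mem_attach _ _) h

/-- Freezing the coefficients: replacing `G` by the constant `g` in `extPairing` costs at most
`(m + 1) sup ‖∇φ‖ ∫_B ‖G - g‖ dν`. -/
lemma abs_integral_wedgeDir_le {d m : ℕ} (ν : Measure (EuclideanSpace ℝ (Fin d)))
    [IsFiniteMeasure ν] {G : EuclideanSpace ℝ (Fin d) → EuclideanSpace ℝ (FormIndex d m)}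
    (hG : Integrable G ν) (g : EuclideanSpace ℝ (FormIndex d m)) (t : FormIndex d (m + 1))
    {φ : EuclideanSpace ℝ (Fin d) → ℝ} (hφ : ContDiff ℝ (⊤ : ℕ∞) φ)
    {B : Set (EuclideanSpace ℝ (Fin d))} (hφB : tsupport φ ⊆ B) {K : ℝ}
    (hK : ∀ x, ‖fderiv ℝ φ x‖ ≤ K) :
    |∫ x, fderiv ℝ φ x (wedgeDir g t) ∂ν| ≤
      |extPairing ν G t φ| + (m + 1) * (K * ∫ x in B, ‖G x - g‖ ∂ν) := by
  have hK0 : 0 ≤ K := (norm_nonneg _).trans (hK 0)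
  have hfc : Continuous (fderiv ℝ φ) := hφ.continuous_fderiv (by simp)
  have hd : ∀ (i : Fin d) x, ‖fderiv ℝ φ x (EuclideanSpace.single i 1)‖ ≤ K := fun i x => by
    refine (ContinuousLinearMap.le_opNorm _ _).trans ?_
    simpa using hK x
  have hGi : ∀ s, Integrable (fun x => G x s) ν := fun s =>
    (EuclideanSpace.proj (𝕜 := ℝ) s).integrable_comp hG
  have hi1 : ∀ (i : Fin d), Integrable (fun x => fderiv ℝ φ x (EuclideanSpace.single i 1)) ν :=
    fun i => Integrable.of_bound (by fun_prop : Continuous _).aestronglyMeasurable K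
      (Eventually.of_forall (hd i))
  have hi2 : ∀ (i : Fin d) s,
      Integrable (fun x => fderiv ℝ φ x (EuclideanSpace.single i 1) * G x s) ν := fun i s =>
    (hGi s).bdd_mul (hi1 i).aestronglyMeasurable (Eventually.of_forall (hd i))
  have hvanish : ∀ x ∉ B, fderiv ℝ φ x = 0 := fun x hx =>
    image_eq_zero_of_notMem_tsupport fun h => hx (hφB (tsupport_fderiv_subset ℝ h))
  have hdiff : (∫ x, fderiv ℝ φ x (wedgeDir g t) ∂ν) = extPairing ν G t φ -
      ∑ i ∈ t.1.attach, (-1 : ℝ) ^ (t.1.filter (fun j => j < i.1)).card *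
        ∫ x, fderiv ℝ φ x (EuclideanSpace.single i.1 1) * (G x (t.erase i) - g (t.erase i)) ∂ν := by
    rw [extPairing, ← Finset.sum_sub_distrib]
    simp_rw [wedgeDir, map_sum]
    rw [integral_finsetSum]
    · refine Finset.sum_congr rfl fun i _ => ?_
      simp_rw [mul_sub, map_smul, smul_eq_mul]
      rw [integral_const_mul, integral_sub (hi2 _ _) ((hi1 _).mul_const _), integral_mul_const]
      ring
    · intro i _
      simp_rw [map_smul, smul_eq_mul]
      exact (hi1 _).const_mul _
  have hterm : ∀ i ∈ t.1.attach, |(-1 : ℝ) ^ (t.1.filter (fun j => j < i.1)).card *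
      ∫ x, fderiv ℝ φ x (EuclideanSpace.single i.1 1) * (G x (t.erase i) - g (t.erase i)) ∂ν| ≤
        K * ∫ x in B, ‖G x - g‖ ∂ν := by
    intro i _
    rw [abs_mul, abs_pow, abs_neg, abs_one, one_pow, one_mul,
      ← setIntegral_eq_integral_of_forall_compl_eq_zero (s := B)
        (fun x hx => by rw [hvanish x hx]; simp), ← integral_const_mul]
    refine (abs_integral_le_integral_abs).trans ?_
    refine integral_mono_of_nonneg (Eventually.of_forall fun x => abs_nonneg _) ?_
      (Eventually.of_forall fun x => ?_)
    · exact ((hG.sub (integrable_const g)).norm.const_mul K).integrableOn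
    · simp only
      rw [abs_mul]
      have h1 : |G x (t.erase i) - g (t.erase i)| ≤ ‖G x - g‖ := by
        simpa using PiLp.norm_apply_le (G x - g) (t.erase i)
      have h2 : |fderiv ℝ φ x (EuclideanSpace.single i.1 1)| ≤ K := hd i.1 x
      gcongr
  rw [hdiff]
  refine (abs_sub _ _).trans ?_
  gcongr
  refine (Finset.abs_sum_le_sum_abs _ _).trans ((Finset.sum_le_sum hterm).trans ?_)
  rw [Finset.sum_const, Finset.card_attach, t.2, nsmul_eq_mul]
  push_cast
  exact le_rfl

/-- At a Lebesgue point `x₀` of `G` where `dω` has finite upper density with respect to `ν`, the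
measure `ν` satisfies `ν(B_r) ≤ C r^κ`. The coefficient `G x₀ s` being nonzero for some `s`, each of
the `d - m` indices `i ∉ s` gives a direction `v i`, namely `wedgeDir (G x₀) (s ∪ {i})` normalized to
have `i`-th coordinate `1`; its other coordinates outside `s` vanish, so these directions are
independent, and `ν` is almost invariant along each of them. -/
lemma density_of_form {d m : ℕ} (ν : Measure (EuclideanSpace ℝ (Fin d))) [IsFiniteMeasure ν]
    {G : EuclideanSpace ℝ (Fin d) → EuclideanSpace ℝ (FormIndex d m)} (hG : Integrable G ν)
    (x₀ : EuclideanSpace ℝ (Fin d)) (hx₀ : ‖G x₀‖ = 1)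
    (hLeb : ∀ ε : ℝ, 0 < ε → ∀ᶠ r in 𝓝[>] (0 : ℝ),
      ∫ x in closedBall x₀ r, ‖G x - G x₀‖ ∂ν ≤ ε * ν.real (closedBall x₀ r))
    (hT : ∀ t : FormIndex d (m + 1), ∃ C : ℝ, ∀ᶠ r in 𝓝[>] (0 : ℝ),
      ∀ φ : EuclideanSpace ℝ (Fin d) → ℝ, ContDiff ℝ (⊤ : ℕ∞) φ → tsupport φ ⊆ closedBall x₀ r →
        (∀ x, |φ x| ≤ 1) → |extPairing ν G t φ| ≤ C * ν.real (closedBall x₀ r))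
    {κ : ℝ} (hκ : 0 ≤ κ) (hκ' : κ < (d : ℝ) - m) :
    ∃ C r₀ : ℝ, 0 < r₀ ∧ ∀ r, 0 < r → r < r₀ →
      ν (closedBall x₀ r) ≤ ENNReal.ofReal (C * r ^ κ) := by
  obtain ⟨s, hs⟩ : ∃ s, G x₀ s ≠ 0 := by
    by_contra! h
    have : G x₀ = 0 := by ext s; simpa using h s
    simp [this] at hx₀
  set c := G x₀ s with hc
  let t : {i // i ∉ s.1} → FormIndex d (m + 1) := fun i =>
    ⟨insert i.1 s.1, by rw [Finset.card_insert_of_notMem i.2, s.2]⟩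
  have hit : ∀ i, i.1 ∈ (t i).1 := fun i => Finset.mem_insert_self _ _
  have herase : ∀ i, (t i).erase ⟨i.1, hit i⟩ = s := fun i =>
    Subtype.ext (Finset.erase_insert i.2)
  let a : {i // i ∉ s.1} → ℝ := fun i =>
    (-1 : ℝ) ^ ((t i).1.filter (fun j => j < i.1)).card * c
  have ha : ∀ i, |a i| = |c| := fun i => by simp [a, abs_mul]
  have ha0 : ∀ i, a i ≠ 0 := fun i => by
    rw [← abs_pos, ha]; exact abs_pos.2 hs
  let v : {i // i ∉ s.1} → EuclideanSpace ℝ (Fin d) := fun i => (a i)⁻¹ • wedgeDir (G x₀) (t i)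
  have hv : ∀ i j : {i // i ∉ s.1}, EuclideanSpace.proj (𝕜 := ℝ) i.1 (v j) =
      if i = j then 1 else 0 := by
    intro i j
    split_ifs with hij
    · subst hij
      have := wedgeDir_apply_of_mem (G x₀) (t i) ⟨i.1, hit i⟩
      rw [herase] at this
      change (a i)⁻¹ * wedgeDir (G x₀) (t i) i.1 = 1
      rw [this]
      exact inv_mul_cancel₀ (ha0 i)
    · change (a j)⁻¹ * wedgeDir (G x₀) (t j) i.1 = 0
      rw [wedgeDir_apply_of_notMem, mul_zero]
      intro h
      rcases Finset.mem_insert.1 h with h | h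
      · exact hij (Subtype.ext h)
      · exact i.2 h
  have hcard : (Fintype.card {i // i ∉ s.1} : ℝ) = (d : ℝ) - m := by
    have h1 : Fintype.card {i // i ∉ s.1} = d - m := by
      rw [Fintype.card_subtype_compl]
      simp [s.2]
    have h2 : m ≤ d := by
      have := Finset.card_le_univ s.1
      simpa [s.2] using this
    rw [h1, Nat.cast_sub h2]
  have hcpos : 0 < |c| := abs_pos.2 hs
  refine density_of_almostInvariant ν x₀ v (fun i => EuclideanSpace.proj (𝕜 := ℝ) i.1)
    (fun i x => by simpa using PiLp.norm_apply_le x i.1) hv ?_ hκ (by rw [hcard]; exact hκ')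
  intro L hL ε hε
  choose C hC using hT
  have hev : ∀ᶠ r in 𝓝[>] (0 : ℝ), ∀ φ : EuclideanSpace ℝ (Fin d) → ℝ, ContDiff ℝ (⊤ : ℕ∞) φ →
      tsupport φ ⊆ closedBall x₀ r → (∀ x, |φ x| ≤ 1) → (∀ x, ‖fderiv ℝ φ x‖ ≤ L / r) →
        ∀ i, |∫ x, fderiv ℝ φ x (v i) ∂ν| ≤ ε / r * ν.real (closedBall x₀ r) := by
    -- the two contributions to the error below are each at most half of the allowance
    have h1 : ∀ᶠ r in 𝓝[>] (0 : ℝ), ∀ i, C (t i) * r ≤ |c| * ε / 2 := by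
      rw [Filter.eventually_all]
      intro i
      have : Tendsto (fun r : ℝ => C (t i) * r) (𝓝[>] 0) (𝓝 (C (t i) * 0)) :=
        ((continuous_const.mul continuous_id).tendsto 0).mono_left nhdsWithin_le_nhds
      rw [mul_zero] at this
      exact this.eventually_le_const (by positivity)
    have h2 := hLeb (|c| * ε / (2 * ((m + 1) * L))) (by positivity)
    have h3 : ∀ᶠ r in 𝓝[>] (0 : ℝ), ∀ i, _ := Filter.eventually_all.2 fun i => hC (t i)
    filter_upwards [h1, h2, h3, self_mem_nhdsWithin] with r h1 h2 h3 hr φ hφ hsupp hφ1 hφL i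
    have hr : 0 < r := hr
    set V := ν.real (closedBall x₀ r) with hV
    have hV0 : 0 ≤ V := measureReal_nonneg
    have h4 := abs_integral_wedgeDir_le ν hG (G x₀) (t i) hφ hsupp hφL
    have h5 := h3 i φ hφ hsupp hφ1
    have h6 : (∫ x, fderiv ℝ φ x (v i) ∂ν) =
        (a i)⁻¹ * ∫ x, fderiv ℝ φ x (wedgeDir (G x₀) (t i)) ∂ν := by
      rw [← integral_const_mul]
      simp only [v, map_smul, smul_eq_mul]
    rw [h6, abs_mul, abs_inv, ha, inv_mul_le_iff₀ hcpos]
    calc |∫ x, fderiv ℝ φ x (wedgeDir (G x₀) (t i)) ∂ν|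
        ≤ C (t i) * V + (m + 1) * (L / r * (|c| * ε / (2 * ((m + 1) * L)) * V)) := by
          refine h4.trans (add_le_add h5 ?_)
          gcongr
      _ = (C (t i) * r + |c| * ε / 2) / r * V := by field_simp
      _ ≤ (|c| * ε / 2 + |c| * ε / 2) / r * V := by
          gcongr
          exact h1 i
      _ = |c| * (ε / r * V) := by field_simp; ring
  obtain ⟨r₀, hr₀, h⟩ := mem_nhdsGT_iff_exists_Ioo_subset.1 hev
  exact ⟨r₀, hr₀, fun r hr hr' => h ⟨hr, hr'⟩⟩

/-! ### Local integrability of the coefficients of `dω`, and differentiation of measures -/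

lemma integrableAtFilter_of_mul {E : Type*} [TopologicalSpace E] [MeasurableSpace E]
    [OpensMeasurableSpace E] {ρ : Measure E} {f φ : E → ℝ}
    (hf : AEStronglyMeasurable f ρ) (hφ : Continuous φ) {x : E} (hx : φ x ≠ 0)
    (hint : Integrable (fun y => φ y * f y) ρ) : IntegrableAtFilter f (𝓝 x) ρ := by
  have hpos : 0 < |φ x| := abs_pos.2 hx
  have hU : IsOpen {y | |φ x| / 2 < |φ y|} := isOpen_lt continuous_const hφ.abs
  refine ⟨_, hU.mem_nhds (by simp only [Set.mem_ofPred_eq]; linarith), ?_⟩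
  refine Integrable.mono' ((hint.norm.const_mul (2 / |φ x|)).integrableOn) hf.restrict ?_
  refine (ae_restrict_iff' hU.measurableSet).2 (Eventually.of_forall fun y hy => ?_)
  have hy : |φ x| / 2 < |φ y| := hy
  rw [norm_mul, Real.norm_eq_abs, Real.norm_eq_abs, div_mul_eq_mul_div, le_div_iff₀ hpos]
  nlinarith [abs_nonneg (f y)]

section
variable {E : Type*} [NormedAddCommGroup E] [InnerProductSpace ℝ E] [FiniteDimensional ℝ E]
  [MeasurableSpace E] [BorelSpace E]

/-- Let `T` be an additive functional on test functions given by the Bochner integrals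
`∫ φ f dρ`, where `f` is not assumed locally integrable, so that some of these integrals may take
the default value `0`. Either `f` is locally integrable on `Ω`, or `T = 0`: if `f` is not integrable
near `x`, every `φ` with `φ x ≠ 0` has `T φ = 0`, and any other `φ` is a difference of two such
functions. -/
lemma integrable_or_eq_zero {Ω : Set E} (hΩ : IsOpen Ω) {ρ : Measure E} {f : E → ℝ}
    (hf : AEStronglyMeasurable f ρ) {T : (E → ℝ) → ℝ}
    (hadd : ∀ φ ψ : E → ℝ, ContDiff ℝ (⊤ : ℕ∞) φ → HasCompactSupport φ → tsupport φ ⊆ Ω →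
      ContDiff ℝ (⊤ : ℕ∞) ψ → HasCompactSupport ψ → tsupport ψ ⊆ Ω → T (φ + ψ) = T φ + T ψ)
    (hT : ∀ φ : E → ℝ, ContDiff ℝ (⊤ : ℕ∞) φ → HasCompactSupport φ → tsupport φ ⊆ Ω →
      T φ = ∫ x, φ x * f x ∂ρ) :
    (∀ x ∈ Ω, IntegrableAtFilter f (𝓝 x) ρ) ∨
      ∀ φ : E → ℝ, ContDiff ℝ (⊤ : ℕ∞) φ → HasCompactSupport φ → tsupport φ ⊆ Ω → T φ = 0 := by
  by_cases h : ∀ x ∈ Ω, IntegrableAtFilter f (𝓝 x) ρ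
  · exact Or.inl h
  right
  push Not at h
  obtain ⟨x, hxΩ, hx⟩ := h
  -- if `φ x ≠ 0`, then `φ f` is not integrable and its Bochner integral is `0` by convention
  have hzero : ∀ φ : E → ℝ, ContDiff ℝ (⊤ : ℕ∞) φ → HasCompactSupport φ → tsupport φ ⊆ Ω →
      φ x ≠ 0 → T φ = 0 := by
    intro φ hφ hφc hφΩ hφx
    rw [hT φ hφ hφc hφΩ]
    exact integral_undef fun hint => hx (integrableAtFilter_of_mul hf hφ.continuous hφx hint)
  intro φ hφ hφc hφΩ
  by_cases hφx : φ x = 0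
  swap
  · exact hzero φ hφ hφc hφΩ hφx
  obtain ⟨R, hR, hRΩ⟩ := Metric.nhds_basis_closedBall.mem_iff.1 (hΩ.mem_nhds hxΩ)
  let g : ContDiffBump x := ⟨R / 2, R, by positivity, by linarith⟩
  have hgs : ContDiff ℝ (⊤ : ℕ∞) g := g.contDiff
  have hgx : g x = 1 := g.one_of_mem_closedBall (mem_closedBall_self (by positivity))
  have hgΩ : tsupport g ⊆ Ω := by rw [g.tsupport_eq]; exact hRΩ
  have h1 := hzero g hgs g.hasCompactSupport hgΩ (by rw [hgx]; exact one_ne_zero)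
  have h2 := hzero (φ + g) (hφ.add hgs) (hφc.add g.hasCompactSupport)
    ((tsupport_add φ g).trans (Set.union_subset hφΩ hgΩ)) (by simp [hφx, hgx])
  rw [hadd φ g hφ hφc hφΩ hgs g.hasCompactSupport hgΩ, h1, add_zero] at h2
  exact h2

/-- At `ν`-almost every point the upper density of `lam` with respect to `ν` is finite. -/
lemma ae_eventually_measureReal_le (lam ν : Measure E) [IsFiniteMeasure lam] [IsFiniteMeasure ν] :
    ∀ᵐ x ∂ν, ∃ C : ℝ, ∀ᶠ r in 𝓝[>] (0 : ℝ),
      lam.real (closedBall x r) ≤ C * ν.real (closedBall x r) := by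
  filter_upwards [Besicovitch.ae_tendsto_rnDeriv lam ν, lam.rnDeriv_lt_top ν] with x hx hlt
  obtain ⟨C, hC1, hC2⟩ := ENNReal.lt_iff_exists_nnreal_btwn.1 hlt
  refine ⟨C, ?_⟩
  filter_upwards [hx.eventually_lt_const hC1] with r hr
  have h1 := (ENNReal.div_le_iff_le_mul (Or.inr ENNReal.coe_ne_top)
    (Or.inl (measure_ne_top _ _))).1 hr.le
  have h2 := ENNReal.toReal_mono (ENNReal.mul_ne_top ENNReal.coe_ne_top (measure_ne_top _ _)) h1
  simpa [Measure.real] using h2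

/-- `ν`-almost every point is a Lebesgue point of `G`. -/
lemma ae_eventually_integral_le {F : Type*} [NormedAddCommGroup F] (ν : Measure E)
    [IsFiniteMeasure ν] {G : E → F} (hG : Integrable G ν) :
    ∀ᵐ x ∂ν, ∀ ε : ℝ, 0 < ε → ∀ᶠ r in 𝓝[>] (0 : ℝ),
      ∫ y in closedBall x r, ‖G y - G x‖ ∂ν ≤ ε * ν.real (closedBall x r) := by
  filter_upwards [(Besicovitch.vitaliFamily ν).ae_tendsto_lintegral_enorm_sub_div_of_integrable hG]
    with x hx ε hε
  have hx' := hx.comp (Besicovitch.tendsto_filterAt ν x)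
  filter_upwards [hx'.eventually_lt_const (ENNReal.ofReal_pos.2 hε)] with r hr
  have h1 := (ENNReal.div_le_iff_le_mul (Or.inr ENNReal.ofReal_ne_top)
    (Or.inl (measure_ne_top _ _))).1 hr.le
  have h2 := ENNReal.toReal_mono (ENNReal.mul_ne_top ENNReal.ofReal_ne_top (measure_ne_top _ _)) h1
  rw [ENNReal.toReal_mul, ENNReal.toReal_ofReal hε.le] at h2
  have h3 : AEStronglyMeasurable (fun y => G y - G x) (ν.restrict (closedBall x r)) :=
    (hG.sub (integrable_const (G x))).aestronglyMeasurable.restrict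
  rw [integral_norm_eq_lintegral_enorm h3]
  exact h2

end

lemma abs_integral_mul_le {E : Type*} [TopologicalSpace E] [MeasurableSpace E] {ρ : Measure E} {f φ : E → ℝ} {K B : Set E} (hBK : B ⊆ K)
    (hB : MeasurableSet B) (hf : IntegrableOn f K ρ) (hφB : tsupport φ ⊆ B)
    (hφ1 : ∀ x, |φ x| ≤ 1) :
    |∫ x, φ x * f x ∂ρ| ≤ ((ρ.restrict K).withDensity fun x => ‖f x‖ₑ).real B := by
  have hfin : IsFiniteMeasure ((ρ.restrict K).withDensity fun x => ‖f x‖ₑ) :=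
    isFiniteMeasure_withDensity hf.2.ne
  have h1 : ‖∫ x, φ x * f x ∂ρ‖ₑ ≤ ((ρ.restrict K).withDensity fun x => ‖f x‖ₑ) B := by
    rw [withDensity_apply _ hB, Measure.restrict_restrict hB, Set.inter_eq_left.2 hBK,
      ← lintegral_indicator hB]
    refine (enorm_integral_le_lintegral_enorm _).trans (lintegral_mono fun x => ?_)
    by_cases hx : x ∈ B
    · rw [Set.indicator_of_mem hx, enorm_mul]
      refine mul_le_of_le_one_left' ?_
      rw [← ofReal_norm, Real.norm_eq_abs]
      exact ENNReal.ofReal_le_one.2 (hφ1 x)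
    · have : φ x = 0 := image_eq_zero_of_notMem_tsupport fun h => hx (hφB h)
      simp [this]
  have h2 := ENNReal.toReal_mono (measure_ne_top _ _) h1
  simpa [Measure.real] using h2

section
variable {d m : ℕ}

lemma extPairing_restrict (ν : Measure (EuclideanSpace ℝ (Fin d)))
    (G : EuclideanSpace ℝ (Fin d) → EuclideanSpace ℝ (FormIndex d m)) (t : FormIndex d (m + 1))
    {φ : EuclideanSpace ℝ (Fin d) → ℝ} {U : Set (EuclideanSpace ℝ (Fin d))}
    (hφU : tsupport φ ⊆ U) : extPairing (ν.restrict U) G t φ = extPairing ν G t φ := by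
  refine Finset.sum_congr rfl fun i _ => ?_
  rw [setIntegral_eq_integral_of_forall_compl_eq_zero]
  intro x hx
  rw [image_eq_zero_of_notMem_tsupport fun h => hx (hφU (tsupport_fderiv_subset ℝ h))]
  simp

lemma integrable_fderiv_mul {Ω : Set (EuclideanSpace ℝ (Fin d))}
    {ν : Measure (EuclideanSpace ℝ (Fin d))}
    (hνloc : ∀ K : Set (EuclideanSpace ℝ (Fin d)), K ⊆ Ω → IsCompact K → ν K < ⊤)
    {G : EuclideanSpace ℝ (Fin d) → EuclideanSpace ℝ (FormIndex d m)}
    (hGm : AEStronglyMeasurable G ν) (hGnorm : ∀ᵐ x ∂ν, ‖G x‖ = 1)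
    {φ : EuclideanSpace ℝ (Fin d) → ℝ} (hφ : ContDiff ℝ (⊤ : ℕ∞) φ) (hφc : HasCompactSupport φ)
    (hφΩ : tsupport φ ⊆ Ω) (e : EuclideanSpace ℝ (Fin d)) (s : FormIndex d m) :
    Integrable (fun x => fderiv ℝ φ x e * G x s) ν := by
  have hfc : Continuous (fderiv ℝ φ) := hφ.continuous_fderiv (by simp)
  obtain ⟨L, hL⟩ := (hφc.fderiv ℝ).exists_bound_of_continuous hfc
  have hL0 : 0 ≤ L := (norm_nonneg _).trans (hL 0)
  rw [← integrableOn_iff_integrable_of_support_subset (s := tsupport φ)]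
  · have : IsFiniteMeasure (ν.restrict (tsupport φ)) :=
      ⟨by rw [Measure.restrict_apply_univ]; exact hνloc _ hφΩ hφc⟩
    refine Integrable.of_bound (C := L * ‖e‖ * 1) ?_ (ae_restrict_of_ae ?_)
    · refine ((by fun_prop : Continuous fun x => fderiv ℝ φ x e).aestronglyMeasurable.mul ?_).restrict
      exact (EuclideanSpace.proj (𝕜 := ℝ) s).continuous.comp_aestronglyMeasurable hGm
    · filter_upwards [hGnorm] with x hx
      rw [norm_mul]
      have h1 : ‖G x s‖ ≤ 1 := hx ▸ PiLp.norm_apply_le (G x) s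
      have h2 : ‖fderiv ℝ φ x e‖ ≤ L * ‖e‖ :=
        (ContinuousLinearMap.le_opNorm _ _).trans (by gcongr; exact hL x)
      gcongr
  · intro x hx
    by_contra h
    refine hx ?_
    simp only
    rw [image_eq_zero_of_notMem_tsupport fun h' => h (tsupport_fderiv_subset ℝ h')]
    simp

/-- Additivity needs the integrability of the products `∂ᵢφ · G_s`, which holds because `|G| = 1` and
`ν` is finite on the compact set `tsupport φ`. -/
lemma extPairing_add {Ω : Set (EuclideanSpace ℝ (Fin d))}
    {ν : Measure (EuclideanSpace ℝ (Fin d))}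
    (hνloc : ∀ K : Set (EuclideanSpace ℝ (Fin d)), K ⊆ Ω → IsCompact K → ν K < ⊤)
    {G : EuclideanSpace ℝ (Fin d) → EuclideanSpace ℝ (FormIndex d m)}
    (hGm : AEStronglyMeasurable G ν) (hGnorm : ∀ᵐ x ∂ν, ‖G x‖ = 1) (t : FormIndex d (m + 1))
    {φ ψ : EuclideanSpace ℝ (Fin d) → ℝ} (hφ : ContDiff ℝ (⊤ : ℕ∞) φ) (hφc : HasCompactSupport φ)
    (hφΩ : tsupport φ ⊆ Ω) (hψ : ContDiff ℝ (⊤ : ℕ∞) ψ) (hψc : HasCompactSupport ψ)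
    (hψΩ : tsupport ψ ⊆ Ω) :
    extPairing ν G t (φ + ψ) = extPairing ν G t φ + extPairing ν G t ψ := by
  rw [extPairing, extPairing, extPairing, ← Finset.sum_add_distrib]
  refine Finset.sum_congr rfl fun i _ => ?_
  rw [← mul_add, ← integral_add (integrable_fderiv_mul hνloc hGm hGnorm hφ hφc hφΩ _ _)
    (integrable_fderiv_mul hνloc hGm hGnorm hψ hψc hψΩ _ _)]
  congr 2; ext x
  rw [fderiv_add (hφ.differentiable (by simp) x) (hψ.differentiable (by simp) x), _root_.add_apply,
    add_mul]
end

/-! ### Conclusion -/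

/-- **Dimension bound for measure differential forms.** Let `ω = G ν` (polar decomposition,
`ν = |ω|`) be a `⋀^m ℝ^d`-valued Radon measure on the open set `Ω ⊆ ℝ^d`, written in coordinates
`G x ⟨s, _⟩` with respect to the basis `dx_{i₁} ∧ ⋯ ∧ dx_{i_m}` (`s = {i₁ < ⋯ < i_m}`), and
suppose its exterior derivative `dω` is representable by a `⋀^{m+1} ℝ^d`-valued Radon measure
`η = H ρ` on `Ω`: for every `(m+1)`-index `t` and every smooth compactly supported `φ`,
`−∑_{i ∈ t} (−1)^{#{j ∈ t : j < i}} ∫ ∂ᵢφ · ω_{t∖{i}} = ∫ φ · η_t`.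
Then `|ω| ≪ ℋ^κ` for every `0 ≤ κ < d − m`; in particular `dim_ℋ |ω| ≥ d − m`. -/
theorem measure_differential_form_dimension_bound
    {d m : ℕ} (hm : m ≤ d - 1) (hd : 1 ≤ d)
    (Ω : Set (EuclideanSpace ℝ (Fin d))) (hΩ : IsOpen Ω)
    -- `ν = |ω|` is a Radon measure on `Ω`, `G` the polar of `ω`:
    (ν : Measure (EuclideanSpace ℝ (Fin d)))
    (hνloc : ∀ K : Set (EuclideanSpace ℝ (Fin d)), K ⊆ Ω → IsCompact K → ν K < ⊤)
    (hνsupp : ν Ωᶜ = 0)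
    (G : EuclideanSpace ℝ (Fin d) → EuclideanSpace ℝ (FormIndex d m))
    (hGm : AEStronglyMeasurable G ν) (hGnorm : ∀ᵐ x ∂ν, ‖G x‖ = 1)
    -- `η = H ρ` is a `⋀^{m+1} ℝ^d`-valued Radon measure on `Ω`:
    (ρ : Measure (EuclideanSpace ℝ (Fin d)))
    (hρloc : ∀ K : Set (EuclideanSpace ℝ (Fin d)), K ⊆ Ω → IsCompact K → ρ K < ⊤)
    (H : EuclideanSpace ℝ (Fin d) → EuclideanSpace ℝ (FormIndex d (m + 1)))
    (hHm : AEStronglyMeasurable H ρ)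
    -- `dω = η` in the sense of distributions on `Ω`:
    (hdω : ∀ (t : Finset (Fin d)) (ht : t.card = m + 1),
      ∀ φ : EuclideanSpace ℝ (Fin d) → ℝ,
        ContDiff ℝ (⊤ : ℕ∞) φ → HasCompactSupport φ → tsupport φ ⊆ Ω →
        (-∑ i ∈ t.attach, (-1 : ℝ) ^ (t.filter (fun j => j < i.1)).card *
            ∫ x, fderiv ℝ φ x (EuclideanSpace.single i.1 1) *
              G x (⟨t.erase i.1, by rw [Finset.card_erase_of_mem i.2, ht]; rfl⟩ : FormIndex d m) ∂ν)
          = ∫ x, φ x * H x (⟨t, ht⟩ : FormIndex d (m + 1)) ∂ρ) :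
    ∀ κ : ℝ, 0 ≤ κ → κ < (d : ℝ) - m → ν ≪ μH[κ] := by
  intro κ hκ hκ'
  -- each coefficient of `η` is locally integrable, or the corresponding component of `dω` vanishes
  have hdich : ∀ t : FormIndex d (m + 1),
      (∀ x ∈ Ω, IntegrableAtFilter (fun x => H x t) (𝓝 x) ρ) ∨
        ∀ φ : EuclideanSpace ℝ (Fin d) → ℝ, ContDiff ℝ (⊤ : ℕ∞) φ → HasCompactSupport φ →
          tsupport φ ⊆ Ω → -extPairing ν G t φ = 0 := by
    intro t
    refine integrable_or_eq_zero (T := fun φ => -extPairing ν G t φ) hΩ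
      ((EuclideanSpace.proj (𝕜 := ℝ) t).continuous.comp_aestronglyMeasurable hHm) ?_ ?_
    · intro φ ψ hφ hφc hφΩ hψ hψc hψΩ
      rw [extPairing_add hνloc hGm hGnorm t hφ hφc hφΩ hψ hψc hψΩ, neg_add]
    · exact fun φ hφ hφc hφΩ => hdω t.1 t.2 φ hφ hφc hφΩ
  -- `ν` need not be finite, so the density argument is run on balls relatively compact in `Ω`
  have hlocal : ∀ x ∈ Ω, ∃ R : ℝ, 0 < R ∧ ν.restrict (ball x R) ≪ μH[κ] := by
    intro x hx
    obtain ⟨R, hR, hRΩ⟩ := Metric.nhds_basis_closedBall.mem_iff.1 (hΩ.mem_nhds hx)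
    refine ⟨R, hR, ?_⟩
    set ν' := ν.restrict (ball x R) with hν'
    have hfin : IsFiniteMeasure ν' := ⟨by
      rw [hν', Measure.restrict_apply_univ]
      exact (measure_mono ball_subset_closedBall).trans_lt
        (hνloc _ hRΩ (isCompact_closedBall x R))⟩
    have hG' : Integrable G ν' := Integrable.of_bound hGm.restrict 1
      (ae_restrict_of_ae (hGnorm.mono fun y hy => hy.le))
    -- on small balls the `t`-component of `dω` is controlled by the mass of `|η_t|`, hence of `ν`
    have hT : ∀ t : FormIndex d (m + 1), ∀ᵐ x₀ ∂ν', ∃ C : ℝ, ∀ᶠ r in 𝓝[>] (0 : ℝ),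
        ∀ φ : EuclideanSpace ℝ (Fin d) → ℝ, ContDiff ℝ (⊤ : ℕ∞) φ →
          tsupport φ ⊆ closedBall x₀ r → (∀ x, |φ x| ≤ 1) →
            |extPairing ν' G t φ| ≤ C * ν'.real (closedBall x₀ r) := by
      intro t
      have hmem : ∀ᵐ x₀ ∂ν', x₀ ∈ ball x R := ae_restrict_mem measurableSet_ball
      have hsmall : ∀ x₀ ∈ ball x R, ∀ᶠ r in 𝓝[>] (0 : ℝ), closedBall x₀ r ⊆ ball x R :=
        fun x₀ hx₀ => by
          obtain ⟨δ, hδ, hδb⟩ := Metric.nhds_basis_closedBall.mem_iff.1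
            (isOpen_ball.mem_nhds hx₀)
          filter_upwards [Ioo_mem_nhdsGT hδ] with r hr
          exact (closedBall_subset_closedBall hr.2.le).trans hδb
      rcases hdich t with ht | ht
      · have hfK : IntegrableOn (fun x => H x t) (closedBall x R) ρ :=
          LocallyIntegrableOn.integrableOn_isCompact
            (fun y hy => (ht y (hRΩ hy)).filter_mono nhdsWithin_le_nhds)
            (isCompact_closedBall x R)
        have : IsFiniteMeasure ((ρ.restrict (closedBall x R)).withDensity fun x => ‖H x t‖ₑ) :=
          isFiniteMeasure_withDensity hfK.2.ne
        filter_upwards [hmem, ae_eventually_measureReal_le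
          ((ρ.restrict (closedBall x R)).withDensity fun x => ‖H x t‖ₑ) ν'] with x₀ hx₀ ⟨C, hC⟩
        refine ⟨C, ?_⟩
        filter_upwards [hC, hsmall x₀ hx₀] with r hr hrb φ hφ hφr hφ1
        have hφc : HasCompactSupport φ :=
          (isCompact_closedBall x₀ r).of_isClosed_subset (isClosed_tsupport φ) hφr
        have hφb : tsupport φ ⊆ ball x R := hφr.trans hrb
        have h1 : -extPairing ν G t φ = ∫ x, φ x * H x t ∂ρ :=
          hdω t.1 t.2 φ hφ hφc (hφb.trans (ball_subset_closedBall.trans hRΩ))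
        rw [extPairing_restrict ν G t hφb, ← abs_neg, h1]
        exact (abs_integral_mul_le (hrb.trans ball_subset_closedBall)
          isClosed_closedBall.measurableSet hfK hφr hφ1).trans hr
      · filter_upwards [hmem] with x₀ hx₀
        refine ⟨0, ?_⟩
        filter_upwards [hsmall x₀ hx₀] with r hrb φ hφ hφr hφ1
        have hφc : HasCompactSupport φ :=
          (isCompact_closedBall x₀ r).of_isClosed_subset (isClosed_tsupport φ) hφr
        have hφb : tsupport φ ⊆ ball x R := hφr.trans hrb
        have h1 := ht φ hφ hφc (hφb.trans (ball_subset_closedBall.trans hRΩ))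
        rw [extPairing_restrict ν G t hφb, ← abs_neg, h1]
        simp
    refine absolutelyContinuous_hausdorff_of_density ν' ?_
    filter_upwards [ae_all_iff.2 hT, ae_eventually_integral_le ν' hG', ae_restrict_of_ae hGnorm]
      with x₀ h1 h2 h3
    exact density_of_form ν' hG' x₀ h3 h2 h1 hκ hκ'
  intro S hS
  have h1 : ν (S ∩ Ω) = 0 := by
    refine measure_null_of_locally_null _ fun x hx => ?_
    obtain ⟨R, hR, h⟩ := hlocal x hx.2
    refine ⟨S ∩ ball x R, ?_, ?_⟩
    · refine mem_of_superset (inter_mem_nhdsWithin _ (ball_mem_nhds x hR)) ?_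
      exact Set.inter_subset_inter_left _ Set.inter_subset_left
    · rw [← Measure.restrict_apply' measurableSet_ball]
      exact h hS
  refine measure_mono_null (fun x hx => ?_) (measure_union_null h1 hνsupp)
  by_cases hxΩ : x ∈ Ω
  · exact Or.inl ⟨hx, hxΩ⟩
  · exact Or.inr hxΩ
end

section
/- Let Ω ⊆ ℝ^d be open and 1 ≤ m ≤ d an integer. Let T be a ⋀_m ℝ^d-valued Radon measure on Ω with polar decomposition T = T⃗ ‖T‖ (|T⃗(x)| = 1 for ‖T‖-a.e. x), and suppose the boundary ∂T, defined on smooth compactly supported (m−1)-forms ω by ∂T(ω) := ∫_Ω ⟨T⃗(x), dω(x)⟩ d‖T‖(x), is representable by a ⋀_{m−1}ℝ^d-valued Radon measure on Ω (i.e., T is an m-dimensional normal current). Then ‖T‖ ≪ H^κ for every 0 ≤ κ < m; in particular the Hausdorff dimension of ‖T‖ is at least m. -/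
/-!
Let `t` be a set of `m` coordinate directions, `p : ℝ^d → ℝ^t` the corresponding projection and `f`
a test function on `Ω`. The signed measure `μ = p_#(f T_t)` on `ℝ^t`, where `T_t = G_t ν` is the
`t`-component of the current, has distributional derivatives that are finite measures, because
`± ∫ ∂_i ψ dμ = ∂T(f (ψ ∘ p) dx^{t∖{i}}) - T((ψ ∘ p) df ∧ dx^{t∖{i}})` (`slice_bound`). A measure
with this property moves by `O(|h|)` under translation by `h`, hence does not charge Lebesgue null
sets (`ac_core`). As `f` is arbitrary, `G_t = 0` holds `ν`-a.e. over every null set of `ℝ^t`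
(`coord_ae_zero`).

If `H^κ(A) = 0` with `κ < m`, then `H^m(A) = 0`, and the Lipschitz image `p(A)` is Lebesgue null in
the `m`-dimensional plane `ℝ^t`, for each `t`. So all components of `G` vanish `ν`-a.e. on `A`; as
`|G| = 1` a.e., this forces `ν(A) = 0`. The argument in fact yields `ν ≪ H^m`.
-/

open MeasureTheory Metric Filter
open scoped ENNReal RealInnerProductSpace Topology

/-- The index set for coordinates of `m`-(co)vectors on `ℝ^d`: subsets of `{1,…,d}` of
cardinality `m`.  The space `⋀_m ℝ^d` of `m`-vectors with its standard inner product is then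
identified with `EuclideanSpace ℝ (MultiIndex d m)`. -/
def MultiIndex (d m : ℕ) : Type := {s : Finset (Fin d) // s.card = m}

noncomputable instance (d m : ℕ) : Fintype (MultiIndex d m) := by
  unfold MultiIndex; infer_instance

/-- The `t`-coordinate (`t` a set of cardinality `m`) of the exterior derivative `dφ` of a smooth
`(m−1)`-form `φ`, given in coordinates: `(dφ)_t = ∑_{i ∈ t} (−1)^{#{j ∈ t : j < i}} ∂ᵢ φ_{t∖{i}}`. -/
noncomputable def extDerivCoord {d m : ℕ}
    (φ : EuclideanSpace ℝ (Fin d) → EuclideanSpace ℝ (MultiIndex d (m - 1)))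
    (t : MultiIndex d m) (hm : 1 ≤ m) (x : EuclideanSpace ℝ (Fin d)) : ℝ :=
  ∑ i ∈ t.1.attach, (-1 : ℝ) ^ (t.1.filter (fun j => j < i.1)).card *
    fderiv ℝ φ x (EuclideanSpace.single i.1 1)
      (⟨t.1.erase i.1, by rw [Finset.card_erase_of_mem i.2, t.2]⟩ : MultiIndex d (m - 1))

/-! ### Absolute continuity of measures with finite derivatives -/

/-- The pushforward under `p` of the measure `|g| ν`; it dominates the variation of `p_#(g ν)`. -/
noncomputable def pushVar {X ι : Type*} [MeasurableSpace X] (ν : Measure X) (g : X → ℝ)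
    (p : X → ι → ℝ) : Measure (ι → ℝ) :=
  (ν.withDensity (fun x => ‖g x‖ₑ)).map p

lemma enorm_integral_le_pushVar {X ι : Type*} [MeasurableSpace X] {ν : Measure X} {g : X → ℝ}
    {p : X → ι → ℝ} (hp : Measurable p) {w : (ι → ℝ) → ℝ} {V : Set (ι → ℝ)}
    (hV : MeasurableSet V) (hw1 : ∀ y, |w y| ≤ 1) (hw0 : ∀ y, y ∉ V → w y = 0) :
    ‖∫ x, g x * w (p x) ∂ν‖ₑ ≤ pushVar ν g p V := by
  rw [pushVar, Measure.map_apply hp hV, withDensity_apply _ (hp hV),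
    ← lintegral_indicator (hp hV)]
  refine (enorm_integral_le_lintegral_enorm _).trans (lintegral_mono fun x => ?_)
  by_cases hx : p x ∈ V
  · rw [Set.indicator_of_mem (by exact hx), enorm_mul]
    refine mul_le_of_le_one_right' ?_
    rw [← ofReal_norm, ENNReal.ofReal_le_one]
    exact hw1 _
  · simp [hw0 _ hx]

/-- If the distributional derivatives of the pushforward `μ = p_#(g ν)` are bounded by `C`, then
`μ` tested against `ψ` changes by at most `C ‖h‖` when `ψ` is translated by `h`: the mean value
inequality along `s ↦ ∫ ψ (· + s h) dμ`. -/
lemma translate_bound {X ι : Type*} [MeasurableSpace X] [Fintype ι] {ν : Measure X} {g : X → ℝ}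
    (hg : Integrable g ν) {p : X → ι → ℝ} (hp : Measurable p) {C : ℝ}
    (hC : ∀ ψ : (ι → ℝ) → ℝ, ContDiff ℝ (⊤ : ℕ∞) ψ → HasCompactSupport ψ → (∀ y, |ψ y| ≤ 1) →
      ∀ h, |∫ x, g x * fderiv ℝ ψ (p x) h ∂ν| ≤ C * ‖h‖)
    {ψ : (ι → ℝ) → ℝ} (hψ : ContDiff ℝ (⊤ : ℕ∞) ψ) (hc : HasCompactSupport ψ)
    (h1 : ∀ y, |ψ y| ≤ 1) (h : ι → ℝ) :
    |(∫ x, g x * ψ (p x + h) ∂ν) - ∫ x, g x * ψ (p x) ∂ν| ≤ C * ‖h‖ := by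
  have hdc : Continuous (fderiv ℝ ψ) := hψ.continuous_fderiv (by simp)
  obtain ⟨B, hB⟩ := hdc.bounded_above_of_compact_support (hc.fderiv (𝕜 := ℝ))
  have hpm : ∀ s : ℝ, Measurable fun x => p x + s • h := fun s => hp.add_const _
  have key : ∀ s : ℝ, HasDerivAt (fun s : ℝ => ∫ x, g x * ψ (p x + s • h) ∂ν)
      (∫ x, g x * fderiv ℝ ψ (p x + s • h) h ∂ν) s := by
    intro s
    refine (hasDerivAt_integral_of_dominated_loc_of_deriv_le (s := Set.univ)
      (F := fun s x => g x * ψ (p x + s • h))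
      (F' := fun s x => g x * fderiv ℝ ψ (p x + s • h) h)
      (bound := fun x => ‖g x‖ * (B * ‖h‖)) univ_mem ?_ ?_ ?_ ?_ ?_ ?_).2
    · exact Eventually.of_forall fun s => hg.aestronglyMeasurable.mul
        (hψ.continuous.measurable.comp (hpm s)).aestronglyMeasurable
    · exact hg.mul_bdd (c := 1)
        (hψ.continuous.measurable.comp (hpm s)).aestronglyMeasurable
        (Eventually.of_forall fun x => h1 _)
    · have : Continuous fun y => fderiv ℝ ψ y h := by fun_prop
      exact hg.aestronglyMeasurable.mul
        (this.measurable.comp (hpm s)).aestronglyMeasurable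
    · refine Eventually.of_forall fun x s _ => ?_
      rw [norm_mul]
      gcongr
      exact ((fderiv ℝ ψ _).le_opNorm h).trans (by gcongr; exact hB _)
    · exact hg.norm.mul_const _
    · refine Eventually.of_forall fun x s _ => ?_
      have h2 : HasDerivAt (fun s : ℝ => p x + s • h) h s := by
        simpa using ((hasDerivAt_id s).smul_const h).const_add (p x)
      have h3 := ((hψ.differentiable (by simp)) (p x + s • h)).hasFDerivAt.comp_hasDerivAt s h2
      exact h3.const_mul (g x)
  have := norm_image_sub_le_of_norm_deriv_le_segment_01' (C := C * ‖h‖)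
    (fun s _ => (key s).hasDerivWithinAt) (fun s _ => ?_)
  · simpa using this
  · have := hC (fun y => ψ (y + s • h)) (by fun_prop)
      (hc.comp_homeomorph (Homeomorph.addRight (s • h))) (fun y => h1 _) h
    simpa [fderiv_comp_add_right] using this

/-- A finite signed measure `μ = p_#(g ν)` on `ℝ^ι` whose distributional derivatives are finite
measures is absolutely continuous. Let `E` be Lebesgue null. By Fubini `|μ|(E - h) = 0` for almost
every `h`, so `h` can be taken arbitrarily small; on the other hand `translate_bound`, applied to
smooth approximations of the indicator of `E`, gives `|μ(E) - μ(E - h)| ≤ C ‖h‖`. -/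
lemma ac_core {X ι : Type*} [MeasurableSpace X] [Fintype ι] {ν : Measure X} {g : X → ℝ}
    (hg : Integrable g ν) {p : X → ι → ℝ} (hp : Measurable p) {C : ℝ}
    (hC0 : 0 ≤ C)
    (hC : ∀ ψ : (ι → ℝ) → ℝ, ContDiff ℝ (⊤ : ℕ∞) ψ → HasCompactSupport ψ → (∀ y, |ψ y| ≤ 1) →
      ∀ h, |∫ x, g x * fderiv ℝ ψ (p x) h ∂ν| ≤ C * ‖h‖)
    {E : Set (ι → ℝ)} (hE : MeasurableSet E) (hE0 : volume E = 0) :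
    ∫ x in p ⁻¹' E, g x ∂ν = 0 := by
  have hfin : IsFiniteMeasure (ν.withDensity (fun x => ‖g x‖ₑ)) :=
    isFiniteMeasure_withDensity hg.2.ne
  set σ := pushVar ν g p with hσ
  have : IsFiniteMeasure σ := by rw [hσ, pushVar]; infer_instance
  have hae : ∀ᵐ h : ι → ℝ, σ ((fun y => y + h) ⁻¹' E) = 0 := by
    have hm : MeasurableSet {z : (ι → ℝ) × (ι → ℝ) | z.1 + z.2 ∉ E} :=
      (measurable_fst.add measurable_snd) hE.compl
    have h1 : ∀ᵐ y ∂σ, ∀ᵐ h : ι → ℝ, y + h ∉ E := by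
      refine Eventually.of_forall fun y => ?_
      rw [ae_iff]
      simp only [not_not]
      exact (measure_preimage_add volume y E).trans hE0
    have h2 := (Measure.ae_ae_comm (p := fun y h => y + h ∉ E) hm).1 h1
    filter_upwards [h2] with h hh
    rw [ae_iff] at hh
    simp only [not_not] at hh
    exact hh
  have main : ∀ ε : ℝ, 0 < ε → |∫ x in p ⁻¹' E, g x ∂ν| ≤ C * ε + ε + ε := by
    intro ε hε
    obtain ⟨h, hh, hhε⟩ : ∃ h : ι → ℝ, σ ((fun y => y + h) ⁻¹' E) = 0 ∧ ‖h‖ ≤ ε := by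
      have : (volume : Measure (ι → ℝ)) (ball 0 ε) ≠ 0 := (measure_ball_pos _ _ hε).ne'
      obtain ⟨h, h1, h2⟩ := (frequently_ae_mem_iff.2 this).and_eventually hae |>.exists
      exact ⟨h, h2, by simpa using (mem_ball_zero_iff.1 h1).le⟩
    -- Regularity for `τ` controls `E` and its translate `E - h` simultaneously.
    set τ := σ + σ.map (fun y => y + h) with hτ
    have hma : Measurable fun y : ι → ℝ => y + h := measurable_add_const h
    have : IsFiniteMeasure τ := by rw [hτ]; infer_instance
    have hε2 : ENNReal.ofReal (ε / 2) ≠ 0 := by simpa using hε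
    obtain ⟨U, hEU, hUo, -, hU⟩ := hE.exists_isOpen_sdiff_lt (measure_ne_top τ E) hε2
    obtain ⟨K, hKE, hKc, hK⟩ := hE.exists_isCompact_sdiff_lt (measure_ne_top τ E) hε2
    -- Intersecting with a ball makes the cutoff compactly supported.
    obtain ⟨R, hR⟩ := hKc.isBounded.subset_ball 0
    have hτUK : τ (U \ K) ≤ ENNReal.ofReal ε := by
      have : U \ K ⊆ (U \ E) ∪ (E \ K) := fun y hy => by
        by_cases hyE : y ∈ E
        · exact Or.inr ⟨hyE, hy.2⟩
        · exact Or.inl ⟨hy.1, hyE⟩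
      refine (measure_mono this).trans ((measure_union_le _ _).trans ?_)
      refine (add_le_add hU.le hK.le).trans ?_
      rw [← ENNReal.ofReal_add (by positivity) (by positivity)]
      simp
    obtain ⟨ψ, hψ, hψr, hψs, hψ1⟩ := exists_contMDiff_support_eq_eq_one_iff
      (n := (⊤ : ℕ∞)) (modelWithCornersSelf ℝ (ι → ℝ))
      (hUo.inter isOpen_ball) hKc.isClosed (Set.subset_inter (hKE.trans hEU) hR)
    rw [contMDiff_iff_contDiff] at hψ
    have hψ01 : ∀ y, 0 ≤ ψ y ∧ ψ y ≤ 1 := fun y => hψr ⟨y, rfl⟩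
    have hψabs : ∀ y, |ψ y| ≤ 1 := fun y => abs_le.2 ⟨by linarith [(hψ01 y).1], (hψ01 y).2⟩
    have hψU : ∀ y, y ∉ U → ψ y = 0 := fun y hy => by
      by_contra h0
      have : y ∈ Function.support ψ := h0
      rw [hψs] at this
      exact hy this.1
    have hψc : HasCompactSupport ψ := by
      refine HasCompactSupport.of_support_subset_isCompact (isCompact_closedBall (0 : ι → ℝ) R) ?_
      rw [hψs]
      exact Set.inter_subset_right.trans ball_subset_closedBall
    have hpsi_int : Integrable (fun x => g x * ψ (p x)) ν := hg.mul_bdd (c := 1)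
        (hψ.continuous.measurable.comp hp).aestronglyMeasurable
        (Eventually.of_forall fun x => hψabs _)
    have b1 : |(∫ x in p ⁻¹' E, g x ∂ν) - ∫ x, g x * ψ (p x) ∂ν| ≤ ε := by
      rw [← integral_indicator (hp hE), ← integral_sub (hg.indicator (hp hE)) hpsi_int]
      have e : ∀ x, (p ⁻¹' E).indicator g x - g x * ψ (p x)
          = g x * (E.indicator 1 (p x) - ψ (p x)) := by
        intro x
        by_cases hx : p x ∈ E
        · rw [Set.indicator_of_mem (by exact hx), Set.indicator_of_mem hx]
          simp [mul_sub]
        · rw [Set.indicator_of_notMem (by exact hx), Set.indicator_of_notMem hx]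
          simp
      simp_rw [e]
      have := enorm_integral_le_pushVar (ν := ν) (g := g) hp
        (w := fun y => E.indicator 1 y - ψ y) (V := U \ K)
        (hUo.measurableSet.diff hKc.measurableSet) ?_ ?_
      · have h2 := this.trans ((Measure.le_add_right le_rfl (U \ K)).trans hτUK)
        rw [← ofReal_norm] at h2
        exact (ENNReal.ofReal_le_ofReal_iff hε.le).1 h2
      · intro y
        have := hψ01 y
        by_cases hy : y ∈ E
        · rw [Set.indicator_of_mem hy, abs_le, Pi.one_apply]; constructor <;> linarith
        · rw [Set.indicator_of_notMem hy, abs_le]; constructor <;> linarith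
      · intro y hy
        by_cases hyU : y ∈ U
        · have hyK : y ∈ K := by
            by_contra hk
            exact hy ⟨hyU, hk⟩
          simp [Set.indicator_of_mem (hKE hyK), (hψ1 y).1 hyK]
        · simp [Set.indicator_of_notMem (fun hh => hyU (hEU hh)), hψU y hyU]
    have b2 := translate_bound hg hp hC hψ hψc hψabs h
    have b3 : |∫ x, g x * ψ (p x + h) ∂ν| ≤ ε := by
      have := enorm_integral_le_pushVar (ν := ν) (g := g) hp
        (w := fun y => ψ (y + h)) (V := (fun y => y + h) ⁻¹' U)
        (hma hUo.measurableSet) (fun y => hψabs _) (fun y hy => hψU _ hy)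
      have h1 : σ ((fun y => y + h) ⁻¹' U) ≤ ENNReal.ofReal ε := by
        have : (fun y => y + h) ⁻¹' U ⊆ (fun y => y + h) ⁻¹' E ∪ (fun y => y + h) ⁻¹' (U \ E) :=
          fun y hy => by
            by_cases hyE : y + h ∈ E
            · exact Or.inl hyE
            · exact Or.inr ⟨hy, hyE⟩
        refine (measure_mono this).trans ((measure_union_le _ _).trans ?_)
        rw [hh, zero_add, ← Measure.map_apply hma (hUo.measurableSet.diff hE)]
        refine (Measure.le_add_left le_rfl (U \ E)).trans (hU.le.trans ?_)
        exact ENNReal.ofReal_le_ofReal (by linarith)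
      have h2 := this.trans h1
      rw [← ofReal_norm] at h2
      exact (ENNReal.ofReal_le_ofReal_iff hε.le).1 h2
    have b4 : C * ‖h‖ ≤ C * ε := by gcongr
    rw [abs_le] at *
    constructor <;> linarith [b1.1, b1.2, b2.1, b2.2, b3.1, b3.2]
  have hlim : Tendsto (fun ε : ℝ => C * ε + ε + ε) (𝓝[>] 0) (𝓝 0) := by
    have : Continuous fun ε : ℝ => C * ε + ε + ε := by fun_prop
    simpa using (this.tendsto 0).mono_left nhdsWithin_le_nhds
  have := ge_of_tendsto hlim (eventually_mem_nhdsWithin.mono fun ε hε => main ε hε)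
  exact abs_eq_zero.1 (le_antisymm this (abs_nonneg _))

/-! ### Coordinate expression of the exterior derivative -/

/-- The `s`-coordinate of the `m`-covector `ℓ ∧ e_J`. -/
noncomputable def wedgeCoord {d m : ℕ} (ℓ : EuclideanSpace ℝ (Fin d) →L[ℝ] ℝ)
    (J : MultiIndex d (m - 1)) (s : MultiIndex d m) : ℝ :=
  ∑ j ∈ s.1.attach, (-1 : ℝ) ^ (s.1.filter (fun k => k < j.1)).card *
    if s.1.erase j.1 = J.1 then ℓ (EuclideanSpace.single j.1 1) else 0

lemma wedgeCoord_add {d m : ℕ} (ℓ ℓ' : EuclideanSpace ℝ (Fin d) →L[ℝ] ℝ)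
    (J : MultiIndex d (m - 1)) (s : MultiIndex d m) :
    wedgeCoord (ℓ + ℓ') J s = wedgeCoord ℓ J s + wedgeCoord ℓ' J s := by
  simp only [wedgeCoord, ← Finset.sum_add_distrib, ← mul_add]
  refine Finset.sum_congr rfl fun j _ => ?_
  split_ifs <;> simp

lemma wedgeCoord_smul {d m : ℕ} (c : ℝ) (ℓ : EuclideanSpace ℝ (Fin d) →L[ℝ] ℝ)
    (J : MultiIndex d (m - 1)) (s : MultiIndex d m) :
    wedgeCoord (c • ℓ) J s = c * wedgeCoord ℓ J s := by
  simp only [wedgeCoord, Finset.mul_sum]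
  refine Finset.sum_congr rfl fun j _ => ?_
  split_ifs
  · simp; ring
  · simp

lemma continuous_wedgeCoord {d m : ℕ} (J : MultiIndex d (m - 1)) (s : MultiIndex d m) :
    Continuous fun ℓ : EuclideanSpace ℝ (Fin d) →L[ℝ] ℝ => wedgeCoord ℓ J s := by
  unfold wedgeCoord
  refine continuous_finsetSum _ fun j _ => ?_
  split_ifs <;> fun_prop

/-- If `ℓ` only involves the directions in `t` and `i ∈ t`, then
`ℓ ∧ dx^{t∖{i}} = ± ℓ(e_i) dx^t`: every other factor `dx^j` of `ℓ` is already present. -/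
lemma wedgeCoord_erase {d m : ℕ} {ℓ : EuclideanSpace ℝ (Fin d) →L[ℝ] ℝ}
    {t : MultiIndex d m} (hℓ : ∀ j, j ∉ t.1 → ℓ (EuclideanSpace.single j 1) = 0)
    {i : Fin d} (hi : i ∈ t.1) {J : MultiIndex d (m - 1)} (hJ : J.1 = t.1.erase i)
    (s : MultiIndex d m) [Decidable (s = t)] :
    wedgeCoord ℓ J s = if s = t then
      (-1 : ℝ) ^ (t.1.filter (fun k => k < i)).card * ℓ (EuclideanSpace.single i 1) else 0 := by
  have key : ∀ j ∈ s.1, s.1.erase j = J.1 → ℓ (EuclideanSpace.single j 1) ≠ 0 →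
      j = i ∧ s = t := by
    intro j hj h1 h2
    have hjt : j ∈ t.1 := by
      by_contra h
      exact h2 (hℓ j h)
    have hji : j = i := by
      by_contra h
      have : j ∈ s.1.erase j := by
        rw [h1, hJ]
        exact Finset.mem_erase.2 ⟨h, hjt⟩
      simp at this
    subst hji
    refine ⟨rfl, Subtype.ext ?_⟩
    rw [← Finset.insert_erase hj, h1, hJ, Finset.insert_erase hi]
  unfold wedgeCoord
  split_ifs with hst
  · subst hst
    rw [Finset.sum_eq_single (⟨i, hi⟩ : {x // x ∈ s.1})]
    · simp [hJ]
    · intro j _ hj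
      by_cases h1 : s.1.erase j.1 = J.1
      · by_cases h2 : ℓ (EuclideanSpace.single j.1 1) = 0
        · simp [h2]
        · exact absurd (Subtype.ext (key j.1 j.2 h1 h2).1) hj
      · simp [h1]
    · intro h
      exact absurd (Finset.mem_attach _ _) h
  · refine Finset.sum_eq_zero fun j _ => ?_
    by_cases h1 : s.1.erase j.1 = J.1
    · by_cases h2 : ℓ (EuclideanSpace.single j.1 1) = 0
      · simp [h2]
      · exact absurd (key j.1 j.2 h1 h2).2 hst
    · simp [h1]

open Classical in
lemma extDerivCoord_smul_single {d m : ℕ} (hm : 1 ≤ m) {u : EuclideanSpace ℝ (Fin d) → ℝ}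
    (hu : Differentiable ℝ u) (J : MultiIndex d (m - 1)) (s : MultiIndex d m)
    (x : EuclideanSpace ℝ (Fin d)) :
    extDerivCoord (fun y => u y • (EuclideanSpace.single J (1 : ℝ))) s hm x
      = wedgeCoord (fderiv ℝ u x) J s := by
  unfold extDerivCoord wedgeCoord
  refine Finset.sum_congr rfl fun j _ => ?_
  rw [fderiv_smul_const (hu x)]
  congr 1
  have hk : ∀ (k : MultiIndex d (m - 1)) (a : ℝ),
      a * (EuclideanSpace.single J (1 : ℝ) : EuclideanSpace ℝ (MultiIndex d (m - 1))) k
        = if k.1 = J.1 then a else 0 := by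
    intro k a
    rw [PiLp.single_apply]
    by_cases h : k = J
    · simp [h]
    · have h' : k.1 ≠ J.1 := fun h' => h (Subtype.ext h')
      simp [h, h']
  exact hk _ _

/-! ### Integrability of test expressions and coordinate projections -/

lemma integrable_mul_test {d : ℕ} {Ω : Set (EuclideanSpace ℝ (Fin d))}
    {ν : Measure (EuclideanSpace ℝ (Fin d))}
    (hνloc : ∀ K : Set (EuclideanSpace ℝ (Fin d)), K ⊆ Ω → IsCompact K → ν K < ⊤)
    {b u : EuclideanSpace ℝ (Fin d) → ℝ} (hb : AEStronglyMeasurable b ν)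
    (hb1 : ∀ᵐ x ∂ν, |b x| ≤ 1) (hu : Continuous u) (hc : HasCompactSupport u)
    (hΩ : tsupport u ⊆ Ω) : Integrable (fun x => b x * u x) ν := by
  obtain ⟨B, hB⟩ := hu.bounded_above_of_compact_support hc
  have hs : Function.support (fun x => b x * u x) ⊆ tsupport u := fun x hx => by
    refine subset_tsupport u ?_
    exact right_ne_zero_of_mul hx
  rw [← integrableOn_iff_integrable_of_support_subset hs]
  refine Measure.integrableOn_of_bounded (M := B) (hνloc _ hΩ hc).ne
    (hb.mul hu.aestronglyMeasurable) (ae_restrict_of_ae ?_)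
  filter_upwards [hb1] with x hx
  rw [norm_mul]
  calc ‖b x‖ * ‖u x‖ ≤ 1 * B := mul_le_mul hx (hB x) (norm_nonneg _) zero_le_one
    _ = B := one_mul B

lemma abs_coord_le {ι : Type*} [Fintype ι] {v : EuclideanSpace ℝ ι} (hv : ‖v‖ = 1) (s : ι) :
    |v s| ≤ 1 := by
  have := PiLp.norm_apply_le v s
  rwa [hv] at this

lemma integrable_wedge {d m : ℕ} {Ω : Set (EuclideanSpace ℝ (Fin d))}
    {ν : Measure (EuclideanSpace ℝ (Fin d))}
    (hνloc : ∀ K : Set (EuclideanSpace ℝ (Fin d)), K ⊆ Ω → IsCompact K → ν K < ⊤)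
    {G : EuclideanSpace ℝ (Fin d) → EuclideanSpace ℝ (MultiIndex d m)}
    (hGm : AEStronglyMeasurable G ν) (hGnorm : ∀ᵐ x ∂ν, ‖G x‖ = 1)
    (J : MultiIndex d (m - 1)) {u : EuclideanSpace ℝ (Fin d) → ℝ}
    (hu : ContDiff ℝ (⊤ : ℕ∞) u) (hc : HasCompactSupport u) (hΩ : tsupport u ⊆ Ω) :
    Integrable (fun x => ∑ s : MultiIndex d m, G x s * wedgeCoord (fderiv ℝ u x) J s) ν := by
  refine integrable_finsetSum _ fun s _ => ?_
  have h0 : wedgeCoord (0 : EuclideanSpace ℝ (Fin d) →L[ℝ] ℝ) J s = 0 := by simp [wedgeCoord]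
  have hc' : HasCompactSupport (fun x => wedgeCoord (fderiv ℝ u x) J s) :=
    (hc.fderiv (𝕜 := ℝ)).comp_left (g := fun ℓ => wedgeCoord ℓ J s) h0
  refine integrable_mul_test hνloc ((EuclideanSpace.proj (𝕜 := ℝ) s).continuous.comp_aestronglyMeasurable hGm)
    (hGnorm.mono fun x hx => abs_coord_le hx s)
    ((continuous_wedgeCoord J s).comp (hu.continuous_fderiv (by simp))) hc' ?_
  refine Set.Subset.trans ?_ hΩ
  refine Set.Subset.trans ?_ (tsupport_fderiv_subset ℝ)
  exact closure_mono fun x hx hx0 => hx (by simp [hx0, h0])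

/-- The coordinate projection of `ℝ^d` to the coordinate plane of directions in `t`. -/
noncomputable def coordProj {d : ℕ} (t : Finset (Fin d)) :
    EuclideanSpace ℝ (Fin d) →L[ℝ] ({i // i ∈ t} → ℝ) :=
  ContinuousLinearMap.pi fun i => EuclideanSpace.proj i.1

lemma coordProj_single_of_notMem {d : ℕ} {t : Finset (Fin d)} {j : Fin d} (hj : j ∉ t) :
    coordProj t (EuclideanSpace.single j 1) = 0 := by
  ext k
  have : k.1 ≠ j := fun h => hj (h ▸ k.2)
  simp [coordProj, this]

lemma coordProj_single {d : ℕ} {t : Finset (Fin d)} (i : {i // i ∈ t}) :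
    coordProj t (EuclideanSpace.single i.1 1) = Pi.single i 1 := by
  ext k
  by_cases h : k = i
  · subst h
    simp [coordProj]
  · have h' : k.1 ≠ i.1 := fun h' => h (Subtype.ext h')
    simp [coordProj, h, h']

/-! ### Projecting the components of a normal current -/

section

variable {d m : ℕ} (hm : 1 ≤ m)
    {Ω : Set (EuclideanSpace ℝ (Fin d))} (hΩ : IsOpen Ω)
    {ν : Measure (EuclideanSpace ℝ (Fin d))}
    (hνloc : ∀ K : Set (EuclideanSpace ℝ (Fin d)), K ⊆ Ω → IsCompact K → ν K < ⊤)
    {G : EuclideanSpace ℝ (Fin d) → EuclideanSpace ℝ (MultiIndex d m)}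
    (hGm : AEStronglyMeasurable G ν) (hGnorm : ∀ᵐ x ∂ν, ‖G x‖ = 1)
    {ρ : Measure (EuclideanSpace ℝ (Fin d))}
    {S : EuclideanSpace ℝ (Fin d) → EuclideanSpace ℝ (MultiIndex d (m - 1))}
    (hbdry : ∀ φ : EuclideanSpace ℝ (Fin d) → EuclideanSpace ℝ (MultiIndex d (m - 1)),
      ContDiff ℝ (⊤ : ℕ∞) φ → HasCompactSupport φ → tsupport φ ⊆ Ω →
      (∫ x, ∑ t : MultiIndex d m, G x t * extDerivCoord φ t hm x ∂ν)
        = ∫ x, ⟪S x, φ x⟫ ∂ρ)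

include hbdry in
/-- The boundary formula tested on the forms `u dx^J`, whose exterior derivative is `du ∧ dx^J`. -/
lemma boundary_scalar (J : MultiIndex d (m - 1)) {u : EuclideanSpace ℝ (Fin d) → ℝ}
    (hu : ContDiff ℝ (⊤ : ℕ∞) u) (hc : HasCompactSupport u) (hs : tsupport u ⊆ Ω) :
    ∫ x, ∑ s : MultiIndex d m, G x s * wedgeCoord (fderiv ℝ u x) J s ∂ν
      = ∫ x, u x * S x J ∂ρ := by
  classical
  have h := hbdry (fun y => u y • (EuclideanSpace.single J (1 : ℝ))) (hu.smul contDiff_const)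
    hc.smul_right ((tsupport_smul_subset_left u _).trans hs)
  simp only [extDerivCoord_smul_single hm (hu.differentiable (by simp))] at h
  rw [h]
  simp [real_inner_smul_right, EuclideanSpace.inner_single_right]

include hνloc hGm hGnorm hbdry in
/-- `|∂T(f w dx^J)|` is bounded by a constant independent of `w` with `|w| ≤ 1`.
No local integrability of `S` is assumed, so the Bochner integral representing `∂T` may take its
junk value `0`. This does no harm: if `f S_J` is not integrable, then `∂T(f w dx^J) = 0` whether or
not `f w S_J` is integrable, since if it is, `f (w + 1) S_J` is not, and `∂T` is additive. -/
lemma boundary_bound (J : MultiIndex d (m - 1)) {f : EuclideanSpace ℝ (Fin d) → ℝ}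
    (hf : ContDiff ℝ (⊤ : ℕ∞) f) (hc : HasCompactSupport f) (hs : tsupport f ⊆ Ω) :
    ∃ C : ℝ, 0 ≤ C ∧ ∀ w : EuclideanSpace ℝ (Fin d) → ℝ, ContDiff ℝ (⊤ : ℕ∞) w →
      (∀ x, |w x| ≤ 1) →
      |∫ x, ∑ s : MultiIndex d m, G x s * wedgeCoord (fderiv ℝ (fun y => f y * w y) x) J s ∂ν|
        ≤ C := by
  have hfw : ∀ w : EuclideanSpace ℝ (Fin d) → ℝ, HasCompactSupport (fun y => f y * w y) :=
    fun w => hc.mul_right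
  have hsw : ∀ w : EuclideanSpace ℝ (Fin d) → ℝ, tsupport (fun y => f y * w y) ⊆ Ω :=
    fun w => (tsupport_mul_subset_left).trans hs
  by_cases hfS : Integrable (fun x => f x * S x J) ρ
  · refine ⟨∫ x, |f x * S x J| ∂ρ, integral_nonneg fun x => abs_nonneg _, fun w hw hw1 => ?_⟩
    rw [boundary_scalar hm hbdry J (hf.mul hw) (hfw w) (hsw w)]
    rw [← Real.norm_eq_abs]
    refine norm_integral_le_of_norm_le hfS.abs (Eventually.of_forall fun x => ?_)
    rw [Real.norm_eq_abs, mul_right_comm, abs_mul]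
    exact mul_le_of_le_one_right (abs_nonneg _) (hw1 x)
  · refine ⟨0, le_rfl, fun w hw hw1 => ?_⟩
    rw [abs_nonpos_iff]
    have hu := hf.mul hw
    have hB := boundary_scalar hm hbdry J hu (hfw w) (hsw w)
    -- Compare `f w` with `f (w + 1)`: their difference `f` is not integrable against `S_J`.
    by_cases hfwS : Integrable (fun x => (f x * w x) * S x J) ρ
    · have hsum : ¬ Integrable (fun x => (f x * (w x + 1)) * S x J) ρ := fun h => by
        apply hfS
        convert! h.sub hfwS using 2 with x
        simp only [Pi.sub_apply]
        ring
      have h1 := boundary_scalar hm hbdry J hf hc hs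
      have h2 := boundary_scalar hm hbdry J (u := fun x => f x * (w x + 1))
        (hf.mul (hw.add contDiff_const)) (hfw _) (hsw _)
      rw [integral_undef hfS] at h1
      rw [integral_undef hsum] at h2
      have hadd : ∀ x, ∑ s : MultiIndex d m,
          G x s * wedgeCoord (fderiv ℝ (fun y => f y * (w y + 1)) x) J s
          = ∑ s : MultiIndex d m, G x s * wedgeCoord (fderiv ℝ (fun y => f y * w y) x) J s
            + ∑ s : MultiIndex d m, G x s * wedgeCoord (fderiv ℝ f x) J s := by
        intro x
        have e : (fun y => f y * (w y + 1)) = (fun y => f y * w y) + f := by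
          ext y
          simp only [Pi.add_apply]
          ring
        have hd1 : DifferentiableAt ℝ (fun y => f y * w y) x := hu.differentiable (by simp) x
        rw [e, fderiv_add hd1 (hf.differentiable (by simp) x)]
        simp only [wedgeCoord_add, mul_add, Finset.sum_add_distrib]
      simp_rw [hadd] at h2
      rw [integral_add (integrable_wedge hνloc hGm hGnorm J hu (hfw w) (hsw w))
        (integrable_wedge hνloc hGm hGnorm J hf hc hs), h1, add_zero] at h2
      exact h2
    · rw [hB, integral_undef hfwS]

include hm hνloc hGm hGnorm hbdry in
/-- The `i`-th distributional derivative of the projection of `f G_t ν` to the coordinate plane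
of `t` is a finite measure. This comes from testing `∂T` on `f (ψ ∘ p) dx^{t∖{i}}`, where `p` is the
projection: `d(ψ ∘ p) ∧ dx^{t∖{i}} = ± (∂_i ψ ∘ p) dx^t`, and the remaining term `(ψ ∘ p) df ∧ dx^{t∖{i}}`
carries no derivative of `ψ`. -/
lemma slice_bound (t : MultiIndex d m) (i : {i // i ∈ t.1}) {f : EuclideanSpace ℝ (Fin d) → ℝ}
    (hf : ContDiff ℝ (⊤ : ℕ∞) f) (hc : HasCompactSupport f) (hs : tsupport f ⊆ Ω) :
    ∃ C : ℝ, 0 ≤ C ∧ ∀ ψ : ({i // i ∈ t.1} → ℝ) → ℝ, ContDiff ℝ (⊤ : ℕ∞) ψ →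
      HasCompactSupport ψ → (∀ y, |ψ y| ≤ 1) →
      |∫ x, (G x t * f x) * fderiv ℝ ψ (coordProj t.1 x) (Pi.single i 1) ∂ν| ≤ C := by
  classical
  let J : MultiIndex d (m - 1) :=
    ⟨t.1.erase i.1, by rw [Finset.card_erase_of_mem i.2, t.2]⟩
  obtain ⟨C, hC0, hC⟩ := boundary_bound hm hνloc hGm hGnorm hbdry J hf hc hs
  have hD := integrable_wedge hνloc hGm hGnorm J hf hc hs
  set D := fun x => ∑ s : MultiIndex d m, G x s * wedgeCoord (fderiv ℝ f x) J s with hDdef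
  refine ⟨C + ∫ x, |D x| ∂ν, add_nonneg hC0 (integral_nonneg fun x => abs_nonneg _),
    fun ψ hψ hψc hψ1 => ?_⟩
  have hw : ContDiff ℝ (⊤ : ℕ∞) fun x => ψ (coordProj t.1 x) :=
    hψ.comp (coordProj t.1).contDiff
  set σ : ℝ := (-1 : ℝ) ^ (t.1.filter (fun k => k < i.1)).card with hσ
  have hσ1 : |σ| = 1 := by simp [hσ]
  have hbound := hC _ hw (fun x => hψ1 _)
  have hexp : ∀ x, ∑ s : MultiIndex d m,
      G x s * wedgeCoord (fderiv ℝ (fun y => f y * ψ (coordProj t.1 y)) x) J s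
      = σ * ((G x t * f x) * fderiv ℝ ψ (coordProj t.1 x) (Pi.single i 1))
        + D x * ψ (coordProj t.1 x) := by
    intro x
    have hd1 : HasFDerivAt f (fderiv ℝ f x) x := (hf.differentiable (by simp) x).hasFDerivAt
    have hd2 : HasFDerivAt (fun y => ψ (coordProj t.1 y))
        ((fderiv ℝ ψ (coordProj t.1 x)).comp (coordProj t.1)) x :=
      (hψ.differentiable (by simp) (coordProj t.1 x)).hasFDerivAt.comp x
        (coordProj t.1).hasFDerivAt
    rw [(hd1.fun_mul hd2).fderiv]
    have hz : ∀ j, j ∉ t.1 → ((fderiv ℝ ψ (coordProj t.1 x)).comp (coordProj t.1))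
        (EuclideanSpace.single j 1) = 0 := fun j hj => by
      simp [coordProj_single_of_notMem hj]
    simp only [wedgeCoord_add, wedgeCoord_smul, wedgeCoord_erase hz i.2 (J := J) rfl, mul_add,
      Finset.sum_add_distrib, hDdef, Finset.sum_mul]
    congr 1
    · simp only [mul_ite, mul_zero, Finset.sum_ite_eq', Finset.mem_univ, if_true,
        ContinuousLinearMap.comp_apply, coordProj_single]
      ring
    · exact Finset.sum_congr rfl fun s _ => by ring
  simp_rw [hexp] at hbound
  have hI2 : Integrable (fun x => D x * ψ (coordProj t.1 x)) ν :=
    hD.mul_bdd (c := 1) hw.continuous.aestronglyMeasurable (Eventually.of_forall fun x => hψ1 _)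
  obtain ⟨B, hB⟩ := (hψ.continuous_fderiv (by simp)).bounded_above_of_compact_support
    (hψc.fderiv (𝕜 := ℝ))
  have hI1 : Integrable
      (fun x => (G x t * f x) * fderiv ℝ ψ (coordProj t.1 x) (Pi.single i 1)) ν := by
    refine (integrable_mul_test hνloc
      ((EuclideanSpace.proj (𝕜 := ℝ) t).continuous.comp_aestronglyMeasurable hGm)
      (hGnorm.mono fun x hx => abs_coord_le hx t) hf.continuous hc hs).mul_bdd
      (c := B * ‖(Pi.single i 1 : {i // i ∈ t.1} → ℝ)‖) ?_ ?_
    · have : Continuous fun y => fderiv ℝ ψ y (Pi.single i 1) :=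
        (hψ.continuous_fderiv (by simp)).clm_apply continuous_const
      exact (this.comp (coordProj t.1).continuous).aestronglyMeasurable
    · exact Eventually.of_forall fun x =>
        ((fderiv ℝ ψ _).le_opNorm _).trans (by gcongr; exact hB _)
  rw [integral_add (hI1.const_mul σ) hI2, integral_const_mul] at hbound
  have hb2 : |∫ x, D x * ψ (coordProj t.1 x) ∂ν| ≤ ∫ x, |D x| ∂ν := by
    rw [← Real.norm_eq_abs]
    refine norm_integral_le_of_norm_le hD.abs (Eventually.of_forall fun x => ?_)
    rw [Real.norm_eq_abs, abs_mul]
    exact mul_le_of_le_one_right (abs_nonneg _) (hψ1 _)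
  have hfin : ∀ I : ℝ, |I| = |σ * I| := fun I => by rw [abs_mul, hσ1, one_mul]
  rw [hfin]
  rw [abs_le] at *
  constructor <;> linarith [hbound.1, hbound.2, hb2.1, hb2.2]

include hm hΩ hνloc hGm hGnorm hbdry in
/-- The component `G_t` vanishes almost everywhere over Lebesgue null sets of the coordinate
plane of `t`. -/
lemma coord_ae_zero (t : MultiIndex d m) {E : Set ({i // i ∈ t.1} → ℝ)} (hE : MeasurableSet E)
    (hE0 : volume E = 0) : ∀ᵐ x ∂ν, x ∈ Ω → coordProj t.1 x ∈ E → G x t = 0 := by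
  have hp : Measurable (coordProj t.1) := (coordProj t.1).continuous.measurable
  have hGt : AEStronglyMeasurable (fun x => G x t) ν :=
    (EuclideanSpace.proj (𝕜 := ℝ) t).continuous.comp_aestronglyMeasurable hGm
  have hG1 : ∀ᵐ x ∂ν, |G x t| ≤ 1 := hGnorm.mono fun x hx => abs_coord_le hx t
  have hloc : LocallyIntegrableOn ((coordProj t.1 ⁻¹' E).indicator fun x => G x t) Ω ν := by
    rw [locallyIntegrableOn_iff hΩ.isLocallyClosed]
    intro K hK hKc
    refine IntegrableOn.indicator ?_ (hp hE)
    exact Measure.integrableOn_of_bounded (M := 1) (hνloc K hK hKc).ne hGt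
      (ae_restrict_of_ae hG1)
  have := hΩ.ae_eq_zero_of_integral_contDiff_smul_eq_zero hloc fun f hf hc hs => ?_
  · filter_upwards [this] with x hx hxΩ hxE
    simpa [Set.indicator_of_mem (show x ∈ coordProj t.1 ⁻¹' E from hxE)] using hx hxΩ
  · choose C hC0 hC using fun i => slice_bound hm hνloc hGm hGnorm hbdry t i hf hc hs
    have hg : Integrable (fun x => G x t * f x) ν :=
      integrable_mul_test hνloc hGt hG1 hf.continuous hc hs
    have := ac_core hg hp (C := ∑ i, C i) (Finset.sum_nonneg fun i _ => hC0 i) ?_ hE hE0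
    · rw [← integral_indicator (hp hE)] at this
      rw [← this]
      congr 1
      ext x
      by_cases hx : x ∈ coordProj t.1 ⁻¹' E
      · simp [Set.indicator_of_mem hx, mul_comm]
      · simp [Set.indicator_of_notMem hx]
    · intro ψ hψ hψc hψ1 h
      obtain ⟨B, hB⟩ := (hψ.continuous_fderiv (by simp)).bounded_above_of_compact_support
        (hψc.fderiv (𝕜 := ℝ))
      have hI : ∀ i, Integrable
          (fun x => (G x t * f x) * fderiv ℝ ψ (coordProj t.1 x) (Pi.single i 1)) ν := by
        intro i
        refine hg.mul_bdd (c := B * ‖(Pi.single i 1 : {i // i ∈ t.1} → ℝ)‖) ?_ ?_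
        · have : Continuous fun y => fderiv ℝ ψ y (Pi.single i 1) :=
            (hψ.continuous_fderiv (by simp)).clm_apply continuous_const
          exact (this.comp (coordProj t.1).continuous).aestronglyMeasurable
        · exact Eventually.of_forall fun x =>
            ((fderiv ℝ ψ _).le_opNorm _).trans (by gcongr; exact hB _)
      have e : ∀ x, (G x t * f x) * fderiv ℝ ψ (coordProj t.1 x) h = ∑ i, h i *
          ((G x t * f x) * fderiv ℝ ψ (coordProj t.1 x) (Pi.single i 1)) := by
        intro x
        conv_lhs => rw [pi_eq_sum_univ' h]
        rw [map_sum, Finset.mul_sum]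
        refine Finset.sum_congr rfl fun i _ => ?_
        rw [map_smul, smul_eq_mul]
        ring
      simp_rw [e]
      rw [integral_finsetSum _ fun i _ => (hI i).const_mul _, Finset.sum_mul]
      refine (Finset.abs_sum_le_sum_abs _ _).trans (Finset.sum_le_sum fun i _ => ?_)
      rw [integral_const_mul, abs_mul, mul_comm]
      exact mul_le_mul (hC i ψ hψ hψc hψ1) (norm_le_pi_norm h i) (abs_nonneg _) (hC0 i)

end

/-! ### Hausdorff null sets -/

/-- **Dimension bound for normal currents.** Let `T = T⃗ ‖T‖` be an `m`-dimensional normal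
current on the open set `Ω ⊆ ℝ^d`: a `⋀_m ℝ^d`-valued Radon measure (written in coordinates,
`‖T‖ = ν` and `T⃗ = G` of unit norm `ν`-a.e.) whose boundary `∂T : ω ↦ ∫ ⟪T⃗, dω⟫ d‖T‖` is
representable by a `⋀_{m−1} ℝ^d`-valued Radon measure `S ρ` on `Ω`.  Then `‖T‖ ≪ ℋ^κ` for every
`0 ≤ κ < m`; in particular `dim_ℋ ‖T‖ ≥ m`. -/
theorem normal_current_dimension_bound
    {d m : ℕ} (hm : 1 ≤ m) (hmd : m ≤ d)
    (Ω : Set (EuclideanSpace ℝ (Fin d))) (hΩ : IsOpen Ω)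
    -- `ν = ‖T‖` is a Radon measure on `Ω`, `G = T⃗` the polar of `T`:
    (ν : Measure (EuclideanSpace ℝ (Fin d)))
    (hνloc : ∀ K : Set (EuclideanSpace ℝ (Fin d)), K ⊆ Ω → IsCompact K → ν K < ⊤)
    (hνsupp : ν Ωᶜ = 0)
    (G : EuclideanSpace ℝ (Fin d) → EuclideanSpace ℝ (MultiIndex d m))
    (hGm : AEStronglyMeasurable G ν) (hGnorm : ∀ᵐ x ∂ν, ‖G x‖ = 1)
    -- `∂T` is representable by the `⋀_{m−1} ℝ^d`-valued Radon measure `S ρ` on `Ω`: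
    (ρ : Measure (EuclideanSpace ℝ (Fin d)))
    (hρloc : ∀ K : Set (EuclideanSpace ℝ (Fin d)), K ⊆ Ω → IsCompact K → ρ K < ⊤)
    (S : EuclideanSpace ℝ (Fin d) → EuclideanSpace ℝ (MultiIndex d (m - 1)))
    (hSm : AEStronglyMeasurable S ρ)
    (hbdry : ∀ φ : EuclideanSpace ℝ (Fin d) → EuclideanSpace ℝ (MultiIndex d (m - 1)),
      ContDiff ℝ (⊤ : ℕ∞) φ → HasCompactSupport φ → tsupport φ ⊆ Ω →
      (∫ x, ∑ t : MultiIndex d m, G x t * extDerivCoord φ t hm x ∂ν)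
        = ∫ x, ⟪S x, φ x⟫ ∂ρ) :
    ∀ κ : ℝ, 0 ≤ κ → κ < (m : ℝ) → ν ≪ μH[κ] := by
  intro κ _ hκ
  refine Measure.AbsolutelyContinuous.mk fun A _ hA => ?_
  have hAm : μH[(m : ℝ)] A = 0 :=
    le_antisymm ((Measure.hausdorffMeasure_mono hκ.le A).trans hA.le) zero_le
  have hnull : ∀ t : MultiIndex d m, volume (coordProj t.1 '' A) = 0 := by
    intro t
    rw [← hausdorffMeasure_pi_real, Fintype.card_coe, t.2]
    refine le_antisymm (((coordProj t.1).lipschitz.hausdorffMeasure_image_le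
      (Nat.cast_nonneg m) A).trans ?_) zero_le
    rw [hAm, mul_zero]
  have hall : ∀ᵐ x ∂ν, ∀ t : MultiIndex d m, x ∈ Ω →
      coordProj t.1 x ∈ toMeasurable volume (coordProj t.1 '' A) → G x t = 0 :=
    ae_all_iff.2 fun t => coord_ae_zero hm hΩ hνloc hGm hGnorm hbdry t
      (measurableSet_toMeasurable _ _) ((measure_toMeasurable _).trans (hnull t))
  have hΩae : ∀ᵐ x ∂ν, x ∈ Ω := hνsupp
  have : ∀ᵐ x ∂ν, x ∉ A := by
    filter_upwards [hall, hGnorm, hΩae] with x h1 h2 h3 hxA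
    have : G x = 0 := by
      ext t
      exact h1 t h3 (subset_toMeasurable _ _ ⟨x, hxA, rfl⟩)
    rw [this, norm_zero] at h2
    exact zero_ne_one h2
  rw [ae_iff] at this
  simpa using this
end
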